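/- Let α, β > -1, s ∈ ℕ, 1 ≤ p ≤ ∞, and fix an admissible function η. Suppose either (1) θ ∈ (-1,1); or (2) θ = -1 and β < p-1 if 1 < p ≤ ∞, β ≤ 0 if p = 1; or (3) θ = 1 and α < p-1 if 1 < p ≤ ∞, α ≤ 0 if p = 1. Then there is a constant c > 0 independent of f and n such that for every f ∈ W_p^s(w_{α,β}) (f ∈ C^s[-1,1] when p = ∞) and every n ≥ 1, ‖f - 𝒱_{n,θ}^{α-s,β-s} f‖_{W_p^s(w_{α,β})} ≤ c · E_n(f^{(s)})_{L^p(w_{α,β})}. -/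

import Mathlib

open MeasureTheory Set ENNReal NNReal

noncomputable section

namespace JacobiApprox

/-- The Jacobi weight `w_{α,β}(x) = (1-x)^α (1+x)^β` on `(-1,1)`. -/
def w (α β x : ℝ) : ℝ := (1 - x) ^ α * (1 + x) ^ β

/-- The weighted `L^p` norm `‖f‖_{L^p(w_{α,β})}`; for `p = ∞` it is the uniform
norm on `[-1,1]`. -/
def LpW (α β : ℝ) (p : ℝ≥0∞) (f : ℝ → ℝ) : ℝ :=
  if p = ⊤ then sSup ((fun x => |f x|) '' Icc (-1 : ℝ) 1)
  else (∫ x in Ioo (-1 : ℝ) 1, |f x| ^ p.toReal * w α β x) ^ (1 / p.toReal)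

/-- Membership in `L^p(w_{α,β})` (`f ∈ C[-1,1]` when `p = ∞`). -/
def MemLpW (α β : ℝ) (p : ℝ≥0∞) (f : ℝ → ℝ) : Prop :=
  Measurable f ∧
    (p ≠ ⊤ → IntegrableOn (fun x => |f x| ^ p.toReal * w α β x) (Ioo (-1 : ℝ) 1)) ∧
    (p = ⊤ → ContinuousOn f (Icc (-1 : ℝ) 1))

/-- `E_n(f)_{L^p(w_{α,β})}`: the error of best approximation of `f` by polynomials
of degree at most `n` in `L^p(w_{α,β})`. -/
def E (α β : ℝ) (p : ℝ≥0∞) (n : ℕ) (f : ℝ → ℝ) : ℝ :=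
  sInf {r : ℝ | ∃ q : Polynomial ℝ, q.natDegree ≤ n ∧
    r = LpW α β p (fun x => f x - q.eval x)}

/-- Membership in the Sobolev space `W_p^s(w_{α,β})`: `f` has `s` continuous
derivatives and `f^{(s)} ∈ L^p(w_{α,β})` (for `p = ∞` this is `f ∈ C^s[-1,1]`). -/
def MemW (α β : ℝ) (p : ℝ≥0∞) (s : ℕ) (f : ℝ → ℝ) : Prop :=
  ContDiff ℝ (s : ℕ∞) f ∧
    (p ≠ ⊤ → IntegrableOn (fun x => |iteratedDeriv s f x| ^ p.toReal * w α β x)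
      (Ioo (-1 : ℝ) 1))

/-- The Sobolev norm `‖f‖_{W_p^s(w_{α,β})}` (max over derivatives when `p = ∞`). -/
def WNorm (α β : ℝ) (p : ℝ≥0∞) (s : ℕ) (f : ℝ → ℝ) : ℝ :=
  if p = ⊤ then
    (Finset.range (s + 1)).sup' (Finset.nonempty_range_iff.mpr (Nat.succ_ne_zero s))
      (fun k => LpW α β ⊤ (iteratedDeriv k f))
  else (∑ k ∈ Finset.range (s + 1), (LpW α β p (iteratedDeriv k f)) ^ p.toReal) ^
    (1 / p.toReal)

/-- Pochhammer symbol (rising factorial) `(a)_k`. -/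
def poch (a : ℝ) (k : ℕ) : ℝ := ∏ i ∈ Finset.range k, (a + i)

/-- The Jacobi polynomial `P_n^{(α,β)}`. -/
def JP (α β : ℝ) (n : ℕ) (t : ℝ) : ℝ :=
  (poch (α + 1) n / n.factorial) *
    ∑ k ∈ Finset.range (n + 1),
      poch (-(n : ℝ)) k * poch ((n : ℝ) + α + β + 1) k /
        (poch (α + 1) k * k.factorial) * ((1 - t) / 2) ^ k

/-- The renormalized Jacobi polynomial `J_n^{α,β} = 2^n/(n+α+β+1)_n · P_n^{(α,β)}`. -/
def J (α β : ℝ) (n : ℕ) (t : ℝ) : ℝ :=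
  2 ^ n / poch ((n : ℝ) + α + β + 1) n * JP α β n t

/-- The inner product `⟨f,g⟩_{α,β} = ∫_{-1}^1 f g w_{α,β}`. -/
def ip (α β : ℝ) (f g : ℝ → ℝ) : ℝ := ∫ x in Ioo (-1 : ℝ) 1, f x * g x * w α β x

/-- `h_n^{α,β} = ⟨J_n^{α,β}, J_n^{α,β}⟩_{α,β}`. -/
def hJ (α β : ℝ) (n : ℕ) : ℝ := ip α β (J α β n) (J α β n)

/-- The Fourier–Jacobi coefficient `\hat f_n^{α,β}`. -/
def coeff (α β : ℝ) (n : ℕ) (f : ℝ → ℝ) : ℝ := ip α β f (J α β n) / hJ α β n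

/-- The `n`-th partial sum `S_n^{α,β} f` of the Fourier–Jacobi series. -/
def S (α β : ℝ) (n : ℕ) (f : ℝ → ℝ) (x : ℝ) : ℝ :=
  ∑ k ∈ Finset.range (n + 1), coeff α β k f * J α β k x

/-- An admissible cut-off function: `C^∞`, `η ≡ 1` on `[0,1]`, `η ≡ 0` on `[2,∞)`. -/
def Admissible (η : ℝ → ℝ) : Prop :=
  ContDiff ℝ (⊤ : ℕ∞) η ∧ (∀ t : ℝ, 0 ≤ t → t ≤ 1 → η t = 1) ∧ ∀ t : ℝ, 2 ≤ t → η t = 0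

/-- The de la Vallée Poussin type operator `V_n^{α,β} f`. -/
def V (η : ℝ → ℝ) (α β : ℝ) (n : ℕ) (f : ℝ → ℝ) (x : ℝ) : ℝ :=
  ∑ k ∈ Finset.range (2 * n + 1), η ((k : ℝ) / (n : ℝ)) * coeff α β k f * J α β k x

/-- The Sobolev orthogonal polynomial `𝒥_{n,θ}^{α-s,β-s}`. -/
def SJ (α β : ℝ) (s : ℕ) (θ : ℝ) (n : ℕ) (x : ℝ) : ℝ :=
  if n < s then (x - θ) ^ n / n.factorial
  else ∫ t in θ..x, (x - t) ^ (s - 1) / (s - 1).factorial * J α β (n - s) t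

/-- The Sobolev inner product `⟨f,g⟩_{α,β}^{-s}`. -/
def ipS (α β : ℝ) (s : ℕ) (θ : ℝ) (lam : ℕ → ℝ) (f g : ℝ → ℝ) : ℝ :=
  ip α β (iteratedDeriv s f) (iteratedDeriv s g) +
    ∑ k ∈ Finset.range s, lam k * iteratedDeriv k f θ * iteratedDeriv k g θ

/-- The Fourier coefficient `\hat{𝔣}_n^{α-s,β-s}` in the Sobolev orthogonal system. -/
def coeffS (α β : ℝ) (s : ℕ) (θ : ℝ) (lam : ℕ → ℝ) (n : ℕ) (f : ℝ → ℝ) : ℝ :=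
  ipS α β s θ lam f (SJ α β s θ n) / ipS α β s θ lam (SJ α β s θ n) (SJ α β s θ n)

/-- The `n`-th partial sum `𝒮_{n,θ}^{α-s,β-s} f` of the Sobolev orthogonal expansion. -/
def SS (α β : ℝ) (s : ℕ) (θ : ℝ) (lam : ℕ → ℝ) (n : ℕ) (f : ℝ → ℝ) (x : ℝ) : ℝ :=
  ∑ k ∈ Finset.range (n + 1), coeffS α β s θ lam k f * SJ α β s θ k x

/-- The operator `𝒱_{n,θ}^{α-s,β-s} f`. -/
def VS (η : ℝ → ℝ) (α β : ℝ) (s : ℕ) (θ : ℝ) (n : ℕ) (f : ℝ → ℝ) (x : ℝ) : ℝ :=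
  (∑ k ∈ Finset.range s, iteratedDeriv k f θ * (x - θ) ^ k / k.factorial) +
    ∫ t in θ..x, (x - t) ^ (s - 1) / (s - 1).factorial *
      V η α β n (iteratedDeriv s f) t

/-- `A_j^{α,β} = (α+β+2)_{2j}/(α+1)_j`. -/
def Acoef (α β : ℝ) (j : ℕ) : ℝ := poch (α + β + 2) (2 * j) / poch (α + 1) j

/-- `B_n^{α,β} = (α+1)_{n+1}/(α+β+2)_{2n+1}`. -/
def Bcoef (α β : ℝ) (n : ℕ) : ℝ := poch (α + 1) (n + 1) / poch (α + β + 2) (2 * n + 1)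

/-- `D_j^{α,β} = (j+β+1)/((2j+α+β+2)(2j+α+β+3))`. -/
def Dcoef (α β : ℝ) (j : ℕ) : ℝ :=
  ((j : ℝ) + β + 1) / ((2 * (j : ℝ) + α + β + 2) * (2 * (j : ℝ) + α + β + 3))

/-- The function `u_{g,k}` of the Aubin–Nitsche duality argument. -/
def u (α β : ℝ) (s k : ℕ) (g : ℝ → ℝ) (x : ℝ) : ℝ :=
  ∫ t in (-1 : ℝ)..x, (x - t) ^ (s - 1) / (s - 1).factorial * (1 / w α β t) *
    ∫ y in t..(1 : ℝ), (y - t) ^ (s - k - 1) / (s - k - 1).factorial * g y * w α β y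

/-- The `s`-th derivative of `u_{g,k}`, given by its explicit formula. -/
def uDs (α β : ℝ) (s k : ℕ) (g : ℝ → ℝ) (x : ℝ) : ℝ :=
  (1 / w α β x) *
    ∫ y in x..(1 : ℝ), (y - x) ^ (s - k - 1) / (s - k - 1).factorial * g y * w α β y



/-- The Jacobi measure. -/
def mu (α β : ℝ) : Measure ℝ :=
  (volume.restrict (Ioo (-1 : ℝ) 1)).withDensity (fun x => ENNReal.ofReal (w α β x))

theorem w_meas (α β : ℝ) : Measurable (w α β) := by
  unfold w; fun_prop

theorem w_pos (α β : ℝ) {x : ℝ} (hx : x ∈ Ioo (-1 : ℝ) 1) : 0 < w α β x := by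
  unfold w
  have h1 : 0 < 1 - x := by linarith [hx.2]
  have h2 : 0 < 1 + x := by linarith [hx.1]
  positivity

theorem rpow_le_aux (a : ℝ) {y : ℝ} (h1 : 1 ≤ y) (h2 : y ≤ 2) : y ^ a ≤ 2 ^ |a| :=
  (Real.rpow_le_rpow_of_exponent_le h1 (le_abs_self a)).trans
    (Real.rpow_le_rpow (by linarith) h2 (abs_nonneg a))

theorem w_int (α β : ℝ) (hα : -1 < α) (hβ : -1 < β) :
    IntegrableOn (w α β) (Ioo (-1 : ℝ) 1) := by
  have h1 : IntegrableOn (fun x : ℝ => (1 - x) ^ α) (Ioo (-1 : ℝ) 1) := by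
    have h := (intervalIntegral.intervalIntegrable_rpow' (a := 0) (b := 2) hα).comp_sub_left 1
    norm_num at h
    exact ((intervalIntegrable_iff_integrableOn_Ioo_of_le (by norm_num)).1 h.symm)
  have h2 : IntegrableOn (fun x : ℝ => (1 + x) ^ β) (Ioo (-1 : ℝ) 1) := by
    have h := (intervalIntegral.intervalIntegrable_rpow' (a := 0) (b := 2) hβ).comp_add_left 1
    norm_num at h
    exact ((intervalIntegrable_iff_integrableOn_Ioo_of_le (by norm_num)).1 h)
  refine Integrable.mono' ((h1.const_mul (2 ^ |β|)).add (h2.const_mul (2 ^ |α|)))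
    (w_meas α β).aestronglyMeasurable ?_
  filter_upwards [ae_restrict_mem measurableSet_Ioo] with x hx
  have hx' := hx
  rw [Real.norm_of_nonneg (w_pos α β hx).le]
  have p1 : 0 < 1 - x := by linarith [hx.2]
  have p2 : 0 < 1 + x := by linarith [hx.1]
  have q1 : 0 < (1 - x) ^ α := by positivity
  have q2 : 0 < (1 + x) ^ β := by positivity
  have r1 : (0:ℝ) < 2 ^ |α| := by positivity
  have r2 : (0:ℝ) < 2 ^ |β| := by positivity
  simp only [Pi.add_apply]
  unfold w
  rcases le_total x 0 with h0 | h0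
  · have := rpow_le_aux α (y := 1 - x) (by linarith) (by linarith [hx.1])
    nlinarith
  · have := rpow_le_aux β (y := 1 + x) (by linarith) (by linarith [hx.2])
    nlinarith

theorem integral_mu (α β : ℝ) (F : ℝ → ℝ) :
    ∫ x, F x ∂(mu α β) = ∫ x in Ioo (-1 : ℝ) 1, F x * w α β x := by
  unfold mu
  rw [integral_withDensity_eq_integral_toReal_smul (w_meas α β).ennreal_ofReal (by simp)]
  refine setIntegral_congr_fun measurableSet_Ioo fun x hx => ?_
  simp only [smul_eq_mul]
  rw [ENNReal.toReal_ofReal (w_pos α β hx).le, mul_comm]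

theorem integrable_mu_iff (α β : ℝ) (F : ℝ → ℝ) :
    Integrable F (mu α β) ↔ IntegrableOn (fun x => F x * w α β x) (Ioo (-1 : ℝ) 1) := by
  unfold mu
  rw [integrable_withDensity_iff_integrable_smul' (w_meas α β).ennreal_ofReal (by simp)]
  refine integrableOn_congr_fun (fun x hx => ?_) measurableSet_Ioo
  simp only [smul_eq_mul]
  rw [ENNReal.toReal_ofReal (w_pos α β hx).le, mul_comm]

theorem mu_finite {α β : ℝ} (hα : -1 < α) (hβ : -1 < β) : IsFiniteMeasure (mu α β) :=
  isFiniteMeasure_withDensity_ofReal (w_int α β hα hβ).2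

theorem mu_ac (α β : ℝ) : mu α β ≪ volume.restrict (Ioo (-1 : ℝ) 1) :=
  withDensity_absolutelyContinuous _ _

theorem mu_ae (α β : ℝ) : ∀ᵐ x ∂(mu α β), x ∈ Ioo (-1 : ℝ) 1 :=
  (mu_ac α β).ae_le (ae_restrict_mem measurableSet_Ioo)

theorem integrable_bdd {α β : ℝ} (hα : -1 < α) (hβ : -1 < β) {F : ℝ → ℝ} (C : ℝ)
    (hF : AEStronglyMeasurable F (mu α β)) (hC : ∀ x ∈ Ioo (-1 : ℝ) 1, |F x| ≤ C) :
    Integrable F (mu α β) := by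
  have := mu_finite hα hβ
  exact Integrable.of_bound hF C ((mu_ae α β).mono fun x hx => hC x hx)

theorem integrable_cont {α β : ℝ} (hα : -1 < α) (hβ : -1 < β) {F : ℝ → ℝ}
    (hF : ContinuousOn F (Icc (-1 : ℝ) 1)) : Integrable F (mu α β) := by
  obtain ⟨C, hC⟩ := isCompact_Icc.exists_bound_of_continuousOn hF
  refine integrable_bdd hα hβ C ?_ fun x hx => hC x (Ioo_subset_Icc_self hx)
  exact ((hF.mono Ioo_subset_Icc_self).aestronglyMeasurable measurableSet_Ioo).mono_ac (mu_ac α β)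

theorem ip_eq (α β : ℝ) (f g : ℝ → ℝ) : ip α β f g = ∫ x, f x * g x ∂(mu α β) := by
  rw [integral_mu]; rfl

/-- positivity on polynomials -/
theorem integral_sq_pos {α β : ℝ} (hα : -1 < α) (hβ : -1 < β) (q : Polynomial ℝ) (hq : q ≠ 0) :
    0 < ∫ x, q.eval x ^ 2 ∂(mu α β) := by
  have hnn : 0 ≤ ∫ x, q.eval x ^ 2 ∂(mu α β) := integral_nonneg fun x => sq_nonneg _
  refine lt_of_le_of_ne hnn fun h => ?_
  rw [integral_mu] at h
  have hi : IntegrableOn (fun x => q.eval x ^ 2 * w α β x) (Ioo (-1 : ℝ) 1) := by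
    rw [← integrable_mu_iff α β (fun x => q.eval x ^ 2)]
    exact integrable_cont hα hβ (by fun_prop)
  have h2 := (setIntegral_eq_zero_iff_of_nonneg_ae (by
      filter_upwards [ae_restrict_mem measurableSet_Ioo] with x hx
      exact mul_nonneg (sq_nonneg _) (w_pos α β hx).le) hi).1 h.symm
  have h3 : ∀ᵐ x ∂(volume : Measure ℝ), x ∉ q.roots.toFinset :=  by
    rw [ae_iff]
    have := (q.roots.toFinset.finite_toSet.measure_zero volume)
    convert this using 2
    ext x; simp
  have h4 : ∀ᵐ x ∂(volume.restrict (Ioo (-1 : ℝ) 1)), False := by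
    filter_upwards [h2, ae_restrict_mem measurableSet_Ioo, ae_restrict_of_ae h3] with x h2 hx h3
    have hw := w_pos α β hx
    have : q.eval x = 0 := by
      simpa [hw.ne'] using h2
    exact h3 (by simp [hq, this])
  rw [ae_iff] at h4
  simp at h4
  linarith

open Polynomial in
/-- The Jacobi differential operator. -/
def Lop (α β : ℝ) (p : Polynomial ℝ) : Polynomial ℝ :=
  -((1 - X ^ 2) * derivative (derivative p) + (C (β - α) - C (α + β + 2) * X) * derivative p)

theorem ibp {α β : ℝ} (hα : -1 < α) (hβ : -1 < β) (φ φ' : ℝ → ℝ) (p : Polynomial ℝ)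
    (hφ : ContinuousOn φ (Icc (-1 : ℝ) 1)) (hd : ∀ y ∈ Ioo (-1 : ℝ) 1, HasDerivAt φ (φ' y) y)
    (hi : Integrable (fun y => φ' y * (p.derivative.eval y * (1 - y ^ 2))) (mu α β)) :
    ∫ y, φ y * (Lop α β p).eval y ∂(mu α β)
      = ∫ y, φ' y * (p.derivative.eval y * (1 - y ^ 2)) ∂(mu α β) := by
  have hi2 : Integrable (fun y => φ y * (Lop α β p).eval y) (mu α β) :=
    integrable_cont hα hβ (hφ.mul (by fun_prop))
  rw [← sub_eq_zero, ← integral_sub hi2 hi, integral_mu]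
  have hi3 := (integrable_mu_iff _ _ _).1 (hi2.sub hi)
  set F : ℝ → ℝ := fun y => -(φ y * p.derivative.eval y * ((1 - y) ^ (α + 1) * (1 + y) ^ (β + 1)))
    with hF
  have hcont : ContinuousOn F (Icc (-1) 1) := by
    refine ContinuousOn.neg ((hφ.mul (by fun_prop)).mul (ContinuousOn.mul ?_ ?_))
    · exact ContinuousOn.rpow_const (by fun_prop) (fun x hx => Or.inr (by linarith))
    · exact ContinuousOn.rpow_const (by fun_prop) (fun x hx => Or.inr (by linarith))
  have hder : ∀ y ∈ Ioo (-1 : ℝ) 1, HasDerivAt F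
      ((φ y * (Lop α β p).eval y - φ' y * (p.derivative.eval y * (1 - y ^ 2))) * w α β y) y := by
    intro y hy
    have p1 : 0 < 1 - y := by linarith [hy.2]
    have p2 : 0 < 1 + y := by linarith [hy.1]
    have e1 : HasDerivAt (fun y : ℝ => (1 - y) ^ (α + 1)) (-1 * (α + 1) * (1 - y) ^ (α + 1 - 1)) y :=
      ((hasDerivAt_id y).const_sub 1).rpow_const (Or.inl p1.ne')
    have e2 : HasDerivAt (fun y : ℝ => (1 + y) ^ (β + 1)) (1 * (β + 1) * (1 + y) ^ (β + 1 - 1)) y :=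
      ((hasDerivAt_id y).const_add 1).rpow_const (Or.inl p2.ne')
    have e3 := (((hd y hy).mul (p.derivative.hasDerivAt y)).mul (e1.mul e2)).neg
    refine e3.congr_deriv ?_
    simp only [add_sub_cancel_right, Lop, w, Pi.mul_apply]
    rw [Real.rpow_add p1, Real.rpow_add p2, Real.rpow_one, Real.rpow_one]
    simp
    ring
  have hFTC := intervalIntegral.integral_eq_sub_of_hasDerivAt_of_le (by norm_num : (-1 : ℝ) ≤ 1)
    hcont hder ((intervalIntegrable_iff_integrableOn_Ioo_of_le (by norm_num)).2 hi3)
  rw [intervalIntegral.integral_of_le (by norm_num), integral_Ioc_eq_integral_Ioo] at hFTC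
  rw [hFTC, hF]
  have z1 : (0 : ℝ) ^ (α + 1) = 0 := Real.zero_rpow (by linarith)
  have z2 : (0 : ℝ) ^ (β + 1) = 0 := Real.zero_rpow (by linarith)
  norm_num [z1, z2]

theorem ibp_poly {α β : ℝ} (hα : -1 < α) (hβ : -1 < β) (q p : Polynomial ℝ) :
    ∫ y, q.eval y * (Lop α β p).eval y ∂(mu α β)
      = ∫ y, q.derivative.eval y * (p.derivative.eval y * (1 - y ^ 2)) ∂(mu α β) :=
  ibp hα hβ _ _ p (by fun_prop) (fun y _ => q.hasDerivAt y)
    (integrable_cont hα hβ (by fun_prop))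

theorem Lop_symm {α β : ℝ} (hα : -1 < α) (hβ : -1 < β) (q p : Polynomial ℝ) :
    ∫ y, q.eval y * (Lop α β p).eval y ∂(mu α β) =
    ∫ y, p.eval y * (Lop α β q).eval y ∂(mu α β) := by
  rw [ibp_poly hα hβ, ibp_poly hα hβ]
  congr 1; ext y; ring

theorem poch_succ (a : ℝ) (k : ℕ) : poch a (k + 1) = poch a k * (a + k) := by
  simp [poch, Finset.prod_range_succ]

theorem poch_pos {a : ℝ} (ha : 0 < a) (k : ℕ) : 0 < poch a k :=
  Finset.prod_pos fun i _ => by positivity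

theorem poch_pos' {α β : ℝ} (hα : -1 < α) (hβ : -1 < β) (n : ℕ) :
    0 < poch ((n : ℝ) + α + β + 1) n := by
  rcases Nat.eq_zero_or_pos n with rfl | hn
  · simp [poch]
  · have : (1 : ℝ) ≤ n := by exact_mod_cast hn
    exact poch_pos (by linarith) n

theorem poch_neg_zero (n k : ℕ) (h : n < k) : poch (-(n : ℝ)) k = 0 :=
  Finset.prod_eq_zero (Finset.mem_range.2 h) (by simp)

theorem poch_neg_ne (n k : ℕ) (h : k ≤ n) : poch (-(n : ℝ)) k ≠ 0 := by
  refine Finset.prod_ne_zero_iff.2 fun i hi => ?_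
  have h2 : i < n := lt_of_lt_of_le (Finset.mem_range.1 hi) h
  have : (i : ℝ) < n := by exact_mod_cast h2
  linarith

/-- hypergeometric coefficients -/
def hc (α β : ℝ) (n k : ℕ) : ℝ :=
  poch (-(n : ℝ)) k * poch ((n : ℝ) + α + β + 1) k / (poch (α + 1) k * k.factorial)

theorem hc_succ {α : ℝ} (β : ℝ) (hα : -1 < α) (n k : ℕ) :
    hc α β n (k + 1) * ((k + 1) * (k + α + 1)) =
      hc α β n k * ((k - n) * (k + n + α + β + 1)) := by
  unfold hc
  have h1 := (poch_pos (by linarith : 0 < α + 1) k).ne'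
  have h2 : (α + 1 + k) ≠ 0 := by positivity [show 0 < α + 1 by linarith]
  have h3 : (k.factorial : ℝ) ≠ 0 := by positivity
  rw [poch_succ, poch_succ, poch_succ, Nat.factorial_succ]
  push_cast
  field_simp
  ring

open Polynomial in
def Qp (α β : ℝ) (n : ℕ) : Polynomial ℝ := ∑ k ∈ Finset.range (n + 1), C (hc α β n k) * X ^ k

open Polynomial in
theorem Qp_coeff (α β : ℝ) (n k : ℕ) : (Qp α β n).coeff k = hc α β n k := by
  unfold Qp
  simp only [finset_sum_coeff, coeff_C_mul, coeff_X_pow]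
  simp
  intro h
  simp [hc, poch_neg_zero n k h]

open Polynomial in
theorem Qp_ode {α : ℝ} (β : ℝ) (hα : -1 < α) (n : ℕ) :
    (X - X ^ 2) * derivative (derivative (Qp α β n)) +
      (C (α + 1) - C (α + β + 2) * X) * derivative (Qp α β n)
      + C ((n : ℝ) * (n + α + β + 1)) * Qp α β n = 0 := by
  ext k
  have key := hc_succ β hα n k
  simp only [sub_mul, coeff_add, coeff_sub, mul_assoc, coeff_C_mul, coeff_zero]
  rcases k with _ | _ | k
  · simp [Polynomial.coeff_X_pow_mul', coeff_derivative, Qp_coeff] at key ⊢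
    linear_combination key
  · simp [Polynomial.coeff_X_pow_mul', coeff_derivative, Qp_coeff] at key ⊢
    linear_combination key
  · simp [Polynomial.coeff_X_pow_mul', coeff_derivative, Qp_coeff, Polynomial.coeff_X_mul] at key ⊢
    linear_combination key

/-- normalising constant -/
def nc (α β : ℝ) (n : ℕ) : ℝ :=
  2 ^ n / poch ((n : ℝ) + α + β + 1) n * (poch (α + 1) n / n.factorial)

open Polynomial in
/-- The Jacobi polynomial as a polynomial. -/
def Jp (α β : ℝ) (n : ℕ) : Polynomial ℝ :=
  C (nc α β n) * (Qp α β n).comp (C (1 / 2) * (1 - X))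

theorem Jp_eval (α β : ℝ) (n : ℕ) (t : ℝ) : (Jp α β n).eval t = J α β n t := by
  simp only [Jp, J, JP, Qp, nc, Polynomial.eval_mul, Polynomial.eval_C, Polynomial.eval_comp,
    Polynomial.eval_finset_sum, Polynomial.eval_pow, Polynomial.eval_X, Polynomial.eval_sub,
    Polynomial.eval_one, hc]
  rw [mul_assoc]
  congr 2
  refine Finset.sum_congr rfl fun k _ => ?_
  congr 2
  ring

def lam (α β : ℝ) (n : ℕ) : ℝ := (n : ℝ) * (n + α + β + 1)

open Polynomial in
theorem Lop_Jp {α β : ℝ} (hα : -1 < α) (n : ℕ) :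
    Lop α β (Jp α β n) = C (lam α β n) * Jp α β n := by
  have h := congrArg (fun q => C (nc α β n) * q.comp (C (1 / 2) * (1 - X))) (Qp_ode β hα n)
  refine Polynomial.funext fun t => ?_
  have h' := congrArg (fun q => eval t q) h
  simp [Lop, Jp, derivative_comp, lam] at h' ⊢
  rcases h' with h' | h'
  · simp [h']
  · linear_combination (- nc α β n) * h'

open Polynomial in
theorem Qp_natDegree {α β : ℝ} (hα : -1 < α) (hβ : -1 < β) (n : ℕ) : (Qp α β n).natDegree = n := by
  refine le_antisymm ?_ ?_
  · exact natDegree_sum_le_of_forall_le _ _ fun k hk =>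
      (natDegree_C_mul_X_pow_le _ _).trans (Nat.lt_succ_iff.1 (Finset.mem_range.1 hk))
  · refine le_natDegree_of_ne_zero ?_
    rw [Qp_coeff, hc]
    have h1 := (poch_pos (by linarith : 0 < α + 1) n).ne'
    have h3 : (n.factorial : ℝ) ≠ 0 := by positivity
    exact div_ne_zero (mul_ne_zero (poch_neg_ne n n le_rfl) (poch_pos' hα hβ n).ne')
      (mul_ne_zero h1 h3)

open Polynomial in
theorem Jp_natDegree {α β : ℝ} (hα : -1 < α) (hβ : -1 < β) (n : ℕ) :
    (Jp α β n).natDegree = n := by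
  have h1 := (poch_pos (by linarith : 0 < α + 1) n).ne'
  have h3 : (n.factorial : ℝ) ≠ 0 := by positivity
  have h0 : nc α β n ≠ 0 := mul_ne_zero (div_ne_zero (by positivity) (poch_pos' hα hβ n).ne')
    (div_ne_zero h1 h3)
  rw [Jp, natDegree_C_mul h0, natDegree_comp, Qp_natDegree hα hβ, natDegree_C_mul (by norm_num)]
  have : (1 - X : ℝ[X]).natDegree = 1 := by
    rw [← natDegree_neg, neg_sub]
    exact natDegree_X_sub_C 1
  rw [this, mul_one]

theorem Jp_ne_zero {α β : ℝ} (hα : -1 < α) (hβ : -1 < β) (n : ℕ) : Jp α β n ≠ 0 := by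
  rcases Nat.eq_zero_or_pos n with rfl | hn
  · intro h
    have := congrArg (fun q => Polynomial.eval 1 q) h
    simp [Jp, Qp, nc, hc, poch] at this
  · intro h
    have := Jp_natDegree hα hβ n
    rw [h] at this
    simp at this
    omega

theorem J_cont (α β : ℝ) (n : ℕ) : Continuous (J α β n) := by
  have : J α β n = fun t => (Jp α β n).eval t := by ext t; rw [Jp_eval]
  rw [this]; fun_prop

theorem hJ_pos {α β : ℝ} (hα : -1 < α) (hβ : -1 < β) (n : ℕ) : 0 < hJ α β n := by
  rw [hJ, ip_eq]
  have := integral_sq_pos hα hβ _ (Jp_ne_zero hα hβ n)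
  simpa [Jp_eval, sq] using this

theorem J_orth {α β : ℝ} (hα : -1 < α) (hβ : -1 < β) {m n : ℕ} (h : m ≠ n) :
    ip α β (J α β m) (J α β n) = 0 := by
  rw [ip_eq]
  have h1 := Lop_symm hα hβ (Jp α β m) (Jp α β n)
  rw [Lop_Jp hα, Lop_Jp hα] at h1
  simp only [Polynomial.eval_mul, Polynomial.eval_C, Jp_eval] at h1
  have e1 : ∫ y, J α β m y * (lam α β n * J α β n y) ∂(mu α β) =
      lam α β n * ∫ y, J α β m y * J α β n y ∂(mu α β) := by
    rw [← integral_const_mul]; congr 1; ext y; ring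
  have e2 : ∫ y, J α β n y * (lam α β m * J α β m y) ∂(mu α β) =
      lam α β m * ∫ y, J α β m y * J α β n y ∂(mu α β) := by
    rw [← integral_const_mul]; congr 1; ext y; ring
  rw [e1, e2, ← sub_eq_zero, ← sub_mul] at h1
  refine (mul_eq_zero.1 h1).resolve_left ?_
  have : lam α β n - lam α β m = ((n : ℝ) - m) * (n + m + α + β + 1) := by unfold lam; ring
  rw [this]
  have h3 : (1 : ℝ) ≤ n + m := by
    have : 1 ≤ n + m := by omega
    exact_mod_cast this
  refine mul_ne_zero (sub_ne_zero.2 (by exact_mod_cast h.symm)) (by linarith)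

open Polynomial in
theorem exists_expansion {α β : ℝ} (hα : -1 < α) (hβ : -1 < β) (N : ℕ) :
    ∀ f : ℝ[X], f.natDegree < N → ∃ c : ℕ → ℝ,
      f = ∑ k ∈ Finset.range N, C (c k) * Jp α β k := by
  induction N with
  | zero => intro f hf; omega
  | succ N ih =>
    intro f hf
    set b : ℝ := f.coeff N / (Jp α β N).coeff N with hb
    have hne : (Jp α β N).coeff N ≠ 0 := by
      have h := leadingCoeff_ne_zero.2 (Jp_ne_zero hα hβ N)
      rwa [leadingCoeff, Jp_natDegree hα hβ] at h
    set g : ℝ[X] := f - C b * Jp α β N with hg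
    have hgc : g.coeff N = 0 := by
      simp [hg, hb, hne]
    have hgd : g.natDegree ≤ N := by
      refine (natDegree_sub_le _ _).trans (max_le (by omega) ?_)
      exact (natDegree_C_mul_le _ _).trans (Jp_natDegree hα hβ N).le
    have hex : ∃ c : ℕ → ℝ, g = ∑ k ∈ Finset.range N, C (c k) * Jp α β k := by
      rcases Nat.eq_zero_or_pos N with h0 | h0
      · subst h0
        refine ⟨0, ?_⟩
        rw [eq_C_of_natDegree_le_zero hgd, hgc]; simp
      · refine ih g (lt_of_le_of_ne hgd fun h => ?_)
        have : g.leadingCoeff = 0 := by rw [leadingCoeff, h, hgc]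
        rw [leadingCoeff_eq_zero] at this
        rw [this] at h; simp at h; omega
    obtain ⟨c, hc⟩ := hex
    refine ⟨fun k => if k = N then b else c k, ?_⟩
    rw [Finset.sum_range_succ]
    have : ∑ k ∈ Finset.range N, C (if k = N then b else c k) * Jp α β k = g := by
      rw [hc]
      refine Finset.sum_congr rfl fun k hk => ?_
      rw [if_neg (Finset.mem_range.1 hk).ne]
    rw [this]; simp [hg]

theorem coeff_sum {α β : ℝ} (hα : -1 < α) (hβ : -1 < β) (N : ℕ) (c : ℕ → ℝ) (m : ℕ) :
    coeff α β m (fun x => ∑ k ∈ Finset.range N, c k * J α β k x) = if m < N then c m else 0 := by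
  unfold coeff
  have h : ip α β (fun x => ∑ k ∈ Finset.range N, c k * J α β k x) (J α β m) =
      ∑ k ∈ Finset.range N, c k * ip α β (J α β k) (J α β m) := by
    rw [ip_eq]
    simp only [Finset.sum_mul]
    rw [integral_finset_sum]
    · refine Finset.sum_congr rfl fun k _ => ?_
      rw [ip_eq, ← integral_const_mul]; congr 1; ext y; ring
    · intro k _
      have h1 := J_cont α β k
      have h2 := J_cont α β m
      exact integrable_cont hα hβ (by fun_prop)
  rw [h]
  have hp := (hJ_pos hα hβ m).ne'
  split_ifs with hm
  · rw [Finset.sum_eq_single m]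
    · rw [← hJ]; field_simp
    · intro k _ hk; rw [J_orth hα hβ hk, mul_zero]
    · intro h; exact absurd (Finset.mem_range.2 hm) h
  · rw [Finset.sum_eq_zero, zero_div]
    intro k hk
    rw [J_orth hα hβ, mul_zero]
    have := Finset.mem_range.1 hk
    omega

/-- every polynomial is a finite Jacobi sum -/
theorem expansion {α β : ℝ} (hα : -1 < α) (hβ : -1 < β) (N : ℕ) (f : Polynomial ℝ)
    (hf : f.natDegree < N) (x : ℝ) :
    f.eval x = ∑ k ∈ Finset.range N, coeff α β k (fun x => f.eval x) * J α β k x := by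
  obtain ⟨c, hc⟩ := exists_expansion hα hβ N f hf
  have he : (fun x => f.eval x) = fun x => ∑ k ∈ Finset.range N, c k * J α β k x := by
    ext x
    conv_lhs => rw [hc]
    simp [Polynomial.eval_finset_sum, Jp_eval]
  have : f.eval x = ∑ k ∈ Finset.range N, c k * J α β k x := congrFun he x
  rw [this]
  refine Finset.sum_congr rfl fun k hk => ?_
  rw [he, coeff_sum hα hβ, if_pos (Finset.mem_range.1 hk)]

theorem coeff_zero_of_lt {α β : ℝ} (hα : -1 < α) (hβ : -1 < β) (f : Polynomial ℝ) (k : ℕ)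
    (hf : f.natDegree < k) : coeff α β k (fun x => f.eval x) = 0 := by
  have he : (fun x => f.eval x) = fun x => ∑ j ∈ Finset.range (f.natDegree + 1),
      coeff α β j (fun x => f.eval x) * J α β j x := by
    ext x; exact expansion hα hβ _ f (Nat.lt_succ_self _) x
  rw [he, coeff_sum hα hβ, if_neg (by omega)]


theorem deriv_int {α β : ℝ} (hα : -1 < α) (hβ : -1 < β) (e e' : ℝ → ℝ → ℝ) (a : ℝ)
    (h : ∀ τ > a, ∀ y, HasDerivAt (fun τ => e τ y) (e' τ y) τ)
    (hc : ContinuousOn (fun z : ℝ × ℝ => e' z.1 z.2) (Ioi a ×ˢ univ))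
    (hce : ∀ τ > a, Continuous (e τ)) (τ : ℝ) (hτ : a < τ) :
    HasDerivAt (fun τ => ∫ y, e τ y ∂(mu α β)) (∫ y, e' τ y ∂(mu α β)) τ := by
  have := mu_finite hα hβ
  set r := (τ - a) / 2 with hr
  have hr0 : 0 < r := by rw [hr]; linarith
  have hK : IsCompact (Icc (τ - r) (τ + r) ×ˢ Icc (-1 : ℝ) 1) := isCompact_Icc.prod isCompact_Icc
  obtain ⟨C, hC⟩ := hK.exists_bound_of_continuousOn (hc.mono (by
    rintro ⟨s, y⟩ ⟨hs, _⟩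
    exact ⟨lt_of_lt_of_le (by rw [hr]; linarith) hs.1, mem_univ _⟩))
  have hce' : ∀ τ > a, Continuous (e' τ) := by
    intro s hs
    rw [← continuousOn_univ]
    exact hc.comp (f := fun y => (s, y)) (by fun_prop) (fun y _ => ⟨hs, mem_univ _⟩)
  refine (hasDerivAt_integral_of_dominated_loc_of_deriv_le (bound := fun _ => C)
    (s := Icc (τ - r) (τ + r)) (Icc_mem_nhds (by linarith) (by linarith)) ?_ ?_ ?_ ?_ ?_ ?_).2
  · filter_upwards [Ioi_mem_nhds hτ] with s hs
    exact (hce s hs).aestronglyMeasurable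
  · exact integrable_cont hα hβ (hce τ hτ).continuousOn
  · exact (hce' τ hτ).aestronglyMeasurable
  · filter_upwards [mu_ae α β] with y hy s hs
    exact hC (s, y) ⟨hs, Ioo_subset_Icc_self hy⟩
  · exact integrable_const _
  · filter_upwards with y s hs
    exact h s (lt_of_lt_of_le (by rw [hr]; linarith) hs.1) y

/-- `sin(τ m)/m` -/
def Sf (m τ : ℝ) : ℝ := if m = 0 then τ else Real.sin (τ * m) / m

theorem Sf_zero (m : ℝ) : Sf m 0 = 0 := by unfold Sf; split_ifs <;> simp

theorem Sf_deriv (m τ : ℝ) : HasDerivAt (Sf m) (Real.cos (τ * m)) τ := by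
  by_cases h : m = 0
  · have : Sf m = fun τ => τ := by ext; simp [Sf, h]
    rw [this, h]; simpa using hasDerivAt_id' τ
  · have : Sf m = fun τ => Real.sin (τ * m) / m := by ext; simp [Sf, h]
    rw [this]
    have := (((hasDerivAt_id τ).mul_const m).sin).div_const m
    refine this.congr_deriv ?_
    simp; field_simp

theorem cos_deriv (m τ : ℝ) : HasDerivAt (fun τ => Real.cos (τ * m)) (-(m ^ 2 * Sf m τ)) τ := by
  have := (((hasDerivAt_id τ).mul_const m).cos)
  refine this.congr_deriv ?_
  by_cases h : m = 0
  · simp [h]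
  · simp [Sf, h]; field_simp

theorem Sf_cont (m : ℝ) : Continuous (Sf m) :=
  continuous_iff_continuousAt.2 fun τ => (Sf_deriv m τ).continuousAt

/-- The weight base. -/
def Aw (ν θ y : ℝ) : ℝ := 1 + √(1 + (ν * (Real.arccos y - θ)) ^ 2)

theorem Aw_cont (ν θ : ℝ) : Continuous (Aw ν θ) := by
  unfold Aw
  have := Real.continuous_arccos
  fun_prop

theorem Aw_gt (ν θ y : ℝ) : 1 < Aw ν θ y := by
  unfold Aw
  have : 0 < √(1 + (ν * (Real.arccos y - θ)) ^ 2) := by positivity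
  linarith

theorem Aw_ge (ν θ y : ℝ) : 2 ≤ Aw ν θ y := by
  unfold Aw
  have : 1 ≤ √(1 + (ν * (Real.arccos y - θ)) ^ 2) := by
    rw [Real.one_le_sqrt]; nlinarith [sq_nonneg (ν * (Real.arccos y - θ))]
  linarith

/-- slope -/
def rw_ (ν θ y : ℝ) : ℝ :=
  ν * (ν * (Real.arccos y - θ)) / √(1 + (ν * (Real.arccos y - θ)) ^ 2)

theorem rw_cont (ν θ : ℝ) : Continuous (rw_ ν θ) := by
  unfold rw_
  have := Real.continuous_arccos
  refine Continuous.div (by fun_prop) (by fun_prop) fun y => ?_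
  positivity

theorem rw_abs (ν θ y : ℝ) (hν : 0 < ν) : |rw_ ν θ y| ≤ ν := by
  unfold rw_
  rw [abs_div, abs_mul, abs_of_pos hν, abs_of_nonneg (Real.sqrt_nonneg _),
    div_le_iff₀ (by positivity)]
  refine mul_le_mul_of_nonneg_left ?_ hν.le
  exact Real.abs_le_sqrt (by linarith)

theorem Aw_deriv (ν θ y : ℝ) (hy : y ∈ Ioo (-1 : ℝ) 1) :
    HasDerivAt (Aw ν θ) (-(rw_ ν θ y / √(1 - y ^ 2))) y := by
  have h1 := ((((Real.hasDerivAt_arccos hy.1.ne' hy.2.ne).sub_const θ).const_mul ν).pow 2).const_add 1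
  have hne : (1:ℝ) + (ν * (Real.arccos y - θ)) ^ 2 ≠ 0 := by positivity
  have h2 := (h1.sqrt hne).const_add 1
  refine h2.congr_deriv ?_
  unfold rw_
  have hs : √(1 + (ν * (Real.arccos y - θ)) ^ 2) ≠ 0 := by positivity
  have hp : (0:ℝ) < 1 - y ^ 2 := by nlinarith [hy.1, hy.2]
  have hs2 : √(1 - y ^ 2) ≠ 0 := by positivity
  simp only [Pi.pow_apply, Pi.mul_apply]
  norm_num
  field_simp

open Polynomial in
/-- the wave with data -/
def vp (N : ℕ) (P : ℕ → ℝ[X]) (m : ℕ → ℝ) (τ : ℝ) : ℝ[X] :=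
  ∑ k ∈ Finset.range N, C (Sf (m k) τ) * P k

open Polynomial in
def up (N : ℕ) (P : ℕ → ℝ[X]) (m : ℕ → ℝ) (τ : ℝ) : ℝ[X] :=
  ∑ k ∈ Finset.range N, C (Real.cos (τ * m k)) * P k

theorem vp_eval (N : ℕ) (P : ℕ → Polynomial ℝ) (m : ℕ → ℝ) (τ y : ℝ) :
    (vp N P m τ).eval y = ∑ k ∈ Finset.range N, Sf (m k) τ * (P k).eval y := by
  simp [vp, Polynomial.eval_finsetSum]

theorem up_eval (N : ℕ) (P : ℕ → Polynomial ℝ) (m : ℕ → ℝ) (τ y : ℝ) :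
    (up N P m τ).eval y = ∑ k ∈ Finset.range N, Real.cos (τ * m k) * (P k).eval y := by
  simp [up, Polynomial.eval_finsetSum]

theorem vp_der (N : ℕ) (P : ℕ → Polynomial ℝ) (m : ℕ → ℝ) (τ : ℝ) :
    (vp N P m τ).derivative = vp N (fun k => (P k).derivative) m τ := by
  simp [vp, Polynomial.derivative_sum]

theorem up_der (N : ℕ) (P : ℕ → Polynomial ℝ) (m : ℕ → ℝ) (τ : ℝ) :
    (up N P m τ).derivative = up N (fun k => (P k).derivative) m τ := by
  simp [up, Polynomial.derivative_sum]

theorem vp_deriv (N : ℕ) (P : ℕ → Polynomial ℝ) (m : ℕ → ℝ) (τ y : ℝ) :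
    HasDerivAt (fun τ => (vp N P m τ).eval y) ((up N P m τ).eval y) τ := by
  simp only [vp_eval, up_eval]
  exact HasDerivAt.fun_sum fun k _ => (Sf_deriv (m k) τ).mul_const _

theorem up_deriv (N : ℕ) (P : ℕ → Polynomial ℝ) (m : ℕ → ℝ) (τ y : ℝ) :
    HasDerivAt (fun τ => (up N P m τ).eval y)
      (-(∑ k ∈ Finset.range N, m k ^ 2 * Sf (m k) τ * (P k).eval y)) τ := by
  simp only [up_eval]
  rw [← Finset.sum_neg_distrib]
  refine HasDerivAt.fun_sum fun k _ => ?_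
  have := (cos_deriv (m k) τ).mul_const ((P k).eval y)
  simpa using this

theorem vp_cont (N : ℕ) (P : ℕ → Polynomial ℝ) (m : ℕ → ℝ) :
    Continuous (fun z : ℝ × ℝ => (vp N P m z.1).eval z.2) := by
  simp only [vp_eval]
  refine continuous_finsetSum _ fun k _ => ?_
  have := Sf_cont (m k)
  fun_prop

theorem up_cont (N : ℕ) (P : ℕ → Polynomial ℝ) (m : ℕ → ℝ) :
    Continuous (fun z : ℝ × ℝ => (up N P m z.1).eval z.2) := by
  simp only [up_eval]
  refine continuous_finsetSum _ fun k _ => ?_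
  fun_prop

theorem Lop_vp (α β ρ : ℝ) (N : ℕ) (P : ℕ → Polynomial ℝ) (m : ℕ → ℝ)
    (hP : ∀ k, Lop α β (P k) = Polynomial.C (m k ^ 2 - ρ ^ 2) * P k) (τ y : ℝ) :
    (Lop α β (vp N P m τ)).eval y =
      ∑ k ∈ Finset.range N, (m k ^ 2 - ρ ^ 2) * Sf (m k) τ * (P k).eval y := by
  have h : Lop α β (vp N P m τ) = ∑ k ∈ Finset.range N, Polynomial.C (Sf (m k) τ) * Lop α β (P k) := by
    unfold Lop vp
    simp only [Polynomial.derivative_sum, Polynomial.derivative_C_mul, Finset.mul_sum,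
      ← Finset.sum_add_distrib, ← Finset.sum_neg_distrib]
    refine Finset.sum_congr rfl fun k _ => ?_
    ring
  rw [h, Polynomial.eval_finsetSum]
  refine Finset.sum_congr rfl fun k _ => ?_
  rw [hP]; simp; ring

set_option maxHeartbeats 2000000 in
/-- Energy estimate for the wave equation with a time dependent weight. -/
theorem energy {α β : ℝ} (hα : -1 < α) (hβ : -1 < β) (ρ ν θ : ℝ) (hν : 0 < ν) (M N : ℕ)
    (P : ℕ → Polynomial ℝ) (m : ℕ → ℝ)
    (hP : ∀ k, Lop α β (P k) = Polynomial.C (m k ^ 2 - ρ ^ 2) * P k) (τ : ℝ) (hτ : 0 ≤ τ) :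
    ∫ y, (up N P m τ).eval y ^ 2 / (Aw ν θ y + ν * τ) ^ M ∂(mu α β) ≤
      ∫ y, (up N P m 0).eval y ^ 2 / (Aw ν θ y) ^ M ∂(mu α β) := by
  have hA : ∀ τ > -(1 / ν), ∀ y, 0 < Aw ν θ y + ν * τ := by
    intro τ h y
    have h1 := Aw_gt ν θ y
    have : ν * (-(1 / ν)) < ν * τ := mul_lt_mul_of_pos_left h hν
    rw [mul_neg, mul_one_div_cancel hν.ne'] at this
    linarith
  have hτ0 : -(1 / ν) < 0 := by have : 0 < 1 / ν := by positivity
                                linarith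
  set q : ℝ → ℝ → ℝ := fun τ y => (up N P m τ).eval y ^ 2 +
    (1 - y ^ 2) * (vp N P m τ).derivative.eval y ^ 2 + ρ ^ 2 * (vp N P m τ).eval y ^ 2 with hq
  set q' : ℝ → ℝ → ℝ := fun τ y => 2 * (up N P m τ).eval y *
      (-(∑ k ∈ Finset.range N, m k ^ 2 * Sf (m k) τ * (P k).eval y)) +
    (1 - y ^ 2) * (2 * (vp N P m τ).derivative.eval y * (up N P m τ).derivative.eval y)
      + ρ ^ 2 * (2 * (vp N P m τ).eval y * (up N P m τ).eval y) with hq'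
  set e : ℝ → ℝ → ℝ := fun τ y => q τ y / (Aw ν θ y + ν * τ) ^ M with he
  set e' : ℝ → ℝ → ℝ := fun τ y => q' τ y / (Aw ν θ y + ν * τ) ^ M
    - M * ν * q τ y / (Aw ν θ y + ν * τ) ^ (M + 1) with he'
  have c1 := vp_cont N P m
  have c2 := up_cont N P m
  have c3 : Continuous (fun z : ℝ × ℝ => (vp N P m z.1).derivative.eval z.2) := by
    simp only [vp_der]; exact vp_cont _ _ _
  have c4 : Continuous (fun z : ℝ × ℝ => (up N P m z.1).derivative.eval z.2) := by
    simp only [up_der]; exact up_cont _ _ _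
  have c5 : Continuous (fun z : ℝ × ℝ =>
      ∑ k ∈ Finset.range N, m k ^ 2 * Sf (m k) z.1 * (P k).eval z.2) := by
    refine continuous_finsetSum _ fun k _ => ?_
    have := Sf_cont (m k)
    fun_prop
  have cA := Aw_cont ν θ
  have cq : Continuous (fun z : ℝ × ℝ => q z.1 z.2) := by simp only [hq]; fun_prop
  have cq' : Continuous (fun z : ℝ × ℝ => q' z.1 z.2) := by simp only [hq']; fun_prop
  have hqd : ∀ τ y, HasDerivAt (fun τ => q τ y) (q' τ y) τ := by
    intro τ y
    have d1 := (up_deriv N P m τ y).pow 2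
    have d2 : HasDerivAt (fun τ => (vp N P m τ).derivative.eval y)
        ((up N P m τ).derivative.eval y) τ := by
      simp only [vp_der, up_der]; exact vp_deriv _ _ _ _ _
    have d3 := (d2.pow 2).const_mul (1 - y ^ 2)
    have d4 := ((vp_deriv N P m τ y).pow 2).const_mul (ρ ^ 2)
    refine ((d1.add d3).add d4).congr_deriv ?_
    simp [hq']
  have hed : ∀ τ > -(1 / ν), ∀ y, HasDerivAt (fun τ => e τ y) (e' τ y) τ := by
    intro τ h y
    have hp := hA τ h y
    have d1 := (((hasDerivAt_id τ).const_mul ν).const_add (Aw ν θ y)).pow M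
    refine ((hqd τ y).div d1 (pow_pos hp M).ne').congr_deriv ?_
    simp only [he', id, Pi.pow_apply]
    rcases M with _ | M
    · simp
    · simp
      field_simp
      ring
  have hE := deriv_int hα hβ e e' (-(1 / ν)) hed (by
      simp only [he']
      refine ContinuousOn.sub ?_ ?_
      · refine ContinuousOn.div cq'.continuousOn (by fun_prop) ?_
        rintro ⟨s, y⟩ ⟨hs, _⟩
        exact (pow_pos (hA s hs y) _).ne'
      · refine ContinuousOn.div (by fun_prop) (by fun_prop) ?_
        rintro ⟨s, y⟩ ⟨hs, _⟩
        exact (pow_pos (hA s hs y) _).ne') (by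
      intro s hs
      simp only [he]
      refine Continuous.div ?_ (by fun_prop) fun y => (pow_pos (hA s hs y) _).ne'
      exact cq.comp (f := fun y => (s, y)) (by fun_prop))
  have hneg : ∀ τ > -(1 / ν), ∫ y, e' τ y ∂(mu α β) ≤ 0 := by
    intro τ h
    have hA' := hA τ h
    set φ : ℝ → ℝ := fun y => (up N P m τ).eval y / (Aw ν θ y + ν * τ) ^ M with hφ
    set φ' : ℝ → ℝ := fun y => (up N P m τ).derivative.eval y / (Aw ν θ y + ν * τ) ^ M
      + M * (up N P m τ).eval y * (rw_ ν θ y / √(1 - y ^ 2)) / (Aw ν θ y + ν * τ) ^ (M + 1) with hφ'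
    set ψ : ℝ → ℝ := fun y => (vp N P m τ).derivative.eval y *
      ((up N P m τ).derivative.eval y * (1 - y ^ 2) / (Aw ν θ y + ν * τ) ^ M
      + M * (up N P m τ).eval y * (rw_ ν θ y * √(1 - y ^ 2)) / (Aw ν θ y + ν * τ) ^ (M + 1)) with hψ
    have hφc : Continuous φ :=
      Continuous.div (by fun_prop) (by fun_prop) fun y => (pow_pos (hA' y) _).ne'
    have hψc : Continuous ψ := by
      have := rw_cont ν θ
      refine Continuous.mul (by fun_prop) (Continuous.add ?_ ?_)
      · exact Continuous.div (by fun_prop) (by fun_prop) fun y => (pow_pos (hA' y) _).ne'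
      · exact Continuous.div (by fun_prop) (by fun_prop) fun y => (pow_pos (hA' y) _).ne'
    have hψφ : ∀ y ∈ Ioo (-1 : ℝ) 1,
        ψ y = φ' y * ((vp N P m τ).derivative.eval y * (1 - y ^ 2)) := by
      intro y hy
      have hp : (0:ℝ) < 1 - y ^ 2 := by nlinarith [hy.1, hy.2]
      have hs : √(1 - y ^ 2) ≠ 0 := by positivity
      have hs2 : √(1 - y ^ 2) ^ 2 = 1 - y ^ 2 := Real.sq_sqrt hp.le
      have hAy := (hA' y).ne'
      simp only [hψ, hφ']
      set t := √(1 - y ^ 2)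
      rw [← hs2]
      field_simp
    have hφd : ∀ y ∈ Ioo (-1 : ℝ) 1, HasDerivAt φ (φ' y) y := by
      intro y hy
      have hp := hA' y
      have d1 := ((Aw_deriv ν θ y hy).add_const (ν * τ)).pow M
      refine (((up N P m τ).hasDerivAt y).div d1 (pow_pos hp M).ne').congr_deriv ?_
      simp only [hφ', Pi.pow_apply]
      have hp2 : (0:ℝ) < 1 - y ^ 2 := by nlinarith [hy.1, hy.2]
      have hs : √(1 - y ^ 2) ≠ 0 := by positivity
      rcases M with _ | M
      · simp
      · simp
        field_simp
        ring
    have hψi : Integrable ψ (mu α β) := integrable_cont hα hβ hψc.continuousOn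
    have hae : ψ =ᵐ[mu α β] fun y => φ' y * ((vp N P m τ).derivative.eval y * (1 - y ^ 2)) :=
      (mu_ae α β).mono hψφ
    have hib := ibp hα hβ φ φ' (vp N P m τ) hφc.continuousOn hφd (hψi.congr hae)
    rw [← integral_congr_ae hae] at hib
    set g : ℝ → ℝ := fun y => e' τ y + 2 * (φ y * (Lop α β (vp N P m τ)).eval y) - 2 * ψ y with hg
    have hei : Integrable (e' τ) (mu α β) := by
      refine integrable_cont hα hβ (Continuous.continuousOn ?_)
      simp only [he']
      have c6 : Continuous (q τ) := cq.comp (f := fun y => (τ, y)) (by fun_prop)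
      have c7 : Continuous (q' τ) := cq'.comp (f := fun y => (τ, y)) (by fun_prop)
      refine Continuous.sub ?_ ?_
      · exact Continuous.div (by fun_prop) (by fun_prop) fun y => (pow_pos (hA' y) _).ne'
      · exact Continuous.div (by fun_prop) (by fun_prop) fun y => (pow_pos (hA' y) _).ne'
    have hφi : Integrable (fun y => φ y * (Lop α β (vp N P m τ)).eval y) (mu α β) :=
      integrable_cont hα hβ (Continuous.continuousOn (by fun_prop))
    have heq : ∫ y, e' τ y ∂(mu α β) = ∫ y, g y ∂(mu α β) := by
      have h12 : Integrable (fun y => e' τ y + 2 * (φ y * (Lop α β (vp N P m τ)).eval y)) (mu α β) :=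
        hei.add (hφi.const_mul 2)
      have h13 : ∫ y, g y ∂(mu α β) = ∫ y, (e' τ y + 2 * (φ y * (Lop α β (vp N P m τ)).eval y))
          ∂(mu α β) - ∫ y, 2 * ψ y ∂(mu α β) := integral_sub h12 (hψi.const_mul 2)
      have h14 : ∫ y, (e' τ y + 2 * (φ y * (Lop α β (vp N P m τ)).eval y)) ∂(mu α β) =
          ∫ y, e' τ y ∂(mu α β) + ∫ y, 2 * (φ y * (Lop α β (vp N P m τ)).eval y) ∂(mu α β) :=
        integral_add hei (hφi.const_mul 2)
      rw [h13, h14, integral_const_mul, integral_const_mul, hib]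
      ring
    rw [heq]
    refine integral_nonpos_of_ae ?_
    filter_upwards [mu_ae α β] with y hy
    have hp : (0:ℝ) < 1 - y ^ 2 := by nlinarith [hy.1, hy.2]
    have hs2 : √(1 - y ^ 2) ^ 2 = 1 - y ^ 2 := Real.sq_sqrt hp.le
    have hAy := hA' y
    have hL := Lop_vp α β ρ N P m hP τ y
    have hL2 : ∑ k ∈ Finset.range N, m k ^ 2 * Sf (m k) τ * (P k).eval y =
        (Lop α β (vp N P m τ)).eval y + ρ ^ 2 * (vp N P m τ).eval y := by
      rw [hL, vp_eval, Finset.mul_sum, ← Finset.sum_add_distrib]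
      refine Finset.sum_congr rfl fun k _ => ?_
      ring
    set U := (up N P m τ).eval y
    set Uy := (up N P m τ).derivative.eval y
    set Vv := (vp N P m τ).eval y
    set Vy := (vp N P m τ).derivative.eval y
    set t := √(1 - y ^ 2)
    have hgy : g y = -(M / (Aw ν θ y + ν * τ) ^ (M + 1) *
        (ν * (U ^ 2 + t ^ 2 * Vy ^ 2 + ρ ^ 2 * Vv ^ 2) + 2 * rw_ ν θ y * t * U * Vy)) := by
      simp only [hg, he', hq, hq', hφ, hψ, hL2]
      rw [hs2]
      field_simp
      ring
    rw [hgy]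
    have hr := rw_abs ν θ y hν
    have hr2 : |2 * rw_ ν θ y * t * U * Vy| ≤ ν * (U ^ 2 + t ^ 2 * Vy ^ 2) := by
      have : 2 * rw_ ν θ y * t * U * Vy = rw_ ν θ y * (2 * U * (t * Vy)) := by ring
      rw [this, abs_mul]
      refine mul_le_mul hr ?_ (abs_nonneg _) hν.le
      rw [abs_le]
      have e1 := sq_nonneg (U + t * Vy)
      have e2 := sq_nonneg (U - t * Vy)
      ring_nf at e1 e2 ⊢
      constructor <;> linarith
    have h3 : 0 ≤ ν * (ρ ^ 2 * Vv ^ 2) := by positivity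
    have h4 := (abs_le.1 hr2).1
    have h5 : (0:ℝ) ≤ M / (Aw ν θ y + ν * τ) ^ (M + 1) := by positivity
    have := mul_nonneg h5 (show 0 ≤ ν * (U ^ 2 + t ^ 2 * Vy ^ 2 + ρ ^ 2 * Vv ^ 2) +
      2 * rw_ ν θ y * t * U * Vy by
        have h6 : ν * (U ^ 2 + t ^ 2 * Vy ^ 2 + ρ ^ 2 * Vv ^ 2) =
          ν * (U ^ 2 + t ^ 2 * Vy ^ 2) + ν * (ρ ^ 2 * Vv ^ 2) := by ring
        linarith)
    simp only [Pi.zero_apply]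
    linarith
  have hanti : AntitoneOn (fun τ => ∫ y, e τ y ∂(mu α β)) (Ici 0) := by
    refine antitoneOn_of_deriv_nonpos (convex_Ici 0) ?_ ?_ ?_
    · intro s hs
      exact (hE s (lt_of_lt_of_le hτ0 hs)).continuousAt.continuousWithinAt
    · intro s hs
      rw [interior_Ici] at hs
      exact (hE s (hτ0.trans hs)).differentiableAt.differentiableWithinAt
    · intro s hs
      rw [interior_Ici] at hs
      rw [(hE s (hτ0.trans hs)).deriv]
      exact hneg s (hτ0.trans hs)
  have hfin := hanti (mem_Ici.2 le_rfl) (mem_Ici.2 hτ) hτ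
  have hA' := hA τ (lt_of_lt_of_le hτ0 hτ)
  have h0 : ∫ y, e 0 y ∂(mu α β) = ∫ y, (up N P m 0).eval y ^ 2 / (Aw ν θ y) ^ M ∂(mu α β) := by
    congr 1; ext y
    simp only [he, hq, vp_der, vp_eval, Sf_zero]
    simp
  simp only at hfin
  rw [h0] at hfin
  refine le_trans (integral_mono_ae ?_ ?_ ?_) hfin
  · refine integrable_cont hα hβ (Continuous.continuousOn ?_)
    exact Continuous.div (by fun_prop) (by fun_prop) fun y => (pow_pos (hA' y) _).ne'
  · refine integrable_cont hα hβ (Continuous.continuousOn ?_)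
    have c6 : Continuous (q τ) := cq.comp (f := fun y => (τ, y)) (by fun_prop)
    exact Continuous.div (by fun_prop) (by fun_prop) fun y => (pow_pos (hA' y) _).ne'
  · filter_upwards [mu_ae α β] with y hy
    have hp : (0:ℝ) < 1 - y ^ 2 := by nlinarith [hy.1, hy.2]
    have hAy := hA' y
    simp only [he, hq]
    gcongr
    have : 0 ≤ (1 - y ^ 2) * (vp N P m τ).derivative.eval y ^ 2 := by positivity
    have : 0 ≤ ρ ^ 2 * (vp N P m τ).eval y ^ 2 := by positivity
    linarith


/-- modified cut-off, complex valued -/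
def etaC (η : ℝ → ℝ) (t : ℝ) : ℂ := if t ≤ 1 / 2 then 1 else (η t : ℂ)

theorem etaC_le {η : ℝ → ℝ} (hη : Admissible η) {t : ℝ} (ht : t ≤ 1) : etaC η t = 1 := by
  unfold etaC
  split_ifs with h
  · rfl
  · rw [hη.2.1 t (by linarith) ht]; simp

theorem etaC_ge {η : ℝ → ℝ} (hη : Admissible η) {t : ℝ} (ht : 0 ≤ t) : etaC η t = η t := by
  unfold etaC
  split_ifs with h
  · rw [hη.2.1 t ht (by linarith)]; simp
  · rfl

theorem etaC_smooth {η : ℝ → ℝ} (hη : Admissible η) : ContDiff ℝ (⊤ : ℕ∞) (etaC η) := by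
  rw [contDiff_iff_contDiffAt]
  intro t
  by_cases h : t < 1
  · have : etaC η =ᶠ[nhds t] fun _ => 1 := by
      filter_upwards [Iio_mem_nhds h] with s hs using etaC_le hη (le_of_lt hs)
    exact contDiffAt_const.congr_of_eventuallyEq this
  · have : etaC η =ᶠ[nhds t] fun s => (η s : ℂ) := by
      filter_upwards [Ioi_mem_nhds (show (1:ℝ)/2 < t by linarith)] with s hs
      exact etaC_ge hη (by have : (1:ℝ)/2 < s := hs
                           linarith)
    refine ContDiffAt.congr_of_eventuallyEq ?_ this
    exact (Complex.ofRealCLM.contDiff.comp hη.1).contDiffAt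

theorem etaC_bdd {η : ℝ → ℝ} (hη : Admissible η) (j : ℕ) :
    ∃ B, ∀ t, ‖iteratedDeriv j (etaC η) t‖ ≤ B := by
  have hc : Continuous (iteratedDeriv j (etaC η)) :=
    (etaC_smooth hη).continuous_iteratedDeriv j (by exact_mod_cast le_top)
  obtain ⟨B, hB⟩ := (isCompact_Icc (a := (1:ℝ)/2) (b := 3)).exists_bound_of_continuousOn hc.continuousOn
  refine ⟨max B 1, fun t => ?_⟩
  by_cases h1 : t < 1 / 2
  · have : etaC η =ᶠ[nhds t] fun _ => 1 := by
      filter_upwards [Iio_mem_nhds h1] with s hs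
      exact etaC_le hη (by have : s < (1:ℝ)/2 := hs
                           linarith)
    rw [this.iteratedDeriv_eq, iteratedDeriv_const]
    refine le_trans ?_ (le_max_right _ _)
    split_ifs <;> simp
  by_cases h2 : 3 < t
  · have : etaC η =ᶠ[nhds t] fun _ => 0 := by
      filter_upwards [Ioi_mem_nhds h2] with s hs
      have : (3:ℝ) < s := hs
      rw [etaC_ge hη (by linarith), hη.2.2 s (by linarith)]; simp
    rw [this.iteratedDeriv_eq, iteratedDeriv_const]
    refine le_trans ?_ (le_max_right _ _)
    split_ifs <;> simp
  · exact (hB t ⟨by linarith, by linarith⟩).trans (le_max_left _ _)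

/-- even extension -/
def Hf (η : ℝ → ℝ) (a ξ : ℝ) : ℂ := etaC η (ξ - a) + etaC η (-a - ξ) - 1

theorem Hf_even (η : ℝ → ℝ) (a ξ : ℝ) : Hf η a (-ξ) = Hf η a ξ := by
  unfold Hf
  rw [show -ξ - a = -a - ξ by ring, show -a - -ξ = ξ - a by ring]; ring

theorem Hf_smooth {η : ℝ → ℝ} (hη : Admissible η) (a : ℝ) : ContDiff ℝ (⊤ : ℕ∞) (Hf η a) := by
  unfold Hf
  have := etaC_smooth hη
  fun_prop

theorem Hf_zero {η : ℝ → ℝ} (hη : Admissible η) {a R : ℝ} (ha : 2 + |a| ≤ R) {ξ : ℝ} (hξ : R < |ξ|) :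
    Hf η a ξ = 0 := by
  have key : ∀ ξ, R < ξ → Hf η a ξ = 0 := by
    intro ξ h
    have h1 := neg_abs_le a
    have h2 := le_abs_self a
    unfold Hf
    rw [etaC_ge hη (by linarith), hη.2.2 _ (by linarith), etaC_le hη (by linarith)]
    simp
  rcases le_total 0 ξ with h | h
  · exact key ξ (by rwa [abs_of_nonneg h] at hξ)
  · rw [← Hf_even]; exact key (-ξ) (by rwa [abs_of_nonpos h] at hξ)

theorem Hf_iter {η : ℝ → ℝ} (hη : Admissible η) (j : ℕ) :
    ∃ B, ∀ a ξ, ‖iteratedDeriv j (Hf η a) ξ‖ ≤ B := by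
  obtain ⟨B, hB⟩ := etaC_bdd hη j
  refine ⟨B + B + 1, fun a ξ => ?_⟩
  have hs : ContDiff ℝ j (etaC η) := (etaC_smooth hη).of_le (by exact_mod_cast le_top)
  have h1 : iteratedDeriv j (Hf η a) ξ = iteratedDeriv j (fun z => etaC η (z - a)) ξ +
      iteratedDeriv j (fun z => etaC η (-a - z)) ξ - iteratedDeriv j (fun _ => (1:ℂ)) ξ := by
    unfold Hf
    rw [iteratedDeriv_fun_sub (by fun_prop) (by fun_prop),
      iteratedDeriv_fun_add (by fun_prop) (by fun_prop)]
  rw [h1, iteratedDeriv_comp_sub_const, iteratedDeriv_comp_const_sub, iteratedDeriv_const]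
  refine (norm_sub_le _ _).trans (add_le_add ((norm_add_le _ _).trans (add_le_add (hB _) ?_)) ?_)
  · simp only [norm_smul, norm_pow, norm_neg, norm_one, one_pow, one_mul]; exact hB _
  · split_ifs <;> simp

open FourierTransform in
theorem Hf_fourier {η : ℝ → ℝ} (hη : Admissible η) (R : ℝ) (j : ℕ) :
    ∃ K, 0 ≤ K ∧ ∀ a, 2 + |a| ≤ R → ∀ s, (2 * Real.pi * |s|) ^ j * ‖𝓕 (Hf η a) s‖ ≤ K := by
  obtain ⟨B, hB⟩ := Hf_iter hη j
  have hB0 : 0 ≤ B := (norm_nonneg _).trans (hB 0 0)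
  refine ⟨B * (2 * |R|), by positivity, fun a ha s => ?_⟩
  have hR : 0 ≤ R := by linarith [abs_nonneg a]
  have hcs : ∀ i, HasCompactSupport (iteratedDeriv i (Hf η a)) := by
    intro i
    refine HasCompactSupport.intro (isCompact_Icc (a := -R) (b := R)) fun ξ hξ => ?_
    have hξ' : R < |ξ| := by
      by_contra h
      exact hξ (abs_le.1 (not_lt.1 h))
    have : Hf η a =ᶠ[nhds ξ] fun _ => 0 := by
      filter_upwards [(isOpen_lt continuous_const continuous_abs).mem_nhds hξ'] with z hz
      exact Hf_zero hη ha hz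
    rw [this.iteratedDeriv_eq, iteratedDeriv_const]; simp
  have hci : ∀ i : ℕ, Continuous (iteratedDeriv i (Hf η a)) := fun i =>
    (Hf_smooth hη a).continuous_iteratedDeriv i (by exact_mod_cast le_top)
  have hitg : ∀ i : ℕ, Integrable (iteratedDeriv i (Hf η a)) := fun i =>
    (hci i).integrable_of_hasCompactSupport (hcs i)
  have h := congrFun (Real.fourier_iteratedDeriv (N := ⊤) (n := j) (Hf_smooth hη a) (fun i _ => hitg i)
    (le_top)) s
  have h2 : ‖𝓕 (iteratedDeriv j (Hf η a)) s‖ = (2 * Real.pi * |s|) ^ j * ‖𝓕 (Hf η a) s‖ := by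
    rw [h, norm_smul, norm_pow]
    simp [abs_of_pos Real.pi_pos]
  rw [← h2]
  have h3 : ‖𝓕 (iteratedDeriv j (Hf η a)) s‖ ≤ ∫ v, ‖iteratedDeriv j (Hf η a) v‖ :=
    VectorFourier.norm_fourierIntegral_le_integral_norm _ _ _ _ _
  refine h3.trans ?_
  have h4 : ∫ v, ‖iteratedDeriv j (Hf η a) v‖ = ∫ v in Icc (-R) R, ‖iteratedDeriv j (Hf η a) v‖ := by
    symm
    refine setIntegral_eq_integral_of_forall_compl_eq_zero fun ξ hξ => ?_
    have hξ' : R < |ξ| := by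
      by_contra h
      exact hξ (abs_le.1 (not_lt.1 h))
    have : Hf η a =ᶠ[nhds ξ] fun _ => 0 := by
      filter_upwards [(isOpen_lt continuous_const continuous_abs).mem_nhds hξ'] with z hz
      exact Hf_zero hη ha hz
    rw [this.iteratedDeriv_eq, iteratedDeriv_const]; simp
  rw [h4]
  have h5 := norm_setIntegral_le_of_norm_le_const (μ := volume) (s := Icc (-R) R)
    (f := fun v => ‖iteratedDeriv j (Hf η a) v‖) (C := B) (by simp) (fun x _ => by simpa using hB a x)
  rw [Real.norm_of_nonneg (integral_nonneg fun _ => norm_nonneg _)] at h5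
  refine h5.trans (le_of_eq ?_)
  rw [Real.volume_real_Icc_of_le (by linarith), abs_of_nonneg hR]; ring

open FourierTransform in
theorem multiplier {η : ℝ → ℝ} (hη : Admissible η) (ρ : ℝ) (hρ : -(1 / 2) < ρ) (M : ℕ) :
    ∃ C, 0 ≤ C ∧ ∀ n : ℕ, 1 ≤ n → ∃ g : ℝ → ℝ, Continuous g ∧
      Integrable (fun s => |g s| * (1 + 2 * Real.pi * |s|) ^ M) ∧
      ∫ s, |g s| * (1 + 2 * Real.pi * |s|) ^ M ≤ C ∧
      ∀ k : ℕ, η (k / n) = ∫ s, g s * Real.cos (2 * Real.pi * s * ((k + ρ) / n)) := by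
  obtain ⟨K0, hK0, hB0⟩ := Hf_fourier hη (2 + |ρ|) 0
  obtain ⟨K1, hK1, hB1⟩ := Hf_fourier hη (2 + |ρ|) (M + 2)
  set K := 2 ^ (M + 2 - 1) * (K0 + K1) with hK
  have hKnn : 0 ≤ K := by positivity
  refine ⟨K * Real.pi, by positivity, fun n hn => ?_⟩
  have hn0 : (1:ℝ) ≤ n := by exact_mod_cast hn
  set a := ρ / n with ha
  have haR : 2 + |a| ≤ 2 + |ρ| := by
    rw [ha, abs_div, abs_of_pos (show (0:ℝ) < n by linarith)]
    have := div_le_self (abs_nonneg ρ) hn0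
    linarith
  have hcs : HasCompactSupport (Hf η a) := by
    refine HasCompactSupport.intro (isCompact_Icc (a := -(2 + |ρ|)) (b := 2 + |ρ|)) fun ξ hξ => ?_
    refine Hf_zero hη haR ?_
    by_contra h
    exact hξ (abs_le.1 (not_lt.1 h))
  set SH := hcs.toSchwartzMap (Hf_smooth hη a) with hSH
  have hco : (𝓕 SH : SchwartzMap ℝ ℂ) = (𝓕 (Hf η a) : ℝ → ℂ) := by
    rw [SchwartzMap.fourier_coe]; rfl
  have hFc : Continuous (𝓕 (Hf η a)) := hco ▸ (𝓕 SH : SchwartzMap ℝ ℂ).continuous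
  have hFi : Integrable (𝓕 (Hf η a)) := hco ▸ (𝓕 SH : SchwartzMap ℝ ℂ).integrable
  have hHi : Integrable (Hf η a) := (Hf_smooth hη a).continuous.integrable_of_hasCompactSupport hcs
  have hinv := (Hf_smooth hη a).continuous.fourierInv_fourier_eq hHi hFi
  have hbd : ∀ s, ‖𝓕 (Hf η a) s‖ * (1 + 2 * Real.pi * |s|) ^ M ≤ K * (1 + s ^ 2)⁻¹ := by
    intro s
    have h0 := hB0 a haR s
    have h1 := hB1 a haR s
    set F := ‖𝓕 (Hf η a) s‖
    have hF : 0 ≤ F := norm_nonneg _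
    set x := 2 * Real.pi * |s|
    have hx : 0 ≤ x := by positivity
    have h2 := add_pow_le zero_le_one hx (M + 2)
    have hxs : |s| ≤ x := by
      have := Real.pi_gt_three
      nlinarith [abs_nonneg s]
    have hs : 1 + s ^ 2 ≤ (1 + x) ^ 2 := by
      rw [← sq_abs]; nlinarith [abs_nonneg s]
    rw [← div_eq_mul_inv, le_div_iff₀ (by positivity)]
    calc F * (1 + x) ^ M * (1 + s ^ 2) ≤ F * (1 + x) ^ M * (1 + x) ^ 2 := by gcongr
      _ = F * (1 + x) ^ (M + 2) := by ring
      _ ≤ F * (2 ^ (M + 2 - 1) * (1 ^ (M + 2) + x ^ (M + 2))) := by gcongr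
      _ = 2 ^ (M + 2 - 1) * (x ^ 0 * F + x ^ (M + 2) * F) := by simp; ring
      _ ≤ K := by rw [hK]; gcongr
  have hre : ∀ s, |(𝓕 (Hf η a) s).re| * (1 + 2 * Real.pi * |s|) ^ M ≤ K * (1 + s ^ 2)⁻¹ := by
    intro s
    refine le_trans ?_ (hbd s)
    gcongr
    exact Complex.abs_re_le_norm _
  have hgc : Continuous (fun s => (𝓕 (Hf η a) s).re) := Complex.continuous_re.comp hFc
  have hgi : Integrable (fun s => |(𝓕 (Hf η a) s).re| * (1 + 2 * Real.pi * |s|) ^ M) := by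
    refine (integrable_inv_one_add_sq.const_mul K).mono' (by fun_prop) ?_
    filter_upwards with s
    rw [Real.norm_of_nonneg (by positivity)]
    exact hre s
  refine ⟨fun s => (𝓕 (Hf η a) s).re, hgc, hgi, ?_, fun k => ?_⟩
  · calc _ ≤ ∫ s : ℝ, K * (1 + s ^ 2)⁻¹ :=
        integral_mono hgi (integrable_inv_one_add_sq.const_mul K) hre
      _ = K * Real.pi := by rw [integral_const_mul, integral_univ_inv_one_add_sq]
  · set ξ := ((k:ℝ) + ρ) / n with hξ
    have hval : Hf η a ξ = η (k / n) := by
      unfold Hf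
      have e1 : ξ - a = k / n := by rw [hξ, ha]; ring
      have e2 : -a - ξ ≤ 1 := by
        rw [hξ, ha]
        have : -(ρ / n) - (k + ρ) / n = (-k - 2 * ρ) / n := by ring
        rw [this, div_le_one (by linarith)]
        have : (0:ℝ) ≤ k := by positivity
        linarith
      rw [e1, etaC_ge hη (by positivity), etaC_le hη e2]; ring
    have hf : ∀ z : ℝ, Hf η a z = ∫ v : ℝ, Complex.exp (↑(2 * Real.pi * (v * z)) * Complex.I) * 𝓕 (Hf η a) v := by
      intro z
      conv_lhs => rw [← hinv]
      rw [Real.fourierInv_eq']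
      simp only [smul_eq_mul]
      congr 1; ext v
      simp [mul_comm]
    have hie : ∀ z : ℝ, Integrable (fun v : ℝ => Complex.exp (↑(2 * Real.pi * (v * z)) * Complex.I) * 𝓕 (Hf η a) v) := by
      intro z
      refine hFi.norm.mono' (by fun_prop) ?_
      filter_upwards with v
      rw [norm_mul, Complex.norm_exp_ofReal_mul_I, one_mul]
    have h1 : Hf η a ξ = ∫ v : ℝ, (Real.cos (2 * Real.pi * v * ξ) : ℂ) * 𝓕 (Hf η a) v := by
      have e1 := hf ξ
      have e2 := hf (-ξ)
      rw [Hf_even] at e2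
      have e3 : Hf η a ξ = (1 / 2 : ℂ) * (Hf η a ξ + Hf η a ξ) := by ring
      rw [e3]
      nth_rewrite 1 [e1]
      rw [e2, ← integral_add (hie _) (hie _), ← integral_const_mul]
      congr 1; ext v
      rw [Complex.ofReal_cos, Complex.cos]
      push_cast
      ring_nf
    have h2 : (η (k / n)) = (Hf η a ξ).re := by rw [hval]; simp
    rw [h2, h1]
    have hic : Integrable (fun v : ℝ => (Real.cos (2 * Real.pi * v * ξ) : ℂ) * 𝓕 (Hf η a) v) := by
      refine hFi.norm.mono' (by fun_prop) ?_
      filter_upwards with v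
      rw [norm_mul, Complex.norm_real]
      have := Real.abs_cos_le_one (2 * Real.pi * v * ξ)
      exact mul_le_of_le_one_left (norm_nonneg _) this
    have := integral_re (𝕜 := ℂ) hic
    simp only [RCLike.re_eq_complex_re] at this
    rw [← this]
    congr 1; ext v
    rw [Complex.re_ofReal_mul]; ring


theorem cs_weight {X : Type*} [MeasurableSpace X] {μ : Measure X} {g U : X → ℝ}
    (h0 : Integrable g μ) (h1 : Integrable (fun x => g x * U x) μ)
    (h2 : Integrable (fun x => g x * U x ^ 2) μ) (hg : ∀ x, 0 ≤ g x) :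
    (∫ x, g x * U x ∂μ) ^ 2 ≤ (∫ x, g x ∂μ) * ∫ x, g x * U x ^ 2 ∂μ := by
  have h : ∀ c : ℝ, 0 ≤ (∫ x, g x ∂μ) * (c * c) + (-2 * ∫ x, g x * U x ∂μ) * c
      + ∫ x, g x * U x ^ 2 ∂μ := by
    intro c
    have e : ∫ x, g x * (U x - c) ^ 2 ∂μ = (∫ x, g x ∂μ) * (c * c) + (-2 * ∫ x, g x * U x ∂μ) * c
      + ∫ x, g x * U x ^ 2 ∂μ := by
      have : ∀ x, g x * (U x - c) ^ 2 = (c * c * g x + (-2 * c) * (g x * U x)) + g x * U x ^ 2 := by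
        intro x; ring
      simp_rw [this]
      have h01 : Integrable (fun x => c * c * g x + (-2 * c) * (g x * U x)) μ :=
        (h0.const_mul _).add (h1.const_mul _)
      rw [integral_add h01 h2,
        integral_add (h0.const_mul _) (h1.const_mul _), integral_const_mul, integral_const_mul]
      ring
    rw [← e]
    exact integral_nonneg fun x => mul_nonneg (hg x) (sq_nonneg _)
  have := discrim_le_zero h
  unfold discrim at this
  nlinarith

/-- polynomial form of `V` -/
def Vp (η : ℝ → ℝ) (α β : ℝ) (n : ℕ) (f : ℝ → ℝ) : Polynomial ℝ :=
  ∑ k ∈ Finset.range (2 * n + 1), Polynomial.C (η ((k : ℝ) / (n : ℝ)) * coeff α β k f) * Jp α β k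

theorem Vp_eval (η : ℝ → ℝ) (α β : ℝ) (n : ℕ) (f : ℝ → ℝ) (x : ℝ) :
    (Vp η α β n f).eval x = V η α β n f x := by
  simp [Vp, V, Polynomial.eval_finsetSum, Jp_eval]

theorem Vp_natDegree {α β : ℝ} (hα : -1 < α) (hβ : -1 < β) (η : ℝ → ℝ) (n : ℕ) (f : ℝ → ℝ) :
    (Vp η α β n f).natDegree ≤ 2 * n := by
  refine Polynomial.natDegree_sum_le_of_forall_le _ _ fun k hk => ?_
  refine (Polynomial.natDegree_C_mul_le _ _).trans ?_
  rw [Jp_natDegree hα hβ]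
  have := Finset.mem_range.1 hk
  omega

theorem energy' {α β : ℝ} (hα : -1 < α) (hβ : -1 < β) (ρ ν θ : ℝ) (hν : 0 < ν) (M N : ℕ)
    (P : ℕ → Polynomial ℝ) (m : ℕ → ℝ)
    (hP : ∀ k, Lop α β (P k) = Polynomial.C (m k ^ 2 - ρ ^ 2) * P k) (τ : ℝ) :
    ∫ y, (up N P m τ).eval y ^ 2 / (Aw ν θ y) ^ M ∂(mu α β) ≤
      (1 + ν * |τ|) ^ M * ∫ y, (up N P m 0).eval y ^ 2 / (Aw ν θ y) ^ M ∂(mu α β) := by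
  have hup : up N P m |τ| = up N P m τ := by
    unfold up
    rcases abs_choice τ with h | h <;> rw [h]
    simp [neg_mul, Real.cos_neg]
  have h := energy hα hβ ρ ν θ hν M N P m hP |τ| (abs_nonneg τ)
  rw [hup] at h
  refine le_trans ?_ (mul_le_mul_of_nonneg_left h (by positivity))
  rw [← integral_const_mul]
  have hAc := Aw_cont ν θ
  have hA : ∀ y, 0 < Aw ν θ y := fun y => by linarith [Aw_gt ν θ y]
  have hA2 : ∀ y, 0 < Aw ν θ y + ν * |τ| := fun y => by
    have := hA y
    positivity
  refine integral_mono ?_ ?_ fun y => ?_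
  · refine integrable_cont hα hβ (Continuous.continuousOn ?_)
    exact Continuous.div (by fun_prop) (by fun_prop) fun y => (pow_pos (hA y) _).ne'
  · refine integrable_cont hα hβ (Continuous.continuousOn ?_)
    refine Continuous.mul continuous_const ?_
    exact Continuous.div (by fun_prop) (by fun_prop) fun y => (pow_pos (hA2 y) _).ne'
  · simp only
    have := hA y
    have h2 := hA2 y
    rw [← mul_div_assoc, div_le_div_iff₀ (by positivity) (by positivity)]
    have : (Aw ν θ y + ν * |τ|) ^ M ≤ ((1 + ν * |τ|) * Aw ν θ y) ^ M := by
      gcongr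
      have h1 := Aw_gt ν θ y
      have h3 : 0 ≤ ν * |τ| := by positivity
      nlinarith
    rw [mul_pow] at this
    have h3 := mul_le_mul_of_nonneg_left this (sq_nonneg ((up N P m τ).eval y))
    nlinarith

set_option maxHeartbeats 1000000 in
/-- weighted `L²` boundedness of `V_n` -/
theorem V_weighted {α β : ℝ} (hα : -1 < α) (hβ : -1 < β) {η : ℝ → ℝ} (hη : Admissible η) (M : ℕ) :
    ∃ C, 0 ≤ C ∧ ∀ n : ℕ, 1 ≤ n → ∀ θ : ℝ, ∀ f : Polynomial ℝ,
      ∫ y, V η α β n (fun x => f.eval x) y ^ 2 / (Aw n θ y) ^ M ∂(mu α β) ≤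
        C * ∫ y, f.eval y ^ 2 / (Aw n θ y) ^ M ∂(mu α β) := by
  set ρ := (α + β + 1) / 2 with hρ
  obtain ⟨C, hC0, hC⟩ := multiplier hη ρ (by rw [hρ]; linarith) M
  refine ⟨C * C, by positivity, fun n hn θ f => ?_⟩
  obtain ⟨g, hgc, hgi, hgC, hgk⟩ := hC n hn
  have hmf := mu_finite hα hβ
  have hn0 : (0:ℝ) < n := by exact_mod_cast hn
  set N := f.natDegree + 1 + (2 * n + 1) with hN
  set c : ℕ → ℝ := fun k => coeff α β k (fun x => f.eval x) with hc
  set P : ℕ → Polynomial ℝ := fun k => Polynomial.C (c k) * Jp α β k with hPd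
  set m : ℕ → ℝ := fun k => k + ρ with hm
  have hP : ∀ k, Lop α β (P k) = Polynomial.C (m k ^ 2 - ρ ^ 2) * P k := by
    intro k
    have e1 : Lop α β (P k) = Polynomial.C (c k) * Lop α β (Jp α β k) := by
      simp only [hPd, Lop, Polynomial.derivative_C_mul]; ring
    have e2 : m k ^ 2 - ρ ^ 2 = lam α β k := by simp only [hm, lam, hρ]; ring
    rw [e1, Lop_Jp hα, e2]; simp only [hPd]; ring
  have hup0 : ∀ y, (up N P m 0).eval y = f.eval y := by
    intro y
    rw [up_eval, expansion hα hβ N f (by omega) y]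
    refine Finset.sum_congr rfl fun k _ => ?_
    simp [hPd, Jp_eval, hc]
  set Um : ℝ → ℝ → ℝ := fun s y => (up N P m (2 * Real.pi * s / n)).eval y with hU
  have hUc : Continuous (fun z : ℝ × ℝ => Um z.1 z.2) :=
    (up_cont N P m).comp (f := fun z : ℝ × ℝ => (2 * Real.pi * z.1 / n, z.2)) (by fun_prop)
  set Bd : ℝ → ℝ := fun y => ∑ k ∈ Finset.range N, |(P k).eval y| with hBd
  have hBdc : Continuous Bd := by
    refine continuous_finsetSum _ fun k _ => ?_
    fun_prop
  have hUB : ∀ s y, |Um s y| ≤ Bd y := by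
    intro s y
    simp only [hU, hBd, up_eval]
    refine (Finset.abs_sum_le_sum_abs _ _).trans (Finset.sum_le_sum fun k _ => ?_)
    rw [abs_mul]
    exact mul_le_of_le_one_left (abs_nonneg _) (Real.abs_cos_le_one _)
  have hg1 : Integrable (fun s => |g s|) := by
    refine hgi.mono' (by fun_prop) ?_
    filter_upwards with s
    rw [Real.norm_of_nonneg (abs_nonneg _)]
    refine le_mul_of_one_le_right (abs_nonneg _) (one_le_pow₀ ?_)
    have : 0 ≤ 2 * Real.pi * |s| := by positivity
    linarith
  have hg0 : Integrable g := (integrable_norm_iff hgc.aestronglyMeasurable).1 hg1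
  have hgC1 : ∫ s, |g s| ≤ C := by
    refine le_trans (integral_mono hg1 hgi fun s => ?_) hgC
    refine le_mul_of_one_le_right (abs_nonneg _) (one_le_pow₀ ?_)
    have : 0 ≤ 2 * Real.pi * |s| := by positivity
    linarith
  have hUcs : ∀ y, Continuous (fun s => Um s y) := fun y =>
    hUc.comp (f := fun s => (s, y)) (by fun_prop)
  have hUcy : ∀ s, Continuous (Um s) := fun s =>
    hUc.comp (f := fun y => (s, y)) (by fun_prop)
  have hV : ∀ y, V η α β n (fun x => f.eval x) y = ∫ s, g s * Um s y := by
    intro y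
    have e1 : V η α β n (fun x => f.eval x) y =
        ∑ k ∈ Finset.range N, η (k / n) * (P k).eval y := by
      unfold V
      rw [← Finset.sum_subset (Finset.range_subset_range.2 (show 2 * n + 1 ≤ N by omega))]
      · refine Finset.sum_congr rfl fun k _ => ?_
        simp [hPd, Jp_eval, hc]; ring
      · intro k _ hk
        rw [hη.2.2, zero_mul]
        rw [Finset.mem_range, not_lt] at hk
        rw [le_div_iff₀ hn0]
        have : ((2 * n + 1 : ℕ) : ℝ) ≤ k := by exact_mod_cast hk
        push_cast at this
        linarith
    rw [e1]
    simp only [hU, up_eval, Finset.mul_sum]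
    rw [integral_finsetSum]
    · refine Finset.sum_congr rfl fun k _ => ?_
      rw [hgk k, ← integral_mul_const]
      congr 1; ext s
      simp only [hm]
      rw [show 2 * Real.pi * s * ((k + ρ) / n) = 2 * Real.pi * s / n * (k + ρ) by ring]
      ring
    · intro k _
      refine (hg1.mul_const |(P k).eval y|).mono' (by fun_prop) ?_
      filter_upwards with s
      rw [norm_mul, norm_mul, Real.norm_eq_abs, Real.norm_eq_abs, Real.norm_eq_abs]
      refine mul_le_mul_of_nonneg_left ?_ (abs_nonneg _)
      exact mul_le_of_le_one_left (abs_nonneg _) (Real.abs_cos_le_one _)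
  have hAc := Aw_cont n θ
  have hA : ∀ y, 0 < Aw n θ y := fun y => by linarith [Aw_gt n θ y]
  have hdc : ∀ F : ℝ → ℝ, Continuous F → Continuous (fun y => F y / Aw n θ y ^ M) := fun F hF =>
    hF.div (by fun_prop) fun y => (pow_pos (hA y) _).ne'
  have hCS : ∀ y, V η α β n (fun x => f.eval x) y ^ 2 ≤ C * ∫ s, |g s| * Um s y ^ 2 := by
    intro y
    have hUy := hUcs y
    have i1 : Integrable (fun s => |g s| * |Um s y|) := by
      refine (hg1.mul_const (Bd y)).mono' (by fun_prop) ?_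
      filter_upwards with s
      rw [Real.norm_of_nonneg (by positivity)]
      exact mul_le_mul_of_nonneg_left (hUB s y) (abs_nonneg _)
    have i2 : Integrable (fun s => |g s| * |Um s y| ^ 2) := by
      refine (hg1.mul_const (Bd y ^ 2)).mono' (by fun_prop) ?_
      filter_upwards with s
      rw [Real.norm_of_nonneg (by positivity)]
      exact mul_le_mul_of_nonneg_left (pow_le_pow_left₀ (abs_nonneg _) (hUB s y) 2) (abs_nonneg _)
    have h1 := cs_weight hg1 i1 i2 (fun s => abs_nonneg _)
    have h2 : |V η α β n (fun x => f.eval x) y| ≤ ∫ s, |g s| * |Um s y| := by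
      rw [hV]
      refine (norm_integral_le_integral_norm (fun s => g s * Um s y)).trans (le_of_eq ?_)
      congr 1; ext s; rw [norm_mul]; rfl
    calc _ = |V η α β n (fun x => f.eval x) y| ^ 2 := (sq_abs _).symm
      _ ≤ (∫ s, |g s| * |Um s y|) ^ 2 := pow_le_pow_left₀ (abs_nonneg _) h2 2
      _ ≤ _ := h1
      _ ≤ C * ∫ s, |g s| * |Um s y| ^ 2 := mul_le_mul_of_nonneg_right hgC1
          (integral_nonneg fun s => by positivity)
      _ = _ := by simp only [sq_abs]
  set If := ∫ y, f.eval y ^ 2 / (Aw n θ y) ^ M ∂(mu α β) with hIf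
  have hIf0 : 0 ≤ If := integral_nonneg fun y => div_nonneg (sq_nonneg _) (pow_nonneg (hA y).le _)
  have hE : ∀ s, ∫ y, Um s y ^ 2 / Aw n θ y ^ M ∂(mu α β) ≤ (1 + 2 * Real.pi * |s|) ^ M * If := by
    intro s
    have := energy' hα hβ ρ n θ hn0 M N P m hP (2 * Real.pi * s / n)
    simp only [hup0] at this
    have e : (n:ℝ) * |2 * Real.pi * s / n| = 2 * Real.pi * |s| := by
      rw [abs_div, abs_mul, abs_of_pos hn0, abs_of_pos Real.two_pi_pos]; field_simp
    rwa [e] at this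
  have hprod : Integrable (Function.uncurry fun s y => |g s| * (Um s y ^ 2 / Aw n θ y ^ M))
      ((volume : Measure ℝ).prod (mu α β)) := by
    have hb : Integrable (fun y => Bd y ^ 2 / Aw n θ y ^ M) (mu α β) :=
      integrable_cont hα hβ (hdc _ (by fun_prop)).continuousOn
    refine (hg1.mul_prod hb).mono' ?_ ?_
    · refine Continuous.aestronglyMeasurable ?_
      simp only [Function.uncurry_def]
      refine Continuous.mul (by fun_prop) (Continuous.div (by fun_prop) (by fun_prop) ?_)
      intro z; exact (pow_pos (hA _) _).ne'
    · filter_upwards with z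
      have := hA z.2
      simp only [Function.uncurry_def]
      rw [Real.norm_of_nonneg (by positivity)]
      refine mul_le_mul_of_nonneg_left ?_ (abs_nonneg _)
      gcongr ?_ / _
      rw [← sq_abs]
      exact pow_le_pow_left₀ (abs_nonneg _) (hUB _ _) 2
  have hstep : ∫ y, (∫ s, |g s| * (Um s y ^ 2 / Aw n θ y ^ M)) ∂(mu α β) ≤ C * If := by
    rw [← integral_integral_swap hprod]
    calc _ ≤ ∫ s, |g s| * (1 + 2 * Real.pi * |s|) ^ M * If := by
          refine integral_mono hprod.integral_prod_left (hgi.mul_const If) fun s => ?_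
          simp only [integral_const_mul, mul_assoc]
          exact mul_le_mul_of_nonneg_left (by simpa only [mul_assoc] using hE s) (abs_nonneg _)
      _ ≤ C * If := by
          rw [integral_mul_const]
          exact mul_le_mul_of_nonneg_right hgC hIf0
  calc _ ≤ ∫ y, C * (∫ s, |g s| * (Um s y ^ 2 / Aw n θ y ^ M)) ∂(mu α β) := by
        refine integral_mono ?_ (hprod.integral_prod_right.const_mul C) fun y => ?_
        · refine integrable_cont hα hβ (hdc _ ?_).continuousOn
          have : V η α β n (fun x => f.eval x) = fun y => (Vp η α β n (fun x => f.eval x)).eval y := by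
            ext y; rw [Vp_eval]
          rw [this]; fun_prop
        · have := hA y
          simp only
          rw [div_le_iff₀ (by positivity)]
          refine (hCS y).trans (le_of_eq ?_)
          rw [mul_assoc, ← integral_mul_const]
          congr 2; ext s; field_simp
    _ ≤ C * C * If := by
        rw [integral_const_mul, mul_assoc]
        exact mul_le_mul_of_nonneg_left hstep hC0


/-- complex exponential on the circle -/
def ez (t : ℝ) : ℂ := Complex.exp (t * Complex.I)

theorem ez_norm (t : ℝ) : ‖ez t‖ = 1 := Complex.norm_exp_ofReal_mul_I t
theorem ez_ne (t : ℝ) : ez t ≠ 0 := Complex.exp_ne_zero _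
theorem ez_pow (t : ℝ) (k : ℕ) : ez t ^ k = ez (k * t) := by
  unfold ez; rw [← Complex.exp_nat_mul]; congr 1; push_cast; ring
theorem ez_mul (s t : ℝ) : ez s * ez t = ez (s + t) := by
  unfold ez; rw [← Complex.exp_add]; congr 1; push_cast; ring
theorem ez_re (t : ℝ) : (ez t).re = Real.cos t := Complex.exp_ofReal_mul_I_re t
theorem ez_im (t : ℝ) : (ez t).im = Real.sin t := Complex.exp_ofReal_mul_I_im t

theorem ez_sub_sq (s t : ℝ) : ‖ez s - ez t‖ ^ 2 = 2 - 2 * Real.cos (s - t) := by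
  rw [Complex.sq_norm, Complex.normSq_apply]
  simp only [Complex.sub_re, Complex.sub_im, ez_re, ez_im]
  rw [Real.cos_sub]
  nlinarith [Real.sin_sq_add_cos_sq s, Real.sin_sq_add_cos_sq t]

theorem ez_sub_le (s t : ℝ) : ‖ez s - ez t‖ ≤ |s - t| := by
  refine abs_le_of_sq_le_sq' ?_ (abs_nonneg _) |>.2
  rw [ez_sub_sq, sq_abs]
  linarith [Real.one_sub_sq_div_two_le_cos (x := s - t)]

theorem ez_sub_ge (t t0 : ℝ) (h0 : 0 ≤ t0) (h1 : t0 ≤ Real.pi) (ht : |t| ≤ Real.pi) :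
    2 / Real.pi * |(|t|) - t0| ≤ ‖ez t - ez t0‖ := by
  refine abs_le_of_sq_le_sq' ?_ (norm_nonneg _) |>.2
  rw [ez_sub_sq]
  have e1 : Real.cos (t - t0) ≤ Real.cos (|t| - t0) := by
    rw [Real.cos_sub, Real.cos_sub, Real.cos_abs]
    have := Real.sin_nonneg_of_nonneg_of_le_pi h0 h1
    have h2 : Real.sin t ≤ Real.sin |t| := by
      rcases abs_cases t with ⟨h, _⟩ | ⟨h, hneg⟩
      · rw [h]
      · rw [h]
        have := Real.sin_nonneg_of_nonneg_of_le_pi (abs_nonneg t) ht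
        rw [h, Real.sin_neg] at this
        rw [Real.sin_neg]; linarith
    nlinarith
  set d := |(|t|) - t0| with hd
  have hdpi : d ≤ Real.pi := by
    rw [hd, abs_le]; constructor <;> linarith [abs_nonneg t]
  have hd0 : 0 ≤ d := abs_nonneg _
  have e2 : Real.cos (|t| - t0) = 1 - 2 * Real.sin (d / 2) ^ 2 := by
    rw [hd, ← Real.cos_abs (|t| - t0), ← hd, show d = 2 * (d / 2) by ring, Real.cos_two_mul]
    rw [show 2 * (d / 2) / 2 = d / 2 by ring]
    nlinarith [Real.sin_sq_add_cos_sq (d / 2)]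
  have e3 := Real.mul_le_sin (x := d / 2) (by linarith) (by linarith)
  have e4 : 0 ≤ 2 / Real.pi * (d / 2) := by positivity
  have e5 : (2 / Real.pi * (d / 2)) ^ 2 ≤ Real.sin (d / 2) ^ 2 := pow_le_pow_left₀ e4 e3 2
  have e6 : (2 / Real.pi * d) ^ 2 = 4 * (2 / Real.pi * (d / 2)) ^ 2 := by ring
  rw [e6]; linarith

open Polynomial in
/-- the lifted polynomial -/
def Pz (n : ℕ) (q : ℝ[X]) : ℂ[X] :=
  ∑ k ∈ Finset.range (n + 1), C ((q.coeff k : ℝ) : ℂ) * (X ^ (n - k) * (C (1 / 2) * (X ^ 2 + 1)) ^ k)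

open Polynomial in
theorem Pz_natDegree (n : ℕ) (q : ℝ[X]) : (Pz n q).natDegree ≤ 2 * n := by
  refine natDegree_sum_le_of_forall_le _ _ fun k hk => ?_
  refine (natDegree_C_mul_le _ _).trans ?_
  refine natDegree_mul_le.trans ?_
  have h1 : (C (1 / 2 : ℂ) * (X ^ 2 + 1)).natDegree ≤ 2 := by
    refine (natDegree_C_mul_le _ _).trans ?_
    compute_degree
  have h2 := natDegree_pow_le_of_le k h1
  rw [natDegree_X_pow]
  have := Finset.mem_range.1 hk
  omega

open Polynomial in
theorem Pz_norm (n : ℕ) (q : ℝ[X]) (hq : q.natDegree ≤ n) (t : ℝ) :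
    ‖(Pz n q).eval (ez t)‖ = |q.eval (Real.cos t)| := by
  have h1 : (1 / 2 : ℂ) * (ez t ^ 2 + 1) = ez t * (Real.cos t : ℂ) := by
    rw [Complex.ofReal_cos, Complex.cos, ← ez, show -(t:ℂ) * Complex.I = ((-t : ℝ) : ℂ) * Complex.I by push_cast; ring,
      ← ez]
    have : ez t * ez (-t) = 1 := by rw [ez_mul]; simp [ez]
    linear_combination (-1/2 : ℂ) * this
  have h2 : (Pz n q).eval (ez t) = ez t ^ n * ((q.eval (Real.cos t) : ℝ) : ℂ) := by
    rw [eval_eq_sum_range' (Nat.lt_succ_of_le hq)]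
    simp only [Pz, eval_finsetSum, eval_mul, eval_C, eval_pow, eval_X, eval_add, eval_one, h1]
    push_cast
    rw [Finset.mul_sum]
    refine Finset.sum_congr rfl fun k hk => ?_
    have : n - k + k = n := Nat.sub_add_cancel (Nat.lt_succ_iff.1 (Finset.mem_range.1 hk))
    conv_rhs => rw [← this, pow_add]
    ring
  rw [h2, norm_mul, norm_pow, ez_norm, one_pow, one_mul, Complex.norm_real, Real.norm_eq_abs]

open Polynomial in
/-- geometric kernel -/
def Gz (n : ℕ) (t0 : ℝ) : ℂ[X] :=
  ∑ k ∈ Finset.range n, C ((1 / n : ℂ) * ez (-t0) ^ k) * X ^ k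

open Polynomial in
theorem Gz_natDegree (n : ℕ) (t0 : ℝ) : (Gz n t0).natDegree ≤ n := by
  refine natDegree_sum_le_of_forall_le _ _ fun k hk => ?_
  refine (natDegree_C_mul_X_pow_le _ _).trans (Finset.mem_range.1 hk).le

open Polynomial in
theorem Gz_eval (n : ℕ) (t0 t : ℝ) :
    (Gz n t0).eval (ez t) = (1 / n : ℂ) * ∑ k ∈ Finset.range n, (ez (t - t0)) ^ k := by
  simp only [Gz, eval_finsetSum, eval_mul, eval_C, eval_pow, eval_X, Finset.mul_sum]
  refine Finset.sum_congr rfl fun k _ => ?_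
  rw [mul_assoc, ← mul_pow, ez_mul]
  ring_nf

theorem Gz_self (n : ℕ) (hn : 1 ≤ n) (t0 : ℝ) : (Gz n t0).eval (ez t0) = 1 := by
  have hn0 : (n : ℂ) ≠ 0 := by exact_mod_cast (by omega : n ≠ 0)
  rw [Gz_eval]; simp [ez, hn0]

theorem Gz_le_one (n : ℕ) (hn : 1 ≤ n) (t0 t : ℝ) : ‖(Gz n t0).eval (ez t)‖ ≤ 1 := by
  have hn0 : (0:ℝ) < n := by exact_mod_cast hn
  rw [Gz_eval, norm_mul]
  have h1 : ‖∑ k ∈ Finset.range n, (ez (t - t0)) ^ k‖ ≤ n := by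
    refine (norm_sum_le _ _).trans ?_
    simp [ez_norm]
  calc _ ≤ ‖(1 / n : ℂ)‖ * n := by gcongr
    _ = 1 := by simp; field_simp

theorem Gz_le (n : ℕ) (hn : 1 ≤ n) (t0 t : ℝ) (h0 : 0 ≤ t0) (h1 : t0 ≤ Real.pi) (ht : |t| ≤ Real.pi) :
    ‖(Gz n t0).eval (ez t)‖ * (1 + n * |(|t|) - t0|) ≤ 5 := by
  have hn0 : (0:ℝ) < n := by exact_mod_cast hn
  have h2 := Gz_le_one n hn t0 t
  have h3 : ‖(Gz n t0).eval (ez t)‖ * (n * ‖ez t - ez t0‖) ≤ 2 := by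
    have e1 : ‖ez t - ez t0‖ = ‖ez (t - t0) - 1‖ := by
      have : ez t - ez t0 = ez t0 * (ez (t - t0) - 1) := by
        rw [mul_sub, ez_mul]; ring_nf
      rw [this, norm_mul, ez_norm, one_mul]
    rw [e1, Gz_eval, norm_mul]
    have e2 := geom_sum_mul (ez (t - t0)) n
    have e3 : ‖∑ k ∈ Finset.range n, (ez (t - t0)) ^ k‖ * ‖ez (t - t0) - 1‖ ≤ 2 := by
      rw [← norm_mul, e2]
      refine (norm_sub_le _ _).trans ?_
      rw [norm_pow, ez_norm]; norm_num
    have e4 : ‖(1 / n : ℂ)‖ * n = 1 := by simp; field_simp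
    calc _ = (‖(1 / n : ℂ)‖ * n) * (‖∑ k ∈ Finset.range n, (ez (t - t0)) ^ k‖ * ‖ez (t - t0) - 1‖) := by ring
      _ ≤ 2 := by rw [e4, one_mul]; exact e3
  have h4 := ez_sub_ge t t0 h0 h1 ht
  set G := ‖(Gz n t0).eval (ez t)‖ with hG
  have hG0 : 0 ≤ G := norm_nonneg _
  have h5 : G * (n * (2 / Real.pi * |(|t|) - t0|)) ≤ 2 := le_trans (by gcongr) h3
  have h6 : G * (n * |(|t|) - t0|) ≤ Real.pi := by
    have e : G * (n * (2 / Real.pi * |(|t|) - t0|)) = G * (n * |(|t|) - t0|) * (2 / Real.pi) := by ring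
    rw [e, ← le_div_iff₀ (by positivity)] at h5
    refine h5.trans (le_of_eq ?_)
    field_simp
  have := Real.pi_lt_four
  linarith

open Polynomial in
theorem poly_lip (T : ℂ[X]) (D : ℕ) (hD : T.natDegree ≤ D) (s t : ℝ) :
    ‖T.eval (ez s) - T.eval (ez t)‖ ^ 2 ≤
      (s - t) ^ 2 * ((∑ i ∈ T.support, ‖T.coeff i‖ ^ 2) * (D:ℝ) ^ 3) := by
  have e1 : T.eval (ez s) - T.eval (ez t) =
      ∑ i ∈ T.support, T.coeff i * (ez (i * s) - ez (i * t)) := by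
    rw [eval_eq_sum, eval_eq_sum, Polynomial.sum, Polynomial.sum, ← Finset.sum_sub_distrib]
    refine Finset.sum_congr rfl fun i _ => ?_
    rw [ez_pow, ez_pow]; ring
  have e2 : ‖T.eval (ez s) - T.eval (ez t)‖ ≤ |s - t| * ∑ i ∈ T.support, ‖T.coeff i‖ * i := by
    rw [e1, Finset.mul_sum]
    refine (norm_sum_le _ _).trans (Finset.sum_le_sum fun i _ => ?_)
    rw [norm_mul]
    have := ez_sub_le (i * s) (i * t)
    rw [← mul_sub, abs_mul, Nat.abs_cast] at this
    calc _ ≤ ‖T.coeff i‖ * (i * |s - t|) := by gcongr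
      _ = _ := by ring
  have e3 := Finset.sum_mul_sq_le_sq_mul_sq T.support (fun i => ‖T.coeff i‖) (fun i => (i:ℝ))
  have e4 : ∑ i ∈ T.support, (i:ℝ) ^ 2 ≤ (D:ℝ) ^ 3 := by
    calc ∑ i ∈ T.support, (i:ℝ) ^ 2 ≤ ∑ i ∈ Finset.range (D + 1), (i:ℝ) ^ 2 := by
          refine Finset.sum_le_sum_of_subset_of_nonneg (fun i hi => ?_) fun _ _ _ => by positivity
          rw [Finset.mem_range]
          exact Nat.lt_succ_of_le ((le_natDegree_of_mem_supp i hi).trans hD)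
      _ = ∑ i ∈ Finset.range D, ((i + 1 : ℕ):ℝ) ^ 2 := by rw [Finset.sum_range_succ']; simp
      _ ≤ ∑ i ∈ Finset.range D, (D:ℝ) ^ 2 := by
          refine Finset.sum_le_sum fun i hi => ?_
          have : i + 1 ≤ D := Finset.mem_range.1 hi
          gcongr
      _ = (D:ℝ) ^ 3 := by simp; ring
  calc _ ≤ (|s - t| * ∑ i ∈ T.support, ‖T.coeff i‖ * i) ^ 2 := pow_le_pow_left₀ (norm_nonneg _) e2 2
    _ = (s - t) ^ 2 * (∑ i ∈ T.support, ‖T.coeff i‖ * i) ^ 2 := by rw [mul_pow, sq_abs]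
    _ ≤ (s - t) ^ 2 * ((∑ i ∈ T.support, ‖T.coeff i‖ ^ 2) * ∑ i ∈ T.support, (i:ℝ) ^ 2) := by gcongr
    _ ≤ _ := by gcongr

theorem int_cauchy (n : ℕ) (hn : 1 ≤ n) (b : ℝ) :
    Integrable (fun t : ℝ => (1 + (n * (t + b)) ^ 2)⁻¹) ∧
    ∫ t : ℝ, (1 + (n * (t + b)) ^ 2)⁻¹ = Real.pi / n := by
  have hn0 : (0:ℝ) < n := by exact_mod_cast hn
  constructor
  · have h1 := (integrable_inv_one_add_sq.comp_mul_left' hn0.ne')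
    exact h1.comp_add_right b
  · have h1 := integral_add_right_eq_self (μ := volume) (fun t : ℝ => (1 + (n * t) ^ 2)⁻¹) b
    rw [h1, Measure.integral_comp_mul_left (fun t : ℝ => (1 + t ^ 2)⁻¹), integral_univ_inv_one_add_sq,
      abs_of_pos (by positivity)]
    simp; ring

open Polynomial in
theorem parseval_bound (T : ℂ[X]) (n : ℕ) (hn : 1 ≤ n) (t0 B : ℝ)
    (h : ∀ t, |t| ≤ Real.pi → ‖T.eval (ez t)‖ * (1 + n * |(|t|) - t0|) ≤ B) :
    ∑ i ∈ T.support, ‖T.coeff i‖ ^ 2 ≤ B ^ 2 / n := by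
  have hn0 : (0:ℝ) < n := by exact_mod_cast hn
  rw [sum_sq_norm_coeff_eq_circleAverage, Real.circleAverage_eq_integral_add (-Real.pi),
    intervalIntegral.integral_comp_add_right (fun θ => ‖T.eval (circleMap 0 1 θ)‖ ^ 2)]
  have hcm : ∀ t, circleMap 0 1 t = ez t := by intro t; simp [circleMap, ez]
  simp only [hcm]
  have hpt : ∀ t ∈ Icc (-Real.pi) Real.pi, ‖T.eval (ez t)‖ ^ 2 ≤
      B ^ 2 * ((1 + (n * (t + -t0)) ^ 2)⁻¹ + (1 + (n * (t + t0)) ^ 2)⁻¹) := by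
    intro t ht
    have h1 := h t (abs_le.2 ht)
    set d := |(|t|) - t0| with hd
    have hd0 : 0 ≤ d := abs_nonneg _
    have h2 : ‖T.eval (ez t)‖ ^ 2 * (1 + (n * d) ^ 2) ≤ B ^ 2 := by
      calc _ ≤ ‖T.eval (ez t)‖ ^ 2 * (1 + n * d) ^ 2 := by
            gcongr
            nlinarith [mul_nonneg hn0.le hd0]
        _ = (‖T.eval (ez t)‖ * (1 + n * d)) ^ 2 := by ring
        _ ≤ B ^ 2 := by gcongr
    rw [← le_div_iff₀ (by positivity), div_eq_mul_inv] at h2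
    refine h2.trans (mul_le_mul_of_nonneg_left ?_ (sq_nonneg B))
    have p1 : 0 ≤ (1 + (n * (t + -t0)) ^ 2)⁻¹ := by positivity
    have p2 : 0 ≤ (1 + (n * (t + t0)) ^ 2)⁻¹ := by positivity
    have e : (n * d) ^ 2 = (n:ℝ) ^ 2 * (|t| - t0) ^ 2 := by rw [mul_pow, hd, sq_abs]
    rcases abs_cases t with ⟨h3, _⟩ | ⟨h3, _⟩
    · have : (n * d) ^ 2 = (n * (t + -t0)) ^ 2 := by rw [e, h3]; ring
      rw [this]; linarith
    · have : (n * d) ^ 2 = (n * (t + t0)) ^ 2 := by rw [e, h3]; ring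
      rw [this]; linarith
  obtain ⟨i1, v1⟩ := int_cauchy n hn (-t0)
  obtain ⟨i2, v2⟩ := int_cauchy n hn t0
  have ii := (i1.add i2).const_mul (B ^ 2)
  have hpi := Real.pi_pos
  have hTc : Continuous (fun t => ‖T.eval (ez t)‖ ^ 2) := by
    unfold ez; fun_prop
  rw [show (0:ℝ) + -Real.pi = -Real.pi by ring, show 2 * Real.pi + -Real.pi = Real.pi by ring,
    intervalIntegral.integral_of_le (by linarith), smul_eq_mul]
  have hI : ∫ t in Ioc (-Real.pi) Real.pi, ‖T.eval (ez t)‖ ^ 2 ≤ B ^ 2 * (Real.pi / n + Real.pi / n) := by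
    calc _ ≤ ∫ t in Ioc (-Real.pi) Real.pi,
          B ^ 2 * ((1 + (n * (t + -t0)) ^ 2)⁻¹ + (1 + (n * (t + t0)) ^ 2)⁻¹) := by
          refine setIntegral_mono_on (hTc.integrableOn_Ioc) ii.integrableOn measurableSet_Ioc ?_
          intro t ht
          exact hpt t (Ioc_subset_Icc_self ht)
      _ ≤ ∫ t : ℝ, B ^ 2 * ((1 + (n * (t + -t0)) ^ 2)⁻¹ + (1 + (n * (t + t0)) ^ 2)⁻¹) := by
          refine setIntegral_le_integral ii ?_
          filter_upwards with t
          simp only [Pi.zero_apply]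
          positivity
      _ = _ := by rw [integral_const_mul, integral_add i1 i2, v1, v2]
  calc _ ≤ (2 * Real.pi)⁻¹ * (B ^ 2 * (Real.pi / n + Real.pi / n)) := by gcongr
    _ = _ := by field_simp; ring

/-- Lemma N: a polynomial stays large near a weighted maximum. -/
theorem lemmaN (K : ℕ) : ∃ c : ℝ, 0 < c ∧ c ≤ 1 ∧ ∀ n : ℕ, 1 ≤ n → ∀ q : Polynomial ℝ,
    q.natDegree ≤ 2 * n → ∀ t0 : ℝ, 0 ≤ t0 → t0 ≤ Real.pi →
    (∀ t, 0 ≤ t → t ≤ Real.pi →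
      |q.eval (Real.cos t)| ≤ |q.eval (Real.cos t0)| * (1 + n * |t - t0|) ^ K) →
    ∀ t, |t - t0| ≤ c / n →
      |q.eval (Real.cos t0)| / 2 ≤ |q.eval (Real.cos t)| := by
  set c : ℝ := 1 / (2 * 5 ^ (K + 1) * ((K:ℝ) + 5) ^ 2) with hc
  have hcp : 0 < c := by positivity
  refine ⟨c, hcp, ?_, fun n hn q hq t0 h0 h1 hb t ht => ?_⟩
  · rw [hc, div_le_one (by positivity)]
    have : (1:ℝ) ≤ 5 ^ (K + 1) := one_le_pow₀ (by norm_num)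
    have h2 : (1:ℝ) ≤ ((K:ℝ) + 5) ^ 2 := one_le_pow₀ (by linarith [show (0:ℝ) ≤ K by positivity])
    nlinarith
  have hn0 : (0:ℝ) < n := by exact_mod_cast hn
  set Z := |q.eval (Real.cos t0)| with hZ
  have hZ0 : 0 ≤ Z := abs_nonneg _
  set T : Polynomial ℂ := Pz (2 * n) q * Gz n t0 ^ (K + 1) with hT
  have hTd : T.natDegree ≤ n * (K + 5) := by
    refine Polynomial.natDegree_mul_le.trans ?_
    have := Polynomial.natDegree_pow_le_of_le (K + 1) (Gz_natDegree n t0)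
    have h2 := Pz_natDegree (2 * n) q
    nlinarith
  have hTn : ∀ t, ‖T.eval (ez t)‖ = |q.eval (Real.cos t)| * ‖(Gz n t0).eval (ez t)‖ ^ (K + 1) := by
    intro t
    rw [hT, Polynomial.eval_mul, Polynomial.eval_pow, norm_mul, norm_pow, Pz_norm _ _ hq]
  have hT0 : ‖T.eval (ez t0)‖ = Z := by rw [hTn, Gz_self n hn]; simp [hZ]
  have hTle : ‖T.eval (ez t)‖ ≤ |q.eval (Real.cos t)| := by
    rw [hTn]
    exact mul_le_of_le_one_right (abs_nonneg _) (pow_le_one₀ (norm_nonneg _) (Gz_le_one n hn t0 t))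
  have hpar := parseval_bound T n hn t0 (Z * 5 ^ (K + 1)) (by
    intro s hs
    rw [hTn]
    have e1 := hb |s| (abs_nonneg s) hs
    rw [Real.cos_abs] at e1
    have e2 := Gz_le n hn t0 s h0 h1 hs
    set G := ‖(Gz n t0).eval (ez s)‖
    have hG : 0 ≤ G := norm_nonneg _
    set d := 1 + (n:ℝ) * |(|s|) - t0|
    have hd : 0 ≤ d := by positivity
    calc _ ≤ Z * d ^ K * G ^ (K + 1) * d := by gcongr
      _ = Z * (G * d) ^ (K + 1) := by ring
      _ ≤ _ := by gcongr)
  have hlip := poly_lip T (n * (K + 5)) hTd t t0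
  have hfin : ‖T.eval (ez t) - T.eval (ez t0)‖ ^ 2 ≤ (Z / 2) ^ 2 := by
    refine hlip.trans ?_
    have e1 : (t - t0) ^ 2 ≤ (c / n) ^ 2 := by
      rw [← sq_abs]; exact pow_le_pow_left₀ (abs_nonneg _) ht 2
    calc _ ≤ (c / n) ^ 2 * ((Z * 5 ^ (K + 1)) ^ 2 / n * ((n * (K + 5) : ℕ) : ℝ) ^ 3) := by gcongr
      _ = (Z / 2) ^ 2 * (1 / ((K:ℝ) + 5)) := by
          rw [hc]; push_cast; field_simp
      _ ≤ (Z / 2) ^ 2 * 1 := by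
          gcongr
          rw [div_le_one (by positivity)]
          linarith [show (0:ℝ) ≤ K by positivity]
      _ = _ := by ring
  have h3 := (abs_le_of_sq_le_sq' hfin (by positivity)).2
  have h4 := norm_sub_norm_le (T.eval (ez t0)) (T.eval (ez t))
  rw [norm_sub_rev, hT0] at h4
  linarith


/-- comparison of powers -/
theorem rp {κ x y : ℝ} (a : ℝ) (hκ : 0 < κ) (hx : 0 < x) (hy : 0 < y) (h : κ * y ≤ x)
    (h' : κ * x ≤ y) : x ^ a ≤ (1 / κ) ^ |a| * y ^ a := by
  rcases le_total 0 a with ha | ha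
  · rw [abs_of_nonneg ha, ← Real.mul_rpow (by positivity) hy.le]
    refine Real.rpow_le_rpow hx.le ?_ ha
    rw [one_div, ← div_eq_inv_mul, le_div_iff₀ hκ]; linarith
  · rw [abs_of_nonpos ha, one_div, Real.inv_rpow hκ.le, Real.rpow_neg hκ.le, inv_inv,
      ← Real.mul_rpow hκ.le hy.le]
    exact Real.rpow_le_rpow_of_nonpos (by positivity) h ha

def wt (α β t : ℝ) : ℝ := w α β (Real.cos t) * Real.sin t

theorem cos_image : Real.cos '' Ioo 0 Real.pi = Ioo (-1 : ℝ) 1 := by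
  ext x; constructor
  · rintro ⟨t, ht, rfl⟩
    constructor
    · rw [← Real.cos_pi]; exact Real.cos_lt_cos_of_nonneg_of_le_pi ht.1.le le_rfl ht.2
    · rw [← Real.cos_zero]; exact Real.cos_lt_cos_of_nonneg_of_le_pi le_rfl ht.2.le ht.1
  · intro hx
    exact ⟨Real.arccos x, ⟨Real.arccos_pos.2 hx.2, Real.arccos_lt_pi.2 hx.1⟩,
      Real.cos_arccos hx.1.le hx.2.le⟩

theorem cos_inj : InjOn Real.cos (Ioo 0 Real.pi) :=
  Real.injOn_cos.mono Ioo_subset_Icc_self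

theorem mu_cos (α β : ℝ) (F : ℝ → ℝ) :
    ∫ x, F x ∂(mu α β) = ∫ t in Ioo 0 Real.pi, F (Real.cos t) * wt α β t := by
  rw [integral_mu, ← cos_image, integral_image_eq_integral_abs_deriv_smul measurableSet_Ioo
    (fun t _ => (Real.hasDerivAt_cos t).hasDerivWithinAt) cos_inj]
  refine setIntegral_congr_fun measurableSet_Ioo fun t ht => ?_
  have := Real.sin_pos_of_mem_Ioo ht
  simp only [wt, smul_eq_mul, abs_neg, abs_of_pos this]; ring

theorem mu_cos_int (α β : ℝ) (F : ℝ → ℝ) (hF : Integrable F (mu α β)) :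
    IntegrableOn (fun t => F (Real.cos t) * wt α β t) (Ioo 0 Real.pi) := by
  rw [integrable_mu_iff, ← cos_image, integrableOn_image_iff_integrableOn_abs_deriv_smul
    measurableSet_Ioo (fun t _ => (Real.hasDerivAt_cos t).hasDerivWithinAt) cos_inj] at hF
  refine hF.congr_fun (fun t ht => ?_) measurableSet_Ioo
  have := Real.sin_pos_of_mem_Ioo ht
  simp only [wt, smul_eq_mul, abs_neg, abs_of_pos this]; ring

theorem half_sin {t : ℝ} (ht : t ∈ Ioo 0 Real.pi) :
    0 < Real.sin (t / 2) ∧ 1 / Real.pi * t ≤ Real.sin (t / 2) ∧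
      1 / Real.pi * Real.sin (t / 2) ≤ t := by
  have hp := Real.pi_gt_three
  have h1 := Real.mul_le_sin (x := t / 2) (by linarith [ht.1]) (by linarith [ht.2])
  have h2 : 1 / Real.pi * t = 2 / Real.pi * (t / 2) := by ring
  have h3 : 0 < 1 / Real.pi * t := by have := ht.1; positivity
  have h4 := Real.sin_lt (x := t / 2) (by linarith [ht.1])
  refine ⟨by linarith, by linarith, ?_⟩
  have h5 : 1 / Real.pi ≤ 1 := by rw [div_le_one (by linarith)]; linarith
  have : 1 / Real.pi * Real.sin (t / 2) ≤ 1 * Real.sin (t / 2) :=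
    mul_le_mul_of_nonneg_right h5 (by linarith)
  linarith [ht.1]

theorem wt_formula (α β : ℝ) {t : ℝ} (ht : t ∈ Ioo 0 Real.pi) :
    wt α β t = 2 ^ (α + β + 1) * Real.sin (t / 2) ^ (2 * α + 1) *
      Real.sin ((Real.pi - t) / 2) ^ (2 * β + 1) := by
  have h1 := (half_sin ht).1
  have h2 := (half_sin (t := Real.pi - t) ⟨by linarith [ht.2], by linarith [ht.1]⟩).1
  have hc : Real.cos (t / 2) = Real.sin ((Real.pi - t) / 2) := by
    rw [← Real.sin_pi_div_two_sub]; ring_nf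
  set S := Real.sin (t / 2)
  set T := Real.sin ((Real.pi - t) / 2)
  have hsq : S ^ 2 + T ^ 2 = 1 := by rw [← hc]; exact Real.sin_sq_add_cos_sq _
  have e0 : Real.cos t = 2 * T ^ 2 - 1 := by
    rw [← hc, ← Real.cos_two_mul]; ring_nf
  have e1 : 1 - Real.cos t = 2 * S ^ 2 := by rw [e0]; linarith
  have e2 : 1 + Real.cos t = 2 * T ^ 2 := by rw [e0]; ring
  have e3 : Real.sin t = 2 * S * T := by
    rw [← hc, ← Real.sin_two_mul]; ring_nf
  unfold wt w
  rw [e1, e2, e3, Real.mul_rpow (by norm_num) (by positivity), Real.mul_rpow (by norm_num) (by positivity),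
    ← Real.rpow_natCast S 2, ← Real.rpow_natCast T 2, ← Real.rpow_mul h1.le, ← Real.rpow_mul h2.le,
    Real.rpow_add (by norm_num), Real.rpow_add (by norm_num), Real.rpow_add h1, Real.rpow_add h2]
  simp only [Real.rpow_one, Nat.cast_ofNat]; ring

theorem wt_bounds (α β : ℝ) : ∃ c, 0 < c ∧ ∀ t ∈ Ioo 0 Real.pi,
    wt α β t ≤ c * (t ^ (2 * α + 1) * (Real.pi - t) ^ (2 * β + 1)) ∧
    t ^ (2 * α + 1) * (Real.pi - t) ^ (2 * β + 1) ≤ c * wt α β t := by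
  have hpi := Real.pi_pos
  set A := Real.pi ^ |2 * α + 1| with hA
  set B := Real.pi ^ |2 * β + 1| with hB
  have hA0 : 0 < A := by positivity
  have hB0 : 0 < B := by positivity
  set D := (2:ℝ) ^ (α + β + 1) with hD
  have hD0 : 0 < D := by positivity
  refine ⟨D * A * B + A * B / D, by positivity, fun t ht => ?_⟩
  have ht' : Real.pi - t ∈ Ioo 0 Real.pi := ⟨by linarith [ht.2], by linarith [ht.1]⟩
  obtain ⟨s1, s2, s3⟩ := half_sin ht
  obtain ⟨r1, r2, r3⟩ := half_sin ht'
  rw [wt_formula α β ht]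
  have a1 := rp (2 * α + 1) (by positivity : 0 < 1 / Real.pi) s1 ht.1 s2 s3
  have a2 := rp (2 * α + 1) (by positivity : 0 < 1 / Real.pi) ht.1 s1 s3 s2
  have b1 := rp (2 * β + 1) (by positivity : 0 < 1 / Real.pi) r1 ht'.1 r2 r3
  have b2 := rp (2 * β + 1) (by positivity : 0 < 1 / Real.pi) ht'.1 r1 r3 r2
  rw [one_div_one_div] at a1 a2 b1 b2
  set S := Real.sin (t / 2) ^ (2 * α + 1)
  set T := Real.sin ((Real.pi - t) / 2) ^ (2 * β + 1)
  have hS : 0 < S := by positivity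
  have hT : 0 < T := by positivity
  have h1 := ht.1
  have h2 := ht'.1
  set x := t ^ (2 * α + 1)
  set y := (Real.pi - t) ^ (2 * β + 1)
  have hx : 0 < x := by positivity
  have hy : 0 < y := by positivity
  constructor
  · calc D * S * T ≤ D * (A * x) * (B * y) := by gcongr
      _ = (D * A * B) * (x * y) := by ring
      _ ≤ _ := by
        gcongr
        have : 0 < A * B / D := by positivity
        linarith
  · calc x * y ≤ (A * S) * (B * T) := by gcongr
      _ = (A * B / D) * (D * S * T) := by field_simp
      _ ≤ _ := by
        gcongr
        have : 0 < D * A * B := by positivity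
        linarith

/-- local singular part -/
def hs (a s : ℝ) : ℝ := (Ioo (0:ℝ) 1).indicator (fun s => s ^ a) s

theorem hs_nonneg (a s : ℝ) : 0 ≤ hs a s := by
  unfold hs
  refine indicator_nonneg (fun s h => ?_) s
  have := h.1
  positivity

theorem hs_int {a : ℝ} (ha : -1 < a) : Integrable (hs a) := by
  unfold hs
  rw [integrable_indicator_iff measurableSet_Ioo]
  exact (intervalIntegrable_iff_integrableOn_Ioo_of_le (by norm_num)).1
    (intervalIntegral.intervalIntegrable_rpow' ha)

/-- majorant -/
def Gm (a b : ℝ) (n : ℕ) (θ t : ℝ) : ℝ :=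
  (1 + (n * (t + -θ)) ^ 2)⁻¹ + (hs a (n * t) + hs b (n * (Real.pi - t)))

theorem Gm_int {a b : ℝ} (ha : -1 < a) (hb : -1 < b) (n : ℕ) (hn : 1 ≤ n) (θ : ℝ) :
    Integrable (Gm a b n θ) ∧
    ∫ t, Gm a b n θ t = (Real.pi + (∫ s, hs a s) + ∫ s, hs b s) / n := by
  have hn0 : (0:ℝ) < n := by exact_mod_cast hn
  obtain ⟨i1, v1⟩ := int_cauchy n hn (-θ)
  have i2 : Integrable (fun t : ℝ => hs a (n * t)) := (hs_int ha).comp_mul_left' hn0.ne'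
  have i3' : Integrable (fun t : ℝ => hs b (n * t)) := (hs_int hb).comp_mul_left' hn0.ne'
  have i3 : Integrable (fun t : ℝ => hs b (n * (Real.pi - t))) := i3'.comp_sub_left Real.pi
  have v2 : ∫ t : ℝ, hs a (n * t) = (∫ s, hs a s) / n := by
    rw [Measure.integral_comp_mul_left (fun t : ℝ => hs a t), abs_of_pos (by positivity), smul_eq_mul]
    ring
  have v3 : ∫ t : ℝ, hs b (n * (Real.pi - t)) = (∫ s, hs b s) / n := by
    rw [integral_sub_left_eq_self (fun t : ℝ => hs b (n * t)) volume Real.pi,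
      Measure.integral_comp_mul_left (fun t : ℝ => hs b t), abs_of_pos (by positivity), smul_eq_mul]
    ring
  have i23 : Integrable (fun t : ℝ => hs a (n * t) + hs b (n * (Real.pi - t))) := i2.add i3
  refine ⟨i1.add i23, ?_⟩
  unfold Gm
  rw [integral_add i1 i23, integral_add i2 i3, v1, v2, v3]; ring

theorem phi_le (a : ℝ) {s : ℝ} (hs0 : 0 < s) : (s / (1 + s)) ^ a ≤ 2 ^ |a| * (1 + hs a s) := by
  have h2 : (1 / (1 / 2 : ℝ)) = 2 := by norm_num
  by_cases h : s < 1
  · have := rp (κ := 1 / 2) (x := s / (1 + s)) (y := s) a (by norm_num) (by positivity) hs0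
      (by rw [le_div_iff₀ (by positivity)]; nlinarith)
      (by have : s / (1 + s) ≤ s := div_le_self hs0.le (by linarith)
          have : 0 < s / (1 + s) := by positivity
          linarith)
    rw [h2] at this
    refine this.trans ?_
    have hm : s ∈ Ioo (0:ℝ) 1 := ⟨hs0, h⟩
    have e : hs a s = s ^ a := by unfold hs; exact indicator_of_mem hm _
    rw [e]; gcongr; linarith
  · push Not at h
    have := rp (κ := 1 / 2) (x := s / (1 + s)) (y := 1) a (by norm_num) (by positivity) one_pos
      (by rw [le_div_iff₀ (by positivity)]; linarith)
      (by have : s / (1 + s) ≤ 1 := by rw [div_le_one (by positivity)]; linarith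
          linarith)
    rw [h2, Real.one_rpow] at this
    refine this.trans ?_
    have := hs_nonneg a s
    gcongr; linarith

theorem pow_split (a : ℝ) (n : ℕ) (hn : 1 ≤ n) {t θ : ℝ} (ht : 0 < t) (hθ : 0 ≤ θ) :
    t ^ a ≤ (1 + n * |t - θ|) ^ |a| * (θ + 1 / n) ^ a * (2 ^ |a| * (1 + hs a (n * t))) := by
  have hn0 : (0:ℝ) < n := by exact_mod_cast hn
  have e : t = (t + 1 / n) * (n * t / (1 + n * t)) := by field_simp; ring
  conv_lhs => rw [e]
  rw [Real.mul_rpow (by positivity) (by positivity)]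
  have h1 := phi_le a (s := n * t) (by positivity)
  set d := 1 + (n:ℝ) * |t - θ| with hd
  have hd0 : 0 < d := by positivity
  have h2 : ∀ x y : ℝ, 0 ≤ x → 0 ≤ y → y + 1 / n ≤ (1 + n * |x - y|) * (x + 1 / n) := by
    intro x y hx hy
    have : (1 + n * |x - y|) * (x + 1 / n) = x + 1 / n + |x - y| + n * |x - y| * x := by
      field_simp; ring
    rw [this]
    have h3 : y - x ≤ |x - y| := by rw [abs_sub_comm]; exact le_abs_self _
    have h4 : 0 ≤ n * |x - y| * x := by positivity
    linarith
  have h3 := rp (κ := 1 / d) (x := t + 1 / n) (y := θ + 1 / n) a (by positivity) (by positivity)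
    (by positivity)
    (by rw [one_div, ← div_eq_inv_mul, div_le_iff₀ hd0, mul_comm]; exact h2 t θ ht.le hθ)
    (by rw [one_div, ← div_eq_inv_mul, div_le_iff₀ hd0, mul_comm, hd, abs_sub_comm]; exact h2 θ t hθ ht.le)
  rw [one_div_one_div] at h3
  gcongr

/-- The local comparison quantity. -/
def L0 (a b : ℝ) (n : ℕ) (θ : ℝ) : ℝ := (θ + 1 / n) ^ a * (Real.pi - θ + 1 / n) ^ b

theorem L0_pos (a b : ℝ) (n : ℕ) (hn : 1 ≤ n) {θ : ℝ} (h0 : 0 ≤ θ) (h1 : θ ≤ Real.pi) :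
    0 < L0 a b n θ := by
  have hn0 : (0:ℝ) < n := by exact_mod_cast hn
  unfold L0
  have : 0 ≤ Real.pi - θ := by linarith
  positivity

theorem upper_pt (a b : ℝ) (A : ℕ) (hA : |a| + |b| ≤ A) (n : ℕ) (hn : 1 ≤ n) {t θ : ℝ}
    (ht : t ∈ Ioo 0 Real.pi) (h0 : 0 ≤ θ) (h1 : θ ≤ Real.pi) :
    t ^ a * (Real.pi - t) ^ b / (1 + n * |t - θ|) ^ (A + 2) ≤
      2 ^ |a| * 2 ^ |b| * L0 a b n θ * Gm a b n θ t := by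
  have hn0 : (1:ℝ) ≤ n := by exact_mod_cast hn
  have ht1 := ht.1
  have ht2 : 0 < Real.pi - t := by linarith [ht.2]
  have e1 := pow_split a n hn ht1 h0
  have e2 := pow_split b n hn (t := Real.pi - t) (θ := Real.pi - θ) ht2 (by linarith)
  rw [show |Real.pi - t - (Real.pi - θ)| = |t - θ| by rw [abs_sub_comm]; ring_nf] at e2
  set d := 1 + (n:ℝ) * |t - θ| with hd
  have hd1 : 1 ≤ d := by
    rw [hd]; have : 0 ≤ (n:ℝ) * |t - θ| := by positivity
    linarith
  have hd0 : 0 < d := by linarith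
  have ha := hs_nonneg a (n * t)
  have hb := hs_nonneg b (n * (Real.pi - t))
  have hz : hs a (n * t) * hs b (n * (Real.pi - t)) = 0 := by
    by_cases h : n * t < 1
    · have : ¬ (n * (Real.pi - t) < 1) := by
        have := Real.pi_gt_three
        nlinarith
      have : hs b (n * (Real.pi - t)) = 0 := indicator_of_notMem (fun h => this h.2) _
      rw [this, mul_zero]
    · have : hs a (n * t) = 0 := indicator_of_notMem (fun h' => h h'.2) _
      rw [this, zero_mul]
  unfold Gm
  set u := hs a (n * t)
  set v := hs b (n * (Real.pi - t))
  have hL : 0 < L0 a b n θ := L0_pos a b n hn h0 h1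
  have hpow : d ^ |a| * d ^ |b| ≤ d ^ A := by
    rw [← Real.rpow_add hd0, ← Real.rpow_natCast]
    exact Real.rpow_le_rpow_of_exponent_le hd1 hA
  have hdd : (1 + (n * (t + -θ)) ^ 2) ≤ d ^ 2 := by
    have : (n * (t + -θ)) ^ 2 = (n * |t - θ|) ^ 2 := by rw [mul_pow, mul_pow, sq_abs]; ring
    rw [this, hd]
    have : 0 ≤ (n:ℝ) * |t - θ| := by positivity
    nlinarith
  have hθ1 : 0 ≤ Real.pi - θ := by linarith
  calc t ^ a * (Real.pi - t) ^ b / d ^ (A + 2)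
      ≤ (d ^ |a| * (θ + 1 / n) ^ a * (2 ^ |a| * (1 + u))) *
        (d ^ |b| * (Real.pi - θ + 1 / n) ^ b * (2 ^ |b| * (1 + v))) / d ^ (A + 2) := by gcongr
    _ = (d ^ |a| * d ^ |b|) * (2 ^ |a| * 2 ^ |b| * L0 a b n θ * (1 + u + v + u * v)) / d ^ (A + 2) := by
        unfold L0; ring
    _ ≤ d ^ A * (2 ^ |a| * 2 ^ |b| * L0 a b n θ * (1 + u + v + u * v)) / d ^ (A + 2) := by
        rw [hz]; gcongr
    _ = 2 ^ |a| * 2 ^ |b| * L0 a b n θ * ((1 + u + v) / d ^ 2) := by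
        rw [hz, pow_add]; field_simp; ring
    _ ≤ _ := by
        gcongr
        rw [add_div, add_div, add_assoc]
        have hd2 : 1 ≤ d ^ 2 := one_le_pow₀ hd1
        refine add_le_add ?_ (add_le_add (div_le_self ha hd2) (div_le_self hb hd2))
        rw [one_div]
        exact inv_anti₀ (by positivity) hdd

theorem exists_I (c : ℝ) (hc : 0 < c) (hc1 : c ≤ 1) (n : ℕ) (hn : 1 ≤ n) (t0 : ℝ) (h0 : 0 ≤ t0)
    (h1 : t0 ≤ Real.pi) : ∃ x y, x ≤ y ∧ y - x = c / (2 * n) ∧ ∀ t ∈ Icc x y,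
      t ∈ Ioo 0 Real.pi ∧ |t - t0| ≤ c / n ∧ c / 10 * (t0 + 1 / n) ≤ t ∧ t ≤ t0 + 1 / n ∧
      c / 10 * (Real.pi - t0 + 1 / n) ≤ Real.pi - t ∧ Real.pi - t ≤ Real.pi - t0 + 1 / n := by
  have hn0 : (1:ℝ) ≤ n := by exact_mod_cast hn
  have e1 : c / (2 * n) = c / 2 * (1 / n) := by ring
  have e2 : c / n = c * (1 / n) := by ring
  rw [e1, e2]
  have hm1 : 1 / (n:ℝ) ≤ 1 := by rw [div_le_one (by linarith)]; exact hn0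
  have hm0 : 0 < 1 / (n:ℝ) := by positivity
  set m := 1 / (n:ℝ)
  have hp3 := Real.pi_gt_three
  have hp4 := Real.pi_lt_four
  have hcm : c * m ≤ m := by nlinarith
  have hcm0 : 0 < c * m := by positivity
  have hcm1 : c * m ≤ c := by nlinarith
  rcases le_total t0 (Real.pi / 2) with h | h
  · refine ⟨t0 + c / 2 * m, t0 + c * m, by linarith, by ring, fun t ht => ?_⟩
    have k1 := ht.1
    have k2 := ht.2
    have f1 : c * t0 ≤ t0 := by nlinarith
    have f2 : c * (Real.pi - t0) ≤ Real.pi - t0 := by nlinarith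
    refine ⟨⟨by linarith, by linarith⟩, ?_, ?_, by linarith, ?_, by linarith⟩
    · rw [abs_le]; constructor <;> linarith
    · nlinarith
    · nlinarith
  · refine ⟨t0 - c * m, t0 - c / 2 * m, by linarith, by ring, fun t ht => ?_⟩
    have k1 := ht.1
    have k2 := ht.2
    have f1 : c * t0 ≤ t0 := by nlinarith
    have f2 : c * (Real.pi - t0) ≤ Real.pi - t0 := by nlinarith
    refine ⟨⟨by linarith, by linarith⟩, ?_, ?_, by linarith, ?_, by linarith⟩
    · rw [abs_le]; constructor <;> linarith
    · nlinarith
    · nlinarith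


theorem Aw_bounds (n : ℕ) {t θ : ℝ} (h0 : 0 ≤ t) (h1 : t ≤ Real.pi) :
    1 + n * |t - θ| ≤ Aw n θ (Real.cos t) ∧ Aw n θ (Real.cos t) ≤ 2 * (1 + n * |t - θ|) := by
  unfold Aw
  rw [Real.arccos_cos h0 h1]
  have e : (n * (t - θ)) ^ 2 = (n * |t - θ|) ^ 2 := by rw [mul_pow, mul_pow, sq_abs]
  rw [e]
  have hz : 0 ≤ (n:ℝ) * |t - θ| := by positivity
  set z := (n:ℝ) * |t - θ|
  constructor
  · have : z ≤ √(1 + z ^ 2) := Real.le_sqrt_of_sq_le (by linarith)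
    linarith
  · have : √(1 + z ^ 2) ≤ 1 + z := by
      rw [Real.sqrt_le_left (by linarith)]; nlinarith
    linarith

theorem L0_comp (a b : ℝ) (A : ℕ) (hA : |a| + |b| ≤ A) (n : ℕ) (hn : 1 ≤ n) {t θ : ℝ}
    (h0 : 0 ≤ θ) (h1 : θ ≤ Real.pi) (k0 : 0 ≤ t) (k1 : t ≤ Real.pi) :
    L0 a b n θ ≤ (1 + n * |t - θ|) ^ A * L0 a b n t := by
  have hn0 : (0:ℝ) < n := by exact_mod_cast hn
  set d := 1 + (n:ℝ) * |t - θ| with hd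
  have hd1 : 1 ≤ d := by
    rw [hd]; have : 0 ≤ (n:ℝ) * |t - θ| := by positivity
    linarith
  have hd0 : 0 < d := by linarith
  have h2 : ∀ x y : ℝ, 0 ≤ x → 0 ≤ y → |x - y| = |t - θ| → 1 / d * (y + 1 / n) ≤ x + 1 / n := by
    intro x y hx hy h
    rw [one_div, ← div_eq_inv_mul, div_le_iff₀ hd0, mul_comm, hd, ← h]
    have : (1 + n * |x - y|) * (x + 1 / n) = x + 1 / n + |x - y| + n * |x - y| * x := by
      field_simp; ring
    rw [this]
    have h3 : y - x ≤ |x - y| := by rw [abs_sub_comm]; exact le_abs_self _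
    have h4 : 0 ≤ n * |x - y| * x := by positivity
    linarith
  have p1 : 0 ≤ Real.pi - t := by linarith
  have p2 : 0 ≤ Real.pi - θ := by linarith
  have e1 : |θ - t| = |t - θ| := abs_sub_comm _ _
  have e2 : |Real.pi - t - (Real.pi - θ)| = |t - θ| := by rw [abs_sub_comm]; ring_nf
  have e3 : |Real.pi - θ - (Real.pi - t)| = |t - θ| := by ring_nf
  have g1 := rp (κ := 1 / d) a (by positivity) (by positivity) (by positivity)
    (h2 θ t h0 k0 e1) (h2 t θ k0 h0 rfl)
  have g2 := rp (κ := 1 / d) b (by positivity) (by positivity) (by positivity)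
    (h2 _ _ p2 p1 e3) (h2 _ _ p1 p2 e2)
  rw [one_div_one_div] at g1 g2
  have hpow : d ^ |a| * d ^ |b| ≤ d ^ A := by
    rw [← Real.rpow_add hd0, ← Real.rpow_natCast]
    exact Real.rpow_le_rpow_of_exponent_le hd1 hA
  have hL := L0_pos a b n hn k0 k1
  calc L0 a b n θ ≤ (d ^ |a| * (t + 1 / n) ^ a) * (d ^ |b| * (Real.pi - t + 1 / n) ^ b) := by
        unfold L0; gcongr
    _ = (d ^ |a| * d ^ |b|) * L0 a b n t := by unfold L0; ring
    _ ≤ _ := by gcongr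

theorem wt_nonneg (α β : ℝ) {t : ℝ} (ht : t ∈ Ioo 0 Real.pi) : 0 ≤ wt α β t := by
  unfold wt
  have h : Real.cos t ∈ Ioo (-1:ℝ) 1 := cos_image ▸ mem_image_of_mem _ ht
  have h1 := w_pos α β h
  have h2 := Real.sin_pos_of_mem_Ioo ht
  positivity

theorem up_int {α β : ℝ} (hα : -1 < α) (hβ : -1 < β) (A : ℕ)
    (hA : |2 * α + 1| + |2 * β + 1| ≤ A) : ∃ C, 0 < C ∧ ∀ n : ℕ, 1 ≤ n → ∀ θ, 0 ≤ θ →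
    θ ≤ Real.pi → ∫ y, 1 / (Aw n θ y) ^ (A + 2) ∂(mu α β) ≤
      C * L0 (2 * α + 1) (2 * β + 1) n θ / n := by
  set a := 2 * α + 1 with ha
  set b := 2 * β + 1 with hb
  have ha1 : -1 < a := by linarith
  have hb1 : -1 < b := by linarith
  obtain ⟨c, hc, hw⟩ := wt_bounds α β
  have hI1 : 0 ≤ ∫ s, hs a s := integral_nonneg (hs_nonneg a)
  have hI2 : 0 ≤ ∫ s, hs b s := integral_nonneg (hs_nonneg b)
  have hpi := Real.pi_pos
  refine ⟨c * (2 ^ |a| * 2 ^ |b|) * (Real.pi + (∫ s, hs a s) + ∫ s, hs b s), by positivity,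
    fun n hn θ h0 h1 => ?_⟩
  have hL := L0_pos a b n hn h0 h1
  obtain ⟨gi, gv⟩ := Gm_int ha1 hb1 n hn θ
  have gnn : ∀ t, 0 ≤ Gm a b n θ t := fun t => by
    unfold Gm
    have := hs_nonneg a (n * t)
    have := hs_nonneg b (n * (Real.pi - t))
    positivity
  rw [mu_cos]
  calc ∫ t in Ioo 0 Real.pi, 1 / (Aw n θ (Real.cos t)) ^ (A + 2) * wt α β t
      ≤ ∫ t in Ioo 0 Real.pi, c * (2 ^ |a| * 2 ^ |b| * L0 a b n θ * Gm a b n θ t) := by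
        refine integral_mono_of_nonneg ?_ ?_ ?_
        · filter_upwards [ae_restrict_mem measurableSet_Ioo] with t ht
          have := wt_nonneg α β ht
          have := Aw_gt n θ (Real.cos t)
          show (0:ℝ) ≤ _
          positivity
        · exact ((gi.const_mul _).const_mul _).integrableOn
        · filter_upwards [ae_restrict_mem measurableSet_Ioo] with t ht
          have h3 := upper_pt a b A hA n hn ht h0 h1
          have h4 := (Aw_bounds n (θ := θ) ht.1.le ht.2.le).1
          have h5 := (hw t ht).1
          have h6 := wt_nonneg α β ht
          have h7 : 0 < 1 + (n:ℝ) * |t - θ| := by positivity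
          calc 1 / (Aw n θ (Real.cos t)) ^ (A + 2) * wt α β t
              ≤ 1 / (1 + (n:ℝ) * |t - θ|) ^ (A + 2) * (c * (t ^ a * (Real.pi - t) ^ b)) := by
                gcongr
            _ = c * (t ^ a * (Real.pi - t) ^ b / (1 + (n:ℝ) * |t - θ|) ^ (A + 2)) := by ring
            _ ≤ _ := by gcongr
    _ ≤ ∫ t, c * (2 ^ |a| * 2 ^ |b| * L0 a b n θ * Gm a b n θ t) := by
        refine setIntegral_le_integral ((gi.const_mul _).const_mul _) (ae_of_all _ fun t => ?_)
        have := gnn t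
        show (0:ℝ) ≤ _
        positivity
    _ = _ := by
        rw [integral_const_mul, integral_const_mul, gv]; ring

set_option maxHeartbeats 1000000 in
theorem nik {α β : ℝ} (hα : -1 < α) (hβ : -1 < β) (A : ℕ)
    (hA : |2 * α + 1| + |2 * β + 1| ≤ A) : ∃ C, 0 < C ∧ ∀ n : ℕ, 1 ≤ n → ∀ θ, 0 ≤ θ →
    θ ≤ Real.pi → ∀ q : Polynomial ℝ, q.natDegree ≤ 2 * n →
    (q.eval (Real.cos θ)) ^ 2 * ∫ y, 1 / (Aw n θ y) ^ (A + 2) ∂(mu α β) ≤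
      C * ∫ y, (q.eval y) ^ 2 / (Aw n θ y) ^ (A + 2) ∂(mu α β) := by
  obtain ⟨C1, hC1, hup⟩ := up_int hα hβ A hA
  obtain ⟨c, hc, hc1, hN⟩ := lemmaN (A + 1)
  obtain ⟨c2, hc2, hw⟩ := wt_bounds α β
  set a := 2 * α + 1 with ha
  set b := 2 * β + 1 with hb
  set D := (1 / (c / 10)) ^ |a| * (1 / (c / 10)) ^ |b| with hD
  have hD0 : 0 < D := by positivity
  refine ⟨C1 * (c2 * D * (4 * 4 ^ (A + 2)) * (2 / c)), by positivity, fun n hn θ h0 h1 q hq => ?_⟩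
  have hn0 : (1:ℝ) ≤ n := by exact_mod_cast hn
  have hB : ∀ t : ℝ, 1 ≤ 1 + (n:ℝ) * |t - θ| := fun t => by
    have : 0 ≤ (n:ℝ) * |t - θ| := by positivity
    linarith
  -- the maximizer
  obtain ⟨ts, hts, hmax⟩ := (isCompact_Icc (a := (0:ℝ)) (b := Real.pi)).exists_isMaxOn
    ⟨0, by constructor <;> [rfl; exact Real.pi_pos.le]⟩
    (f := fun t => |q.eval (Real.cos t)| / (1 + n * |t - θ|) ^ (A + 1))
    (by
      refine ContinuousOn.div (by fun_prop) (by fun_prop) fun t _ => ?_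
      have := hB t
      positivity)
  have hmax' : ∀ t, 0 ≤ t → t ≤ Real.pi → |q.eval (Real.cos t)| / (1 + n * |t - θ|) ^ (A + 1) ≤
      |q.eval (Real.cos ts)| / (1 + n * |ts - θ|) ^ (A + 1) := fun t k0 k1 => hmax ⟨k0, k1⟩
  set Z := |q.eval (Real.cos ts)| with hZ
  set Bs := 1 + (n:ℝ) * |ts - θ| with hBs
  have hBs1 : 1 ≤ Bs := hB ts
  have hBs0 : 0 < Bs := by linarith
  have hq2 : |q.eval (Real.cos θ)| * Bs ^ (A + 1) ≤ Z := by
    have := hmax' θ h0 h1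
    rw [sub_self, abs_zero, mul_zero, add_zero, one_pow, div_one, le_div_iff₀ (by positivity)] at this
    exact this
  have hgrow : ∀ t, 0 ≤ t → t ≤ Real.pi →
      |q.eval (Real.cos t)| ≤ Z * (1 + n * |t - ts|) ^ (A + 1) := by
    intro t k0 k1
    have h2 := hmax' t k0 k1
    have hBt := hB t
    rw [div_le_iff₀ (by positivity)] at h2
    refine h2.trans ?_
    have h3 : 1 + (n:ℝ) * |t - θ| ≤ (1 + n * |t - ts|) * Bs := by
      have : |t - θ| ≤ |t - ts| + |ts - θ| := abs_sub_le _ _ _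
      have e : (1 + n * |t - ts|) * Bs = 1 + n * (|t - ts| + |ts - θ|) + (n * |t - ts|) * (n * |ts - θ|) := by
        rw [hBs]; ring
      rw [e]
      have : 0 ≤ (n * |t - ts|) * (n * |ts - θ|) := by positivity
      have : (n:ℝ) * |t - θ| ≤ n * (|t - ts| + |ts - θ|) := by gcongr
      linarith
    calc Z / Bs ^ (A + 1) * (1 + n * |t - θ|) ^ (A + 1)
        ≤ Z / Bs ^ (A + 1) * ((1 + n * |t - ts|) * Bs) ^ (A + 1) := by gcongr
      _ = _ := by rw [mul_pow]; field_simp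
  have hlow := hN n hn q hq ts hts.1 hts.2 hgrow
  obtain ⟨x, y, hxy, hlen, hI⟩ := exists_I c hc hc1 n hn ts hts.1 hts.2
  have hLs := L0_pos a b n hn hts.1 hts.2
  -- lower bound
  set m := Z ^ 2 / (4 * (4 ^ (A + 2) * Bs ^ (A + 2))) * (L0 a b n ts / (c2 * D)) with hm
  have hcontF : Continuous fun y : ℝ => (q.eval y) ^ 2 / (Aw n θ y) ^ (A + 2) := by
    refine Continuous.div (by fun_prop) ((Aw_cont n θ).pow _) fun y => ?_
    have := Aw_gt n θ y
    positivity
  have hintF := mu_cos_int α β _ (integrable_cont hα hβ hcontF.continuousOn)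
  have hlower : m * (c / (2 * n)) ≤ ∫ y, (q.eval y) ^ 2 / (Aw n θ y) ^ (A + 2) ∂(mu α β) := by
    rw [mu_cos, ← hlen]
    have hsub : Icc x y ⊆ Ioo 0 Real.pi := fun t ht => (hI t ht).1
    calc m * (y - x) = ∫ t in Icc x y, m := by
          rw [setIntegral_const, smul_eq_mul, Measure.real, Real.volume_Icc,
            ENNReal.toReal_ofReal (by linarith), mul_comm]
      _ ≤ ∫ t in Icc x y, (q.eval (Real.cos t)) ^ 2 / (Aw n θ (Real.cos t)) ^ (A + 2) * wt α β t := by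
          refine setIntegral_mono_on (by simp) (hintF.mono_set hsub) measurableSet_Icc fun t ht => ?_
          obtain ⟨k0, k1, k2, k3, k4, k5⟩ := hI t ht
          have l1 := hlow t k1
          have l2 := (Aw_bounds n (θ := θ) k0.1.le k0.2.le).2
          have l3 : 1 + (n:ℝ) * |t - θ| ≤ 2 * Bs := by
            have : |t - θ| ≤ |t - ts| + |ts - θ| := abs_sub_le _ _ _
            have h5 : (n:ℝ) * |t - θ| ≤ n * (|t - ts| + |ts - θ|) := by gcongr
            have h6 : (n:ℝ) * |t - ts| ≤ n * (c / n) := by gcongr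
            have h7 : (n:ℝ) * (c / n) = c := by field_simp
            rw [hBs] at hBs1 ⊢
            nlinarith
          have l4 : Aw n θ (Real.cos t) ≤ 4 * Bs := by linarith
          have l5 := Aw_gt n θ (Real.cos t)
          have l6 := (hw t k0).2
          have t0 := k0.1
          have t1 : 0 < Real.pi - t := by linarith [k0.2]
          have s0 := hts.1
          have s1 : 0 ≤ Real.pi - ts := by linarith [hts.2]
          have l7 : L0 a b n ts ≤ D * (t ^ a * (Real.pi - t) ^ b) := by
            have e1 := rp (κ := c / 10) (x := ts + 1 / n) (y := t) a (by positivity) (by positivity) t0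
              ((mul_le_of_le_one_left t0.le (by linarith)).trans k3) k2
            have e2 := rp (κ := c / 10) (x := Real.pi - ts + 1 / n) (y := Real.pi - t) b (by positivity)
              (by positivity) t1 ((mul_le_of_le_one_left t1.le (by linarith)).trans k5) k4
            calc L0 a b n ts ≤ ((1 / (c / 10)) ^ |a| * t ^ a) *
                  ((1 / (c / 10)) ^ |b| * (Real.pi - t) ^ b) := by unfold L0; gcongr
              _ = _ := by rw [hD]; ring
          have l8 : L0 a b n ts / (c2 * D) ≤ wt α β t := by
            rw [div_le_iff₀ (by positivity)]
            calc _ ≤ D * (t ^ a * (Real.pi - t) ^ b) := l7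
              _ ≤ D * (c2 * wt α β t) := by gcongr
              _ = _ := by ring
          have l9 : Z ^ 2 / 4 ≤ q.eval (Real.cos t) ^ 2 := by
            rw [← sq_abs (q.eval (Real.cos t))]
            have : 0 ≤ Z := abs_nonneg _
            nlinarith
          rw [hm]
          have l10 := wt_nonneg α β k0
          calc Z ^ 2 / (4 * (4 ^ (A + 2) * Bs ^ (A + 2))) * (L0 a b n ts / (c2 * D))
              = (Z ^ 2 / 4) / (4 * Bs) ^ (A + 2) * (L0 a b n ts / (c2 * D)) := by
                rw [mul_pow]; field_simp
            _ ≤ _ := by gcongr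
      _ ≤ _ := by
          refine setIntegral_mono_set hintF ?_ (hsub.eventuallyLE)
          filter_upwards [ae_restrict_mem measurableSet_Ioo] with t ht
          have := wt_nonneg α β ht
          have := Aw_gt n θ (Real.cos t)
          show (0:ℝ) ≤ _
          positivity
  have hLc := L0_comp a b A hA n hn h0 h1 hts.1 hts.2
  have hU := hup n hn θ h0 h1
  have hZ2 : q.eval (Real.cos θ) ^ 2 * Bs ^ (2 * (A + 1)) ≤ Z ^ 2 := by
    have h := pow_le_pow_left₀ (by positivity) hq2 2
    rw [mul_pow, sq_abs, ← pow_mul, mul_comm (A + 1) 2] at h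
    exact h
  calc q.eval (Real.cos θ) ^ 2 * ∫ y, 1 / (Aw n θ y) ^ (A + 2) ∂(mu α β)
      ≤ q.eval (Real.cos θ) ^ 2 * (C1 * (Bs ^ A * L0 a b n ts) / n) := by
        refine mul_le_mul_of_nonneg_left (hU.trans ?_) (sq_nonneg _)
        gcongr
    _ = (q.eval (Real.cos θ) ^ 2 * Bs ^ (2 * (A + 1))) * (C1 * L0 a b n ts / n / Bs ^ (A + 2)) := by
        rw [show 2 * (A + 1) = A + (A + 2) by ring, pow_add Bs A]; field_simp
    _ ≤ Z ^ 2 * (C1 * L0 a b n ts / n / Bs ^ (A + 2)) := by gcongr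
    _ = C1 * (c2 * D * (4 * 4 ^ (A + 2)) * (2 / c)) * (m * (c / (2 * n))) := by
        rw [hm]; field_simp
    _ ≤ _ := by gcongr


theorem mu_univ_pos {α β : ℝ} (hα : -1 < α) (hβ : -1 < β) : 0 < mu α β univ := by
  have h := integral_sq_pos hα hβ 1 one_ne_zero
  by_contra h0
  have : mu α β = 0 := Measure.measure_univ_eq_zero.1 (by simpa using h0)
  rw [this] at h
  simp at h

theorem V_poly_bdd {α β : ℝ} (hα : -1 < α) (hβ : -1 < β) {η : ℝ → ℝ} (hη : Admissible η) :
    ∃ C, 0 < C ∧ ∀ n : ℕ, 1 ≤ n → ∀ f : Polynomial ℝ, ∀ B : ℝ, 0 ≤ B →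
      (∀ y ∈ Icc (-1:ℝ) 1, |f.eval y| ≤ B) → ∀ x ∈ Icc (-1:ℝ) 1,
      |V η α β n (fun x => f.eval x) x| ≤ C * B := by
  obtain ⟨A, hA⟩ := exists_nat_ge (|2 * α + 1| + |2 * β + 1|)
  obtain ⟨C1, hC1, h1⟩ := nik hα hβ A hA
  obtain ⟨C2, hC2, h2⟩ := V_weighted hα hβ hη (A + 2)
  refine ⟨C1 * C2 + 1, by positivity, fun n hn f B hB hf x hx => ?_⟩
  set θ := Real.arccos x with hθ
  have hc : Real.cos θ = x := Real.cos_arccos hx.1 hx.2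
  have k1 := h1 n hn θ (Real.arccos_nonneg x) (Real.arccos_le_pi x)
    (Vp η α β n (fun x => f.eval x)) (Vp_natDegree hα hβ η n _)
  have k2 := h2 n hn θ f
  simp only [Vp_eval, hc] at k1
  have hfin := mu_finite hα hβ
  have ci : ∀ q : ℝ → ℝ, Continuous q → Integrable (fun y => q y / (Aw n θ y) ^ (A + 2)) (mu α β) := by
    intro q hq
    refine integrable_cont hα hβ (Continuous.continuousOn ?_)
    refine Continuous.div hq ((Aw_cont n θ).pow _) fun y => ?_
    have := Aw_gt n θ y
    positivity
  have hI : 0 < ∫ y, 1 / (Aw n θ y) ^ (A + 2) ∂(mu α β) := by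
    rw [integral_pos_iff_support_of_nonneg (fun y => ?_) (ci (fun _ => 1) continuous_const)]
    · have : (Function.support fun y => 1 / (Aw n θ y) ^ (A + 2)) = univ := by
        ext y; simp only [Function.mem_support, mem_univ, iff_true]
        have := Aw_gt n θ y
        positivity
      rw [this]; exact mu_univ_pos hα hβ
    · have := Aw_gt n θ y
      show (0:ℝ) ≤ _
      positivity
  set I := ∫ y, 1 / (Aw n θ y) ^ (A + 2) ∂(mu α β) with hIdef
  have k3 : ∫ y, f.eval y ^ 2 / (Aw n θ y) ^ (A + 2) ∂(mu α β) ≤ B ^ 2 * I := by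
    rw [hIdef, ← integral_const_mul]
    refine integral_mono_ae (ci _ (by fun_prop)) ((ci (fun _ => 1) continuous_const).const_mul _) ?_
    filter_upwards [mu_ae α β] with y hy
    have h3 := hf y (Ioo_subset_Icc_self hy)
    have h4 : f.eval y ^ 2 ≤ B ^ 2 := by rw [← sq_abs]; gcongr
    have := Aw_gt n θ y
    rw [mul_one_div]; gcongr
  have k4 : V η α β n (fun x => f.eval x) x ^ 2 * I ≤ (C1 * C2 * B ^ 2) * I := by
    calc _ ≤ _ := k1
      _ ≤ C1 * (C2 * (B ^ 2 * I)) := by gcongr; exact k2.trans (by gcongr)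
      _ = _ := by ring
  have k5 := le_of_mul_le_mul_right k4 hI
  refine abs_le_of_sq_le_sq ?_ (by positivity)
  have : 0 ≤ C1 * C2 := by positivity
  calc _ ≤ _ := k5
    _ ≤ ((C1 * C2 + 1) * B) ^ 2 := by
      rw [mul_pow]; gcongr; nlinarith

/-- The kernel of `V`. -/
def Kn (η : ℝ → ℝ) (α β : ℝ) (n : ℕ) (x y : ℝ) : ℝ :=
  ∑ k ∈ Finset.range (2 * n + 1), η ((k : ℝ) / (n : ℝ)) / hJ α β k * J α β k x * J α β k y

theorem Kn_symm (η : ℝ → ℝ) (α β : ℝ) (n : ℕ) (x y : ℝ) : Kn η α β n x y = Kn η α β n y x := by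
  unfold Kn
  exact Finset.sum_congr rfl fun k _ => by ring

theorem Kn_cont (η : ℝ → ℝ) (α β : ℝ) (n : ℕ) : Continuous fun z : ℝ × ℝ => Kn η α β n z.1 z.2 := by
  unfold Kn
  refine continuous_finsetSum _ fun k _ => ?_
  have := J_cont α β k
  fun_prop

theorem Kn_cont' (η : ℝ → ℝ) (α β : ℝ) (n : ℕ) (x : ℝ) : Continuous (Kn η α β n x) := by
  unfold Kn
  refine continuous_finsetSum _ fun k _ => ?_
  have := J_cont α β k
  fun_prop

theorem V_kernel {α β : ℝ} (hα : -1 < α) (hβ : -1 < β) (η : ℝ → ℝ) (n : ℕ) {f : ℝ → ℝ}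
    (hf : ContinuousOn f (Icc (-1:ℝ) 1)) (x : ℝ) :
    V η α β n f x = ∫ y, Kn η α β n x y * f y ∂(mu α β) := by
  unfold V Kn
  simp only [Finset.sum_mul]
  rw [integral_finsetSum]
  · refine Finset.sum_congr rfl fun k _ => ?_
    rw [coeff, ip_eq]
    have : ∀ y, η (k / n) / hJ α β k * J α β k x * J α β k y * f y =
        (η (k / n) / hJ α β k * J α β k x) * (f y * J α β k y) := fun y => by ring
    simp only [this]
    rw [integral_const_mul]; ring
  · intro k _
    refine integrable_cont hα hβ (ContinuousOn.mul ?_ hf)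
    have := J_cont α β k
    fun_prop

theorem V_cont_bdd {α β : ℝ} (hα : -1 < α) (hβ : -1 < β) {η : ℝ → ℝ} (hη : Admissible η) :
    ∃ C, 0 < C ∧ ∀ n : ℕ, 1 ≤ n → ∀ f : ℝ → ℝ, ContinuousOn f (Icc (-1:ℝ) 1) →
      ∀ B : ℝ, 0 ≤ B → (∀ y ∈ Icc (-1:ℝ) 1, |f y| ≤ B) → ∀ x ∈ Icc (-1:ℝ) 1,
      |V η α β n f x| ≤ C * B := by
  obtain ⟨C, hC, h⟩ := V_poly_bdd hα hβ hη
  refine ⟨C, hC, fun n hn f hf B hB hfB x hx => ?_⟩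
  have hK := integrable_cont hα hβ (Kn_cont' η α β n x).abs.continuousOn
  set k := ∫ y, |Kn η α β n x y| ∂(mu α β) with hk
  have hk0 : 0 ≤ k := integral_nonneg fun y => abs_nonneg _
  refine le_of_forall_pos_le_add fun δ hδ => ?_
  set ε := δ / (C + k) with hε
  have hε0 : 0 < ε := by positivity
  obtain ⟨q, hq⟩ := exists_polynomial_near_of_continuousOn (-1) 1 f hf ε hε0
  have hqc : ContinuousOn (fun x => q.eval x) (Icc (-1:ℝ) 1) := by fun_prop
  have h1 := h n hn q (B + ε) (by positivity) (fun y hy => by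
    have a1 := hq y hy
    have a2 := hfB y hy
    have a3 : |q.eval y| ≤ |q.eval y - f y| + |f y| := by
      have := abs_add_le (q.eval y - f y) (f y)
      rwa [sub_add_cancel] at this
    linarith) x hx
  have hKc := (Kn_cont' η α β n x).continuousOn (s := Icc (-1:ℝ) 1)
  have i1 : Integrable (fun y => Kn η α β n x y * f y) (mu α β) :=
    integrable_cont hα hβ (hKc.mul hf)
  have i2 : Integrable (fun y => Kn η α β n x y * q.eval y) (mu α β) :=
    integrable_cont hα hβ (hKc.mul hqc)
  have h2 : |V η α β n f x - V η α β n (fun x => q.eval x) x| ≤ ε * k := by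
    rw [V_kernel hα hβ η n hf, V_kernel hα hβ η n hqc,
      ← integral_sub i1 i2,
      hk, ← integral_const_mul]
    refine (abs_integral_le_integral_abs).trans ?_
    refine integral_mono_ae (i1.sub i2).abs (hK.const_mul _) ?_
    filter_upwards [mu_ae α β] with y hy
    have := hq y (Ioo_subset_Icc_self hy)
    show |_| ≤ _
    rw [← mul_sub, abs_mul, mul_comm, abs_sub_comm]
    gcongr
  have h3 := abs_sub_abs_le_abs_sub (V η α β n f x) (V η α β n (fun x => q.eval x) x)
  have h4 : ε * (C + k) = δ := by rw [hε]; field_simp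
  nlinarith

theorem Kn_L1 {α β : ℝ} (hα : -1 < α) (hβ : -1 < β) {η : ℝ → ℝ} (hη : Admissible η) :
    ∃ C, 0 < C ∧ ∀ n : ℕ, 1 ≤ n → ∀ x ∈ Icc (-1:ℝ) 1,
      ∫ y, |Kn η α β n x y| ∂(mu α β) ≤ C := by
  obtain ⟨C, hC, h⟩ := V_cont_bdd hα hβ hη
  refine ⟨C, hC, fun n hn x hx => ?_⟩
  have := mu_finite hα hβ
  refine le_of_forall_pos_le_add fun δ hδ => ?_
  set M := (mu α β).real univ with hM
  have hM0 : 0 < M := ENNReal.toReal_pos (mu_univ_pos hα hβ).ne' (measure_ne_top _ _)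
  set e := δ / M with he
  have he0 : 0 < e := by positivity
  have hKc := Kn_cont' η α β n x
  have hfc : Continuous fun y => Kn η α β n x y / (|Kn η α β n x y| + e) :=
    hKc.div (hKc.abs.add continuous_const) fun y => by positivity
  have h1 := h n hn _ hfc.continuousOn 1 zero_le_one (fun y _ => by
    rw [abs_div, div_le_one (by positivity), abs_of_pos (a := |Kn η α β n x y| + e) (by positivity)]
    linarith) x hx
  rw [mul_one, V_kernel hα hβ η n hfc.continuousOn] at h1
  have i1 := integrable_cont hα hβ hKc.abs.continuousOn
  have i2 : Integrable (fun y => Kn η α β n x y *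
      (Kn η α β n x y / (|Kn η α β n x y| + e))) (mu α β) :=
    integrable_cont hα hβ (hKc.mul hfc).continuousOn
  calc ∫ y, |Kn η α β n x y| ∂(mu α β)
      ≤ ∫ y, (Kn η α β n x y * (Kn η α β n x y / (|Kn η α β n x y| + e)) + e) ∂(mu α β) := by
        refine integral_mono i1 (i2.add (integrable_const e)) fun y => ?_
        show |_| ≤ _
        rw [← mul_div_assoc, ← abs_mul_abs_self, ← sub_le_iff_le_add, le_div_iff₀ (by positivity)]
        nlinarith
    _ = (∫ y, (Kn η α β n x y * (Kn η α β n x y / (|Kn η α β n x y| + e))) ∂(mu α β)) + δ := by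
        rw [integral_add i2 (integrable_const e), integral_const, smul_eq_mul, ← hM]
        have : M * e = δ := by rw [he]; field_simp
        rw [this]
    _ ≤ C + δ := by
        gcongr; exact (le_abs_self _).trans h1

theorem jensen_w {X : Type*} [MeasurableSpace X] {μ : Measure X} {k g : X → ℝ} {p C : ℝ}
    (hp : 1 ≤ p) (hC : 0 < C) (hk0 : ∀ᵐ x ∂μ, 0 ≤ k x) (hg0 : ∀ x, 0 ≤ g x)
    (h0 : Integrable k μ) (h1 : Integrable (fun x => k x * g x) μ)
    (h2 : Integrable (fun x => k x * g x ^ p) μ) (hkC : ∫ x, k x ∂μ ≤ C) :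
    (∫ x, k x * g x ∂μ) ^ p ≤ C ^ (p - 1) * ∫ x, k x * g x ^ p ∂μ := by
  have hI : 0 ≤ ∫ x, k x * g x ∂μ := integral_nonneg_of_ae (by
    filter_upwards [hk0] with x hx using mul_nonneg hx (hg0 x))
  have hP : 0 ≤ ∫ x, k x * g x ^ p ∂μ := integral_nonneg_of_ae (by
    filter_upwards [hk0] with x hx using mul_nonneg hx (Real.rpow_nonneg (hg0 x) _))
  rcases hI.eq_or_lt with h | h
  · rw [← h, Real.zero_rpow (by linarith)]; positivity
  set I := ∫ x, k x * g x ∂μ with hIdef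
  set a := I / C with ha
  have ha0 : 0 < a := by positivity
  have key : ∀ t, 0 ≤ t → p * a ^ (p - 1) * t - (p - 1) * a ^ p ≤ t ^ p := by
    intro t ht
    have b := one_add_mul_self_le_rpow_one_add (s := t / a - 1) (by
      have : 0 ≤ t / a := by positivity
      linarith) hp
    have e : t ^ p = a ^ p * (1 + (t / a - 1)) ^ p := by
      rw [← Real.mul_rpow ha0.le (by rw [add_sub_cancel]; positivity), add_sub_cancel]
      congr 1; field_simp
    have e2 : a ^ (p - 1) = a ^ p / a := by rw [Real.rpow_sub_one ha0.ne']
    rw [e, e2]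
    calc _ = a ^ p * (1 + p * (t / a - 1)) := by field_simp; ring
      _ ≤ _ := by gcongr
  have h3 : p * a ^ (p - 1) * I - (p - 1) * a ^ p * ∫ x, k x ∂μ ≤ ∫ x, k x * g x ^ p ∂μ := by
    rw [hIdef, ← integral_const_mul, ← integral_const_mul, ← integral_sub (h1.const_mul _) (h0.const_mul _)]
    refine integral_mono_ae ((h1.const_mul _).sub (h0.const_mul _)) h2 ?_
    filter_upwards [hk0] with x hx
    have := mul_le_mul_of_nonneg_left (key (g x) (hg0 x)) hx
    show _ - _ ≤ _
    nlinarith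
  have h4 : (p - 1) * a ^ p * ∫ x, k x ∂μ ≤ (p - 1) * a ^ p * C := by
    have : 0 ≤ p - 1 := by linarith
    gcongr
  have h5 : p * a ^ (p - 1) * I = p * a ^ p * C := by
    rw [Real.rpow_sub_one ha0.ne', ha]; field_simp
  have h6 : C * a ^ p ≤ ∫ x, k x * g x ^ p ∂μ := by nlinarith
  calc I ^ p = C ^ (p - 1) * (C * a ^ p) := by
        rw [ha, Real.div_rpow h.le hC.le, Real.rpow_sub_one hC.ne']
        have : C ^ p ≠ 0 := by positivity
        field_simp
    _ ≤ _ := by gcongr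

theorem V_Lp {α β : ℝ} (hα : -1 < α) (hβ : -1 < β) {η : ℝ → ℝ} (hη : Admissible η) {p : ℝ}
    (hp : 1 ≤ p) : ∃ C, 0 < C ∧ ∀ n : ℕ, 1 ≤ n → ∀ g : ℝ → ℝ, Continuous g →
      ∫ x, |V η α β n g x| ^ p ∂(mu α β) ≤ C * ∫ x, |g x| ^ p ∂(mu α β) := by
  obtain ⟨C, hC, hK⟩ := Kn_L1 hα hβ hη
  refine ⟨C ^ (p - 1) * C, by positivity, fun n hn g hg => ?_⟩
  have := mu_finite hα hβ
  have hp0 : 0 ≤ p := by linarith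
  have hgp : Continuous fun y => |g y| ^ p := hg.abs.rpow_const fun _ => Or.inr hp0
  have iK : ∀ x, ∀ F : ℝ → ℝ, Continuous F → Integrable (fun y => |Kn η α β n x y| * F y) (mu α β) :=
    fun x F hF => integrable_cont hα hβ ((Kn_cont' η α β n x).abs.mul hF).continuousOn
  have i0 : ∀ x, Integrable (fun y => |Kn η α β n x y|) (mu α β) :=
    fun x => integrable_cont hα hβ (Kn_cont' η α β n x).abs.continuousOn
  have hpt : ∀ x ∈ Icc (-1:ℝ) 1, |V η α β n g x| ^ p ≤
      C ^ (p - 1) * ∫ y, |Kn η α β n x y| * |g y| ^ p ∂(mu α β) := by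
    intro x hx
    rw [V_kernel hα hβ η n hg.continuousOn]
    refine le_trans (Real.rpow_le_rpow (abs_nonneg _) (abs_integral_le_integral_abs) hp0) ?_
    simp only [abs_mul]
    exact jensen_w hp hC (ae_of_all _ fun y => abs_nonneg _) (fun y => abs_nonneg _) (i0 x)
      (iK x _ hg.abs) (iK x _ hgp) (hK n hn x hx)
  -- product integrability
  have hprod : Integrable (fun z : ℝ × ℝ => |Kn η α β n z.1 z.2| * |g z.2| ^ p)
      ((mu α β).prod (mu α β)) := by
    have hd : Integrable (fun z : ℝ × ℝ => ∑ k ∈ Finset.range (2 * n + 1),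
        |η ((k : ℝ) / (n : ℝ)) / hJ α β k * J α β k z.1| * (|J α β k z.2| * |g z.2| ^ p))
        ((mu α β).prod (mu α β)) := by
      refine integrable_finsetSum _ fun k _ => ?_
      have hJc := J_cont α β k
      refine Integrable.mul_prod (f := fun x => |η ((k : ℝ) / (n : ℝ)) / hJ α β k * J α β k x|)
        (g := fun y => |J α β k y| * |g y| ^ p) ?_ ?_
      · exact integrable_cont hα hβ (by fun_prop)
      · exact integrable_cont hα hβ (hJc.abs.mul hgp).continuousOn
    refine hd.mono' ?_ (ae_of_all _ fun z => ?_)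
    · exact ((Kn_cont η α β n).abs.mul (hgp.comp continuous_snd)).aestronglyMeasurable
    · rw [Real.norm_of_nonneg (by positivity)]
      simp only [← mul_assoc, ← abs_mul, ← Finset.sum_mul]
      gcongr
      exact Finset.abs_sum_le_sum_abs _ _
  have hL : Integrable (fun x => ∫ y, |Kn η α β n x y| * |g y| ^ p ∂(mu α β)) (mu α β) :=
    hprod.integral_prod_left
  calc ∫ x, |V η α β n g x| ^ p ∂(mu α β)
      ≤ ∫ x, C ^ (p - 1) * ∫ y, |Kn η α β n x y| * |g y| ^ p ∂(mu α β) ∂(mu α β) := by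
        refine integral_mono_of_nonneg (ae_of_all _ fun x => by positivity) (hL.const_mul _) ?_
        filter_upwards [mu_ae α β] with x hx using hpt x (Ioo_subset_Icc_self hx)
    _ = C ^ (p - 1) * ∫ y, (∫ x, |Kn η α β n x y| * |g y| ^ p ∂(mu α β)) ∂(mu α β) := by
        rw [integral_const_mul, integral_integral_swap]
        exact hprod
    _ ≤ C ^ (p - 1) * ∫ y, C * |g y| ^ p ∂(mu α β) := by
        refine mul_le_mul_of_nonneg_left ?_ (by positivity)
        refine integral_mono_of_nonneg (ae_of_all _ fun y => integral_nonneg fun x => by positivity)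
          ((integrable_cont hα hβ hgp.continuousOn).const_mul _) ?_
        filter_upwards [mu_ae α β] with y hy
        rw [integral_mul_const]
        simp only [Kn_symm η α β n _ y]
        gcongr
        exact hK n hn y (Ioo_subset_Icc_self hy)
    _ = _ := by rw [integral_const_mul]; ring

theorem V_repro {α β : ℝ} (hα : -1 < α) (hβ : -1 < β) {η : ℝ → ℝ} (hη : Admissible η) (n : ℕ)
    (hn : 1 ≤ n) (q : Polynomial ℝ) (hq : q.natDegree ≤ n) (x : ℝ) :
    V η α β n (fun x => q.eval x) x = q.eval x := by
  rw [expansion hα hβ (2 * n + 1) q (by omega) x]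
  unfold V
  refine Finset.sum_congr rfl fun k _ => ?_
  have hn0 : (0:ℝ) < n := by exact_mod_cast hn
  rcases le_or_gt k n with h | h
  · rw [hη.2.1 _ (by positivity) (by rw [div_le_one hn0]; exact_mod_cast h), one_mul]
  · rw [coeff_zero_of_lt hα hβ q k (by omega)]; ring

theorem V_sub {α β : ℝ} (hα : -1 < α) (hβ : -1 < β) (η : ℝ → ℝ) (n : ℕ) {f g : ℝ → ℝ}
    (hf : Continuous f) (hg : Continuous g) (x : ℝ) :
    V η α β n (fun y => f y - g y) x = V η α β n f x - V η α β n g x := by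
  rw [V_kernel hα hβ η n hf.continuousOn, V_kernel hα hβ η n hg.continuousOn,
    V_kernel hα hβ η n (f := fun y => f y - g y) (hf.sub hg).continuousOn, ← integral_sub]
  · simp only [mul_sub]
  · exact integrable_cont hα hβ ((Kn_cont' η α β n x).mul hf).continuousOn
  · exact integrable_cont hα hβ ((Kn_cont' η α β n x).mul hg).continuousOn


theorem LpW_fin (α β : ℝ) {p : ℝ≥0∞} (hp : p ≠ ⊤) (f : ℝ → ℝ) :
    LpW α β p f = (∫ x, |f x| ^ p.toReal ∂(mu α β)) ^ (1 / p.toReal) := by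
  rw [LpW, if_neg hp, integral_mu]

theorem LpW_fin_le (α β : ℝ) {p : ℝ≥0∞} (hp : p ≠ ⊤) {D : ℝ} (hD : 0 ≤ D) {a b : ℝ → ℝ}
    (h : ∫ x, |a x| ^ p.toReal ∂(mu α β) ≤ D * ∫ x, |b x| ^ p.toReal ∂(mu α β)) :
    LpW α β p a ≤ D ^ (1 / p.toReal) * LpW α β p b := by
  rw [LpW_fin α β hp, LpW_fin α β hp]
  have hb : 0 ≤ ∫ x, |b x| ^ p.toReal ∂(mu α β) := integral_nonneg fun x => by positivity
  rw [← Real.mul_rpow hD hb]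
  exact Real.rpow_le_rpow (integral_nonneg fun x => by positivity) h (by positivity)

theorem LpW_nonneg (α β : ℝ) (p : ℝ≥0∞) (f : ℝ → ℝ) : 0 ≤ LpW α β p f := by
  by_cases hp : p = ⊤
  · rw [LpW, if_pos hp]
    refine Real.sSup_nonneg ?_
    rintro _ ⟨x, _, rfl⟩
    exact abs_nonneg _
  · rw [LpW_fin α β hp]
    exact Real.rpow_nonneg (integral_nonneg fun x => by positivity) _

theorem LpW_top_le (α β : ℝ) {f : ℝ → ℝ} {B : ℝ} (h : ∀ x ∈ Icc (-1:ℝ) 1, |f x| ≤ B) :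
    LpW α β ⊤ f ≤ B := by
  rw [LpW, if_pos rfl]
  refine csSup_le ⟨_, mem_image_of_mem _ (show (0:ℝ) ∈ Icc (-1:ℝ) 1 by constructor <;> norm_num)⟩ ?_
  rintro _ ⟨x, hx, rfl⟩
  exact h x hx

theorem le_LpW_top (α β : ℝ) {f : ℝ → ℝ} (hf : Continuous f) {x : ℝ} (hx : x ∈ Icc (-1:ℝ) 1) :
    |f x| ≤ LpW α β ⊤ f := by
  rw [LpW, if_pos rfl]
  exact le_csSup (isCompact_Icc.image hf.abs).bddAbove (mem_image_of_mem (fun x => |f x|) hx)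

theorem V_cont (η : ℝ → ℝ) (α β : ℝ) (n : ℕ) (f : ℝ → ℝ) : Continuous (V η α β n f) := by
  have : V η α β n f = fun x => (Vp η α β n f).eval x := by ext x; rw [Vp_eval]
  rw [this]; fun_prop

theorem toReal_one_le {p : ℝ≥0∞} (hp : 1 ≤ p) (hpt : p ≠ ⊤) : 1 ≤ p.toReal := by
  rw [← ENNReal.toReal_one]; exact ENNReal.toReal_mono hpt hp

theorem V_err {α β : ℝ} (hα : -1 < α) (hβ : -1 < β) {η : ℝ → ℝ} (hη : Admissible η) {p : ℝ≥0∞}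
    (hp : 1 ≤ p) : ∃ D, 0 < D ∧ ∀ n : ℕ, 1 ≤ n → ∀ g : ℝ → ℝ, Continuous g →
      LpW α β p (fun x => g x - V η α β n g x) ≤ D * E α β p n g := by
  suffices ∃ D, 0 < D ∧ ∀ n : ℕ, 1 ≤ n → ∀ g : ℝ → ℝ, Continuous g → ∀ q : Polynomial ℝ,
      q.natDegree ≤ n → LpW α β p (fun x => g x - V η α β n g x) ≤
        D * LpW α β p (fun x => g x - q.eval x) by
    obtain ⟨D, hD, h⟩ := this
    refine ⟨D, hD, fun n hn g hg => ?_⟩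
    rw [← div_le_iff₀' hD]
    refine le_csInf ⟨_, 0, by simp, rfl⟩ ?_
    rintro _ ⟨q, hq, rfl⟩
    rw [div_le_iff₀' hD]
    exact h n hn g hg q hq
  have key : ∀ n : ℕ, 1 ≤ n → ∀ g : ℝ → ℝ, Continuous g → ∀ q : Polynomial ℝ,
      q.natDegree ≤ n → ∀ x, g x - V η α β n g x =
        (g x - q.eval x) - V η α β n (fun y => g y - q.eval y) x := by
    intro n hn g hg q hq x
    rw [V_sub hα hβ η n hg (by fun_prop), V_repro hα hβ hη n hn q hq]; ring
  by_cases hpt : p = ⊤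
  · subst hpt
    obtain ⟨C, hC, h⟩ := V_cont_bdd hα hβ hη
    refine ⟨1 + C, by positivity, fun n hn g hg q hq => ?_⟩
    have hc : Continuous fun x => g x - q.eval x := by fun_prop
    refine LpW_top_le α β fun x hx => ?_
    rw [key n hn g hg q hq x]
    have h1 := le_LpW_top α β hc hx
    have h2 := h n hn _ hc.continuousOn _ (LpW_nonneg α β ⊤ _) (fun y hy => le_LpW_top α β hc hy) x hx
    have h3 := abs_sub (g x - q.eval x) (V η α β n (fun y => g y - q.eval y) x)
    linarith
  · have hr := toReal_one_le hp hpt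
    set r := p.toReal with hrdef
    obtain ⟨C, hC, h⟩ := V_Lp hα hβ hη hr
    refine ⟨(2 ^ r * (1 + C)) ^ (1 / r), by positivity, fun n hn g hg q hq => ?_⟩
    refine LpW_fin_le α β hpt (by positivity) ?_
    rw [← hrdef]
    have hc : Continuous fun x => g x - q.eval x := by fun_prop
    have h1 := h n hn _ hc
    have hr0 : 0 ≤ r := by linarith
    have i1 := integrable_cont hα hβ (hc.abs.rpow_const fun _ => Or.inr hr0).continuousOn
    have i2 := integrable_cont hα hβ ((V_cont η α β n (fun y => g y - q.eval y)).abs.rpow_const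
      fun _ => Or.inr hr0).continuousOn
    calc ∫ x, |g x - V η α β n g x| ^ r ∂(mu α β)
        ≤ ∫ x, 2 ^ r * (|g x - q.eval x| ^ r +
            |V η α β n (fun y => g y - q.eval y) x| ^ r) ∂(mu α β) := by
          refine integral_mono_of_nonneg (ae_of_all _ fun x => by positivity)
            ((i1.add i2).const_mul _) (ae_of_all _ fun x => ?_)
          show |_| ^ r ≤ _
          rw [key n hn g hg q hq x]
          set a := g x - q.eval x
          set b := V η α β n (fun y => g y - q.eval y) x
          have h3 : |a - b| ≤ 2 * max |a| |b| := by
            have := abs_sub a b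
            have := le_max_left |a| |b|
            have := le_max_right |a| |b|
            linarith
          calc |a - b| ^ r ≤ (2 * max |a| |b|) ^ r := by gcongr
            _ = 2 ^ r * max |a| |b| ^ r := by rw [Real.mul_rpow (by norm_num) (by positivity)]
            _ ≤ _ := by
              refine mul_le_mul_of_nonneg_left ?_ (by positivity)
              rcases max_cases |a| |b| with ⟨e, _⟩ | ⟨e, _⟩ <;> rw [e]
              · have : 0 ≤ |b| ^ r := by positivity
                linarith
              · have : 0 ≤ |a| ^ r := by positivity
                linarith
      _ = 2 ^ r * ((∫ x, |g x - q.eval x| ^ r ∂(mu α β)) +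
            ∫ x, |V η α β n (fun y => g y - q.eval y) x| ^ r ∂(mu α β)) := by
          rw [integral_const_mul, integral_add i1 i2]
      _ ≤ 2 ^ r * ((∫ x, |g x - q.eval x| ^ r ∂(mu α β)) +
            C * ∫ x, |g x - q.eval x| ^ r ∂(mu α β)) := by gcongr
      _ = _ := by ring


theorem hardy_gen {α β r θ C1 : ℝ} (hα : -1 < α) (hβ : -1 < β) (hr : 1 ≤ r)
    (hθ : θ ∈ Icc (-1:ℝ) 1) {k ψ : ℝ → ℝ} (hC1 : 0 < C1)
    (hkm : Measurable k) (hk0 : ∀ t ∈ Ioo (-1:ℝ) 1, 0 < k t)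
    (hki : IntegrableOn k (Ioo (-1) 1)) (hψ0 : ∀ t ∈ Ioo (-1:ℝ) 1, 0 ≤ ψ t)
    (hψi : IntegrableOn (fun x => ψ x * w α β x) (Ioo (-1) 1))
    (hmain : ∀ x ∈ Ioo (-1:ℝ) 1, ∀ t ∈ Ioo (min θ x) (max θ x),
      k t ^ (1 - r) ≤ C1 * ψ x * w α β t) :
    ∃ C, 0 < C ∧ ∀ G : ℝ → ℝ, Continuous G →
      ∫ x, |∫ t in θ..x, G t| ^ r ∂(mu α β) ≤ C * ∫ x, |G x| ^ r ∂(mu α β) := by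
  have hr0 : 0 ≤ r := by linarith
  set C0 := (∫ t in Ioo (-1:ℝ) 1, k t) + 1 with hC0
  have hkn : 0 ≤ ∫ t in Ioo (-1:ℝ) 1, k t :=
    setIntegral_nonneg measurableSet_Ioo fun t ht => (hk0 t ht).le
  have hC0p : 0 < C0 := by linarith
  have hψn : 0 ≤ ∫ x in Ioo (-1:ℝ) 1, ψ x * w α β x :=
    setIntegral_nonneg measurableSet_Ioo fun t ht => mul_nonneg (hψ0 t ht) (w_pos α β ht).le
  refine ⟨C0 ^ (r - 1) * C1 * ((∫ x in Ioo (-1:ℝ) 1, ψ x * w α β x) + 1), by positivity,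
    fun G hG => ?_⟩
  have hGr : Continuous fun x => |G x| ^ r := hG.abs.rpow_const fun _ => Or.inr hr0
  have hGi := (integrable_mu_iff α β _).1 (integrable_cont hα hβ hGr.continuousOn)
  set P := ∫ x, |G x| ^ r ∂(mu α β) with hP
  have hP0 : 0 ≤ P := integral_nonneg fun x => by positivity
  have hpt : ∀ x ∈ Ioo (-1:ℝ) 1, |∫ t in θ..x, G t| ^ r ≤ C0 ^ (r - 1) * C1 * P * ψ x := by
    intro x hx
    set S := Ioo (min θ x) (max θ x) with hS
    have hSsub : S ⊆ Ioo (-1:ℝ) 1 := fun t ht =>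
      ⟨lt_of_le_of_lt (le_min hθ.1 hx.1.le) ht.1, lt_of_lt_of_le ht.2 (max_le hθ.2 hx.2.le)⟩
    have hSm : MeasurableSet S := measurableSet_Ioo
    have h1 : |∫ t in θ..x, G t| ≤ ∫ t in S, |G t| := by
      have := intervalIntegral.norm_integral_le_integral_norm_uIoc (f := G) (a := θ) (b := x) (μ := volume)
      rw [hS, setIntegral_congr_set Ioo_ae_eq_Ioc]
      exact this
    have hpos : ∀ t ∈ S, 0 < k t := fun t ht => hk0 t (hSsub ht)
    have e1 : ∀ t ∈ S, k t * (|G t| / k t) = |G t| := fun t ht => by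
      have := hpos t ht
      field_simp
    -- use |k| to have nonnegativity everywhere
    have e2 : ∀ t ∈ S, k t * (|G t| / |k t|) ^ r = k t ^ (1 - r) * |G t| ^ r := fun t ht => by
      have := hpos t ht
      rw [abs_of_pos this, Real.div_rpow (abs_nonneg _) this.le, Real.rpow_sub this, Real.rpow_one]
      ring
    have e1' : ∀ t ∈ S, k t * (|G t| / |k t|) = |G t| := fun t ht => by
      rw [abs_of_pos (hpos t ht)]; exact e1 t ht
    have iG : IntegrableOn (fun t => |G t|) S :=
      (hG.abs.integrableOn_Icc (a := min θ x) (b := max θ x)).mono_set Ioo_subset_Icc_self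
    have i1 : IntegrableOn (fun t => k t * (|G t| / |k t|)) S :=
      iG.congr_fun (fun t ht => (e1' t ht).symm) hSm
    have le2 : ∀ t ∈ S, k t ^ (1 - r) * |G t| ^ r ≤ C1 * ψ x * (|G t| ^ r * w α β t) := fun t ht => by
      have := hmain x hx t ht
      calc _ ≤ (C1 * ψ x * w α β t) * |G t| ^ r := by gcongr
        _ = _ := by ring
    have i2' : IntegrableOn (fun t => k t ^ (1 - r) * |G t| ^ r) S := by
      refine Integrable.mono' ((hGi.mono_set hSsub).const_mul (C1 * ψ x)) ?_ ?_
      · exact ((hkm.pow_const _).mul hGr.measurable).aestronglyMeasurable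
      · filter_upwards [ae_restrict_mem hSm] with t ht
        have := hpos t ht
        rw [Real.norm_of_nonneg (by positivity)]
        exact le2 t ht
    have i2 : IntegrableOn (fun t => k t * (|G t| / |k t|) ^ r) S :=
      i2'.congr_fun (fun t ht => (e2 t ht).symm) hSm
    have hj := jensen_w (μ := volume.restrict S) (k := k) (g := fun t => |G t| / |k t|) hr hC0p
      (by filter_upwards [ae_restrict_mem hSm] with t ht using (hpos t ht).le)
      (fun t => by positivity) (hki.mono_set hSsub) i1 i2
      (by
        have : ∫ t in S, k t ≤ ∫ t in Ioo (-1:ℝ) 1, k t := by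
          refine setIntegral_mono_set hki ?_ hSsub.eventuallyLE
          filter_upwards [ae_restrict_mem measurableSet_Ioo] with t ht using (hk0 t ht).le
        linarith)
    rw [setIntegral_congr_fun hSm (fun t ht => e1' t ht),
      setIntegral_congr_fun hSm (fun t ht => e2 t ht)] at hj
    have h3 : ∫ t in S, k t ^ (1 - r) * |G t| ^ r ≤ C1 * ψ x * P := by
      calc _ ≤ ∫ t in S, C1 * ψ x * (|G t| ^ r * w α β t) :=
            setIntegral_mono_on i2' ((hGi.mono_set hSsub).const_mul _) hSm le2
        _ = C1 * ψ x * ∫ t in S, |G t| ^ r * w α β t := by rw [integral_const_mul]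
        _ ≤ C1 * ψ x * P := by
            have := hψ0 x hx
            refine mul_le_mul_of_nonneg_left ?_ (by positivity)
            rw [hP, integral_mu]
            refine setIntegral_mono_set hGi ?_ hSsub.eventuallyLE
            filter_upwards [ae_restrict_mem measurableSet_Ioo] with t ht
            have := w_pos α β ht
            show (0:ℝ) ≤ _
            positivity
    calc |∫ t in θ..x, G t| ^ r ≤ (∫ t in S, |G t|) ^ r := by gcongr
      _ ≤ _ := hj
      _ ≤ C0 ^ (r - 1) * (C1 * ψ x * P) := by gcongr
      _ = _ := by ring
  have hψmu : Integrable ψ (mu α β) := (integrable_mu_iff α β ψ).2 hψi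
  calc ∫ x, |∫ t in θ..x, G t| ^ r ∂(mu α β)
      ≤ ∫ x, C0 ^ (r - 1) * C1 * P * ψ x ∂(mu α β) := by
        refine integral_mono_of_nonneg (ae_of_all _ fun x => by positivity) (hψmu.const_mul _) ?_
        filter_upwards [mu_ae α β] with x hx using hpt x hx
    _ = C0 ^ (r - 1) * C1 * (∫ x in Ioo (-1:ℝ) 1, ψ x * w α β x) * P := by
        rw [integral_const_mul, integral_mu]; ring
    _ ≤ _ := by gcongr; linarith

theorem side {α r δ : ℝ} (hα : -1 < α) (hr : 1 ≤ r) (hδ : 0 ≤ δ) (hδ2 : δ ≤ 2)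
    (h : 0 < δ ∨ (1 < r → α < r - 1) ∧ (r = 1 → α ≤ 0)) :
    ∃ γ a C : ℝ, γ < 1 ∧ -1 < α - a ∧ 0 < C ∧ ∀ u v : ℝ, 0 < u → u < 2 → 0 < v → v < 2 →
      min δ v < u → u ^ (γ * (r - 1)) ≤ C * v ^ (-a) * u ^ α := by
  by_cases hd : 0 < δ
  · refine ⟨0, max α 0, (2 / δ) ^ |α| * 2 ^ |α|, by norm_num, ?_, by positivity, ?_⟩
    · rcases le_total α 0 with h | h
      · rw [max_eq_right h]; linarith
      · rw [max_eq_left h]; linarith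
    · intro u v hu hu2 hv hv2 huv
      rw [zero_mul, Real.rpow_zero]
      have h2d : 1 ≤ 2 / δ := by rw [le_div_iff₀ hd]; linarith
      rcases le_total α 0 with h | h
      · rw [max_eq_right h, neg_zero, Real.rpow_zero, mul_one, abs_of_nonpos h, mul_assoc]
        have h1 : 1 ≤ (2 / δ) ^ (-α) := Real.one_le_rpow h2d (by linarith)
        have h2 : 1 ≤ (2:ℝ) ^ (-α) * u ^ α := by
          rw [Real.rpow_neg (by norm_num), ← div_eq_inv_mul, le_div_iff₀ (by positivity), one_mul]
          exact Real.rpow_le_rpow_of_nonpos hu hu2.le h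
        exact one_le_mul_of_one_le_of_one_le h1 h2
      · rw [max_eq_left h, abs_of_nonneg h, Real.rpow_neg hv.le]
        have h1 : 1 ≤ (2:ℝ) ^ α := Real.one_le_rpow (by norm_num) h
        have h3 : v ≤ 2 / δ * u := by
          rw [div_mul_eq_mul_div, le_div_iff₀ hd]
          rcases min_lt_iff.1 huv with h4 | h4
          · nlinarith
          · nlinarith
        have h2 : 1 ≤ (2 / δ) ^ α * ((v ^ α)⁻¹ * u ^ α) := by
          have h5 : v ^ α ≤ (2 / δ) ^ α * u ^ α := by
            rw [← Real.mul_rpow (by positivity) hu.le]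
            exact Real.rpow_le_rpow hv.le h3 h
          calc (1:ℝ) = (v ^ α)⁻¹ * v ^ α := by
                rw [inv_mul_cancel₀]; positivity
            _ ≤ (v ^ α)⁻¹ * ((2 / δ) ^ α * u ^ α) := by gcongr
            _ = _ := by ring
        calc (1:ℝ) ≤ (2:ℝ) ^ α * ((2 / δ) ^ α * ((v ^ α)⁻¹ * u ^ α)) :=
              one_le_mul_of_one_le_of_one_le h1 h2
          _ = _ := by ring
  · have hc := h.resolve_left hd
    have : ∃ γ : ℝ, γ < 1 ∧ α ≤ γ * (r - 1) := by
      rcases hr.eq_or_lt with h1 | h1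
      · exact ⟨0, by norm_num, by rw [zero_mul]; exact hc.2 h1.symm⟩
      · have h2 := hc.1 h1
        refine ⟨α / (r - 1), by rw [div_lt_one (by linarith)]; exact h2, ?_⟩
        rw [div_mul_cancel₀ _ (by linarith)]
    obtain ⟨γ, hγ, hγα⟩ := this
    refine ⟨γ, 0, 2 ^ (γ * (r - 1) - α), hγ, by linarith, by positivity, ?_⟩
    intro u v hu hu2 hv hv2 _
    rw [neg_zero, Real.rpow_zero, mul_one]
    calc u ^ (γ * (r - 1)) = u ^ (γ * (r - 1) - α) * u ^ α := by
          rw [← Real.rpow_add hu, sub_add_cancel]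
      _ ≤ _ := by
        gcongr

theorem w_mul (a b c d : ℝ) {x : ℝ} (hx : x ∈ Ioo (-1:ℝ) 1) :
    w a b x * w c d x = w (a + c) (b + d) x := by
  have h1 : 0 < 1 - x := by linarith [hx.2]
  have h2 : 0 < 1 + x := by linarith [hx.1]
  unfold w
  rw [Real.rpow_add h1, Real.rpow_add h2]; ring

theorem hardy_fin {α β r θ : ℝ} (hα : -1 < α) (hβ : -1 < β) (hr : 1 ≤ r)
    (hθ : θ ∈ Icc (-1:ℝ) 1) (h1 : θ < 1 ∨ (1 < r → α < r - 1) ∧ (r = 1 → α ≤ 0))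
    (h2 : -1 < θ ∨ (1 < r → β < r - 1) ∧ (r = 1 → β ≤ 0)) :
    ∃ C, 0 < C ∧ ∀ G : ℝ → ℝ, Continuous G →
      ∫ x, |∫ t in θ..x, G t| ^ r ∂(mu α β) ≤ C * ∫ x, |G x| ^ r ∂(mu α β) := by
  obtain ⟨γ1, a, C1, g1, a1, hC1, s1⟩ := side (δ := 1 - θ) hα hr (by linarith [hθ.2])
    (by linarith [hθ.1]) (h1.imp_left fun h => by linarith)
  obtain ⟨γ2, b, C2, g2, b1, hC2, s2⟩ := side (δ := 1 + θ) hβ hr (by linarith [hθ.1])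
    (by linarith [hθ.2]) (h2.imp_left fun h => by linarith)
  refine hardy_gen (k := w (-γ1) (-γ2)) (ψ := w (-a) (-b)) (C1 := C1 * C2) hα hβ hr hθ
    (by positivity) (w_meas _ _) (fun t ht => w_pos _ _ ht) (w_int _ _ (by linarith) (by linarith))
    (fun t ht => (w_pos _ _ ht).le) ?_ ?_
  · refine (w_int (-a + α) (-b + β) (by linarith) (by linarith)).congr_fun (fun x hx => ?_)
      measurableSet_Ioo
    exact (w_mul _ _ _ _ hx).symm
  · intro x hx t ht
    have ht1 : -1 < t := lt_of_le_of_lt (le_min hθ.1 hx.1.le) ht.1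
    have ht2 : t < 1 := lt_of_lt_of_le ht.2 (max_le hθ.2 hx.2.le)
    have k1 := s1 (1 - t) (1 - x) (by linarith) (by linarith) (by linarith [hx.2]) (by linarith [hx.1])
      (by
        rcases lt_max_iff.1 ht.2 with h | h
        · exact min_lt_iff.2 (Or.inl (by linarith))
        · exact min_lt_iff.2 (Or.inr (by linarith)))
    have k2 := s2 (1 + t) (1 + x) (by linarith) (by linarith) (by linarith [hx.1]) (by linarith [hx.2])
      (by
        rcases min_lt_iff.1 ht.1 with h | h
        · exact min_lt_iff.2 (Or.inl (by linarith))
        · exact min_lt_iff.2 (Or.inr (by linarith)))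
    have q1 : 0 < 1 - t := by linarith
    have q2 : 0 < 1 + t := by linarith
    have q3 : 0 < 1 - x := by linarith [hx.2]
    have q4 : 0 < 1 + x := by linarith [hx.1]
    unfold w
    rw [Real.mul_rpow (by positivity) (by positivity), ← Real.rpow_mul q1.le, ← Real.rpow_mul q2.le,
      show -γ1 * (1 - r) = γ1 * (r - 1) by ring, show -γ2 * (1 - r) = γ2 * (r - 1) by ring]
    calc _ ≤ (C1 * (1 - x) ^ (-a) * (1 - t) ^ α) * (C2 * (1 + x) ^ (-b) * (1 + t) ^ β) := by gcongr
      _ = _ := by ring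

theorem hardy {α β θ : ℝ} {p : ℝ≥0∞} (hα : -1 < α) (hβ : -1 < β) (hp : 1 ≤ p)
    (hθ : θ ∈ Ioo (-1 : ℝ) 1 ∨
      (θ = -1 ∧ (1 < p → p ≠ ⊤ → β < p.toReal - 1) ∧ (p = 1 → β ≤ 0)) ∨
      (θ = 1 ∧ (1 < p → p ≠ ⊤ → α < p.toReal - 1) ∧ (p = 1 → α ≤ 0))) :
    ∃ C, 0 < C ∧ ∀ G : ℝ → ℝ, Continuous G →
      LpW α β p (fun x => ∫ t in θ..x, G t) ≤ C * LpW α β p G := by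
  have hθI : θ ∈ Icc (-1:ℝ) 1 := by
    rcases hθ with h | h | h
    · exact Ioo_subset_Icc_self h
    · rw [h.1]; constructor <;> norm_num
    · rw [h.1]; constructor <;> norm_num
  by_cases hpt : p = ⊤
  · subst hpt
    refine ⟨2, by norm_num, fun G hG => LpW_top_le α β fun x hx => ?_⟩
    have h := intervalIntegral.norm_integral_le_of_norm_le_const (f := G) (a := θ) (b := x)
      (C := LpW α β ⊤ G) (fun t ht => by
        have : t ∈ Icc (-1:ℝ) 1 := by
          have := uIoc_subset_uIcc ht
          exact (uIcc_subset_Icc hθI hx) this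
        exact le_LpW_top α β hG this)
    have h2 : |x - θ| ≤ 2 := by
      rw [abs_le]; constructor <;> linarith [hx.1, hx.2, hθI.1, hθI.2]
    have h3 := LpW_nonneg α β ⊤ G
    calc |∫ t in θ..x, G t| ≤ LpW α β ⊤ G * |x - θ| := h
      _ ≤ LpW α β ⊤ G * 2 := by gcongr
      _ = _ := by ring
  · have hr := toReal_one_le hp hpt
    have cv : ∀ γ : ℝ, (1 < p → p ≠ ⊤ → γ < p.toReal - 1) ∧ (p = 1 → γ ≤ 0) →
        (1 < p.toReal → γ < p.toReal - 1) ∧ (p.toReal = 1 → γ ≤ 0) := by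
      intro γ h
      refine ⟨fun h1 => h.1 ?_ hpt, fun h1 => h.2 ?_⟩
      · rw [← ENNReal.toReal_one] at h1
        exact (ENNReal.toReal_lt_toReal ENNReal.one_ne_top hpt).1 h1
      · rwa [ENNReal.toReal_eq_one_iff] at h1
    obtain ⟨C, hC, h⟩ := hardy_fin (θ := θ) hα hβ hr hθI
      (by
        rcases hθ with h | h | h
        · exact Or.inl h.2
        · left; rw [h.1]; norm_num
        · exact Or.inr (cv α h.2))
      (by
        rcases hθ with h | h | h
        · exact Or.inl h.1
        · exact Or.inr (cv β h.2)
        · left; rw [h.1]; norm_num)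
    exact ⟨C ^ (1 / p.toReal), by positivity, fun G hG => LpW_fin_le α β hpt hC.le (h G hG)⟩


theorem taylor_full {m : ℕ} {f : ℝ → ℝ} (hf : ContDiff ℝ (m + 1 : ℕ) f) (θ x : ℝ) :
    f x = (∑ k ∈ Finset.range (m + 1), iteratedDeriv k f θ * (x - θ) ^ k / k.factorial) +
      ∫ t in θ..x, (x - t) ^ m / m.factorial * iteratedDeriv (m + 1) f t := by
  rcases eq_or_ne θ x with rfl | hne
  · rw [intervalIntegral.integral_same, add_zero, Finset.sum_range_succ']
    simp
  · have hu : UniqueDiffOn ℝ (uIcc θ x) := uniqueDiffOn_uIcc hne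
    have h := taylor_integral_remainder (f := f) (x := x) (x₀ := θ) (n := m) hf.contDiffOn
    have he : ∀ k ≤ m + 1, ∀ t ∈ uIcc θ x, iteratedDerivWithin k f (uIcc θ x) t = iteratedDeriv k f t :=
      fun k hk t ht => iteratedDerivWithin_eq_iteratedDeriv hu
        ((hf.of_le (by exact_mod_cast hk)).contDiffAt) ht
    rw [taylor_within_apply, sub_eq_iff_eq_add'] at h
    rw [h]
    congr 1
    · refine Finset.sum_congr rfl fun k hk => ?_
      rw [he k (by have := Finset.mem_range.1 hk; omega) θ left_mem_uIcc, smul_eq_mul]; ring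
    · refine intervalIntegral.integral_congr fun t ht => ?_
      show _ • _ = _
      rw [he _ le_rfl t ht, smul_eq_mul]

/-- iterated integrals -/
def II (θ : ℝ) (h : ℝ → ℝ) : ℕ → ℝ → ℝ
  | 0 => h
  | m + 1 => fun x => ∫ t in θ..x, II θ h m t

theorem II_cont (θ : ℝ) {h : ℝ → ℝ} (hh : Continuous h) : ∀ m, Continuous (II θ h m)
  | 0 => hh
  | m + 1 => intervalIntegral.continuous_primitive
      (fun a b => (II_cont θ hh m).intervalIntegrable a b) θ

theorem II_hasDeriv (θ : ℝ) {h : ℝ → ℝ} (hh : Continuous h) (m : ℕ) (x : ℝ) :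
    HasDerivAt (II θ h (m + 1)) (II θ h m x) x :=
  (II_cont θ hh m).integral_hasStrictDerivAt θ x |>.hasDerivAt

theorem II_deriv (θ : ℝ) {h : ℝ → ℝ} (hh : Continuous h) (m : ℕ) :
    deriv (II θ h (m + 1)) = II θ h m := funext fun x => (II_hasDeriv θ hh m x).deriv

theorem II_contDiff (θ : ℝ) {h : ℝ → ℝ} (hh : Continuous h) : ∀ m : ℕ, ContDiff ℝ m (II θ h m)
  | 0 => by simpa using II_cont θ hh 0
  | m + 1 => by
    have := II_contDiff θ hh m
    push_cast
    rw [contDiff_succ_iff_deriv]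
    refine ⟨fun x => (II_hasDeriv θ hh m x).differentiableAt, by simp, ?_⟩
    rw [II_deriv θ hh]; exact this

theorem II_iter (θ : ℝ) {h : ℝ → ℝ} (hh : Continuous h) (m : ℕ) : ∀ k : ℕ,
    iteratedDeriv k (II θ h (m + k)) = II θ h m
  | 0 => by simp
  | k + 1 => by
    rw [iteratedDeriv_succ', ← add_assoc, II_deriv θ hh]
    exact II_iter θ hh m k

theorem II_kernel (θ : ℝ) {h : ℝ → ℝ} (hh : Continuous h) (m : ℕ) (x : ℝ) :
    II θ h (m + 1) x = ∫ t in θ..x, (x - t) ^ m / m.factorial * h t := by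
  rw [taylor_full (II_contDiff θ hh (m + 1)) θ x, Finset.sum_eq_zero, zero_add]
  · have := II_iter θ hh 0 (m + 1)
    rw [zero_add] at this
    rw [this]; rfl
  · intro k hk
    have hk := Finset.mem_range.1 hk
    obtain ⟨j, rfl⟩ := Nat.exists_eq_add_of_le (Nat.lt_succ_iff.1 hk)
    have := II_iter θ hh (j + 1) k
    rw [show j + 1 + k = k + j + 1 by ring] at this
    rw [this]
    simp [II]

theorem err_eq (η : ℝ → ℝ) (α β θ : ℝ) (n m : ℕ) {f : ℝ → ℝ} (hf : ContDiff ℝ (m + 1 : ℕ) f) :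
    (fun x => f x - VS η α β (m + 1) θ n f x) =
      II θ (fun t => iteratedDeriv (m + 1) f t - V η α β n (iteratedDeriv (m + 1) f) t) (m + 1) := by
  have hg : Continuous (iteratedDeriv (m + 1) f) := hf.continuous_iteratedDeriv (m + 1) le_rfl
  have hV := V_cont η α β n (iteratedDeriv (m + 1) f)
  ext x
  rw [II_kernel θ (h := fun t => iteratedDeriv (m + 1) f t - V η α β n (iteratedDeriv (m + 1) f) t)
      (hg.sub hV), VS, taylor_full hf θ x, add_sub_add_left_eq_sub,
    Nat.add_sub_cancel, ← intervalIntegral.integral_sub]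
  · simp only [mul_sub]
  · exact Continuous.intervalIntegrable (by fun_prop) _ _
  · exact Continuous.intervalIntegrable (by fun_prop) _ _

theorem main_thm (α β : ℝ) (hα : -1 < α) (hβ : -1 < β) (s : ℕ) (hs : 1 ≤ s)
    (p : ℝ≥0∞) (hp : 1 ≤ p) (η : ℝ → ℝ) (hη : Admissible η) (θ : ℝ)
    (hθ : θ ∈ Ioo (-1 : ℝ) 1 ∨
      (θ = -1 ∧ (1 < p → p ≠ ⊤ → β < p.toReal - 1) ∧ (p = 1 → β ≤ 0)) ∨
      (θ = 1 ∧ (1 < p → p ≠ ⊤ → α < p.toReal - 1) ∧ (p = 1 → α ≤ 0))) :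
    ∃ c : ℝ, 0 < c ∧ ∀ f : ℝ → ℝ, MemW α β p s f → ∀ n : ℕ, 1 ≤ n →
      WNorm α β p s (fun x => f x - VS η α β s θ n f x)
        ≤ c * E α β p n (iteratedDeriv s f) := by
  obtain ⟨D, hD, hV⟩ := V_err hα hβ hη hp
  obtain ⟨C, hC, hH⟩ := hardy hα hβ hp hθ
  obtain ⟨m, rfl⟩ : ∃ m, s = m + 1 := ⟨s - 1, by omega⟩
  set M := (1 + C) ^ (m + 1) with hM
  have hM0 : 0 < M := by positivity
  refine ⟨(m + 2) * (M * D), by positivity, fun f hf n hn => ?_⟩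
  have hfc : ContDiff ℝ (m + 1 : ℕ) f := by exact_mod_cast hf.1
  have hg : Continuous (iteratedDeriv (m + 1) f) := hfc.continuous_iteratedDeriv (m + 1) le_rfl
  have hVc := V_cont η α β n (iteratedDeriv (m + 1) f)
  rw [err_eq η α β θ n m hfc]
  have hE := hV n hn _ hg
  set h := fun t => iteratedDeriv (m + 1) f t - V η α β n (iteratedDeriv (m + 1) f) t with hh
  have hhc : Continuous h := hg.sub hVc
  set e := E α β p n (iteratedDeriv (m + 1) f) with he
  have hn0 := LpW_nonneg α β p h
  have he0 : 0 ≤ e := by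
    by_contra hneg
    push Not at hneg
    have := mul_neg_of_pos_of_neg hD hneg
    linarith
  have hit : ∀ j, LpW α β p (II θ h j) ≤ (1 + C) ^ j * LpW α β p h := by
    intro j
    induction j with
    | zero => simp [II]
    | succ j ih =>
      calc _ ≤ C * LpW α β p (II θ h j) := hH _ (II_cont θ hhc j)
        _ ≤ (1 + C) * ((1 + C) ^ j * LpW α β p h) := by
          have := LpW_nonneg α β p (II θ h j)
          gcongr
          linarith
        _ = _ := by ring
  have hk : ∀ k ∈ Finset.range (m + 1 + 1), LpW α β p (iteratedDeriv k (II θ h (m + 1))) ≤ M * D * e := by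
    intro k hk
    have hk := Finset.mem_range.1 hk
    obtain ⟨j, hj⟩ : ∃ j, m + 1 = j + k := ⟨m + 1 - k, by omega⟩
    rw [hj, II_iter θ hhc j k]
    calc _ ≤ (1 + C) ^ j * LpW α β p h := hit j
      _ ≤ M * (D * e) := by
        have : (1 + C) ^ j ≤ M := pow_le_pow_right₀ (by linarith) (by omega)
        gcongr
      _ = _ := by ring
  have hB0 : 0 ≤ M * D * e := by positivity
  by_cases hpt : p = ⊤
  · rw [WNorm, if_pos hpt]
    refine Finset.sup'_le _ _ fun k hk' => ?_
    have := hk k hk'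
    rw [hpt] at this
    refine this.trans ?_
    rw [show ((m:ℝ) + 2) * (M * D) * e = M * D * e + (m + 1) * (M * D * e) by ring]
    have : 0 ≤ ((m:ℝ) + 1) * (M * D * e) := by positivity
    linarith
  · rw [WNorm, if_neg hpt]
    have hr := toReal_one_le hp hpt
    set r := p.toReal
    have hr0 : 0 < r := by linarith
    have h1 : ∑ k ∈ Finset.range (m + 1 + 1), LpW α β p (iteratedDeriv k (II θ h (m + 1))) ^ r ≤
        ((m:ℝ) + 2) * (M * D * e) ^ r := by
      refine (Finset.sum_le_card_nsmul _ _ ((M * D * e) ^ r) fun k hk' => ?_).trans ?_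
      · exact Real.rpow_le_rpow (LpW_nonneg _ _ _ _) (hk k hk') hr0.le
      · rw [Finset.card_range, nsmul_eq_mul]; push_cast
        refine le_of_eq ?_
        ring
    have h0 : 0 ≤ ∑ k ∈ Finset.range (m + 1 + 1), LpW α β p (iteratedDeriv k (II θ h (m + 1))) ^ r :=
      Finset.sum_nonneg fun k _ => Real.rpow_nonneg (LpW_nonneg _ _ _ _) _
    calc _ ≤ (((m:ℝ) + 2) * (M * D * e) ^ r) ^ (1 / r) := Real.rpow_le_rpow h0 h1 (by positivity)
      _ = ((m:ℝ) + 2) ^ (1 / r) * (M * D * e) := by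
        rw [Real.mul_rpow (by positivity) (by positivity), ← Real.rpow_mul hB0,
          mul_one_div_cancel hr0.ne', Real.rpow_one]
      _ ≤ ((m:ℝ) + 2) * (M * D * e) := by
        gcongr
        have h2 : (1:ℝ) ≤ m + 2 := by
          have : (0:ℝ) ≤ m := by positivity
          linarith
        calc ((m:ℝ) + 2) ^ (1 / r) ≤ ((m:ℝ) + 2) ^ (1:ℝ) :=
              Real.rpow_le_rpow_of_exponent_le h2 (by rw [div_le_one hr0]; exact hr)
          _ = _ := Real.rpow_one _
      _ = _ := by ring

theorem statement15 (α β : ℝ) (hα : -1 < α) (hβ : -1 < β) (s : ℕ) (hs : 1 ≤ s)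
    (p : ℝ≥0∞) (hp : 1 ≤ p) (η : ℝ → ℝ) (hη : Admissible η) (θ : ℝ)
    (hθ : θ ∈ Ioo (-1 : ℝ) 1 ∨
      (θ = -1 ∧ (1 < p → p ≠ ⊤ → β < p.toReal - 1) ∧ (p = 1 → β ≤ 0)) ∨
      (θ = 1 ∧ (1 < p → p ≠ ⊤ → α < p.toReal - 1) ∧ (p = 1 → α ≤ 0))) :
    ∃ c : ℝ, 0 < c ∧ ∀ f : ℝ → ℝ, MemW α β p s f → ∀ n : ℕ, 1 ≤ n →
      WNorm α β p s (fun x => f x - VS η α β s θ n f x)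
        ≤ c * E α β p n (iteratedDeriv s f) := by
  exact main_thm α β hα hβ s hs p hp η hη θ hθ

end JacobiApprox
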